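/- There is an absolute constant c > 0 with the following property. Let Γ ≤ SL(2,ℝ) be a subgroup, let P ⊆ ℍ² be a finite set of N ≥ 2 points such that d_Γ(p,q) ≠ 0 whenever p,q ∈ P are distinct, and let Γ₀ ⊆ Γ be a finite subset of cardinality K which is a geodesic cover for P (i.e. for all p,q ∈ P, d_Γ(p,q) = min_{γ ∈ Γ₀} d(p, γ·q)). Then the number of distinct values of d_Γ(p,q) over pairs of distinct points p,q ∈ P is at least c · N / (K³ · log(K·N)). -/

import Mathlib

open scoped UpperHalfPlane MatrixGroups

noncomputable section

/-- The quotient pseudo-distance `d_Γ(p,q) = inf_{γ ∈ Γ} d(p, γ·q)` associated to a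
subgroup `Γ ≤ SL(2,ℝ)` acting on the hyperbolic plane. -/
def quotDist (Γ : Subgroup SL(2, ℝ)) (p q : ℍ) : ℝ :=
  ⨅ γ : Γ, dist p ((γ : SL(2, ℝ)) • q)

/-!
By Cauchy–Schwarz, few distinct distances force many quadruples of points of `P ∪ Γ₀ • P` spanning
segments of equal length. Following Elekes and Sharir, the Möbius transformations mapping `a` to `b`
form a line in the projective space of matrices, and the lines of `(a, b)` and `(c, d)` meet exactly
when `dist a c = dist b d`. Few of these lines lie in a common quadric, so the number of points on
at least `k` of them is bounded by the theorem of Guth and Katz, and summing over dyadic `k` yields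
the logarithm.

The incidence bound is proved by induction on the number of lines. Space is cut into cells by a
polynomial of low degree, which exists by the ham sandwich theorem, itself a consequence of the
Borsuk–Ulam theorem. Within the cells, counting pairs of lines suffices. A rich point on the surface
is met by many lines of the surface, and a component of the surface that is not a plane or a quadric
has, away from an exceptional curve, at most one line through each point: if two rulings by lines
existed, three lines of one of them would determine a quadric containing the surface.
-/

namespace BorsukUlam

/-- Chains modulo `2` on ordered simplices with vertices in `E`. A list of `n + 1` vertices is an
`n`-simplex, and the empty list is the generator in degree `-1` of the augmented complex. -/
abbrev ListChain (E : Type*) := List E →₀ ZMod 2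

section Chains

variable {E M : Type*} [AddCommGroup M] [Module (ZMod 2) M]

/-- The `ZMod 2`-linear extension to chains of a function on simplices. -/
def lift (F : List E → M) : ListChain E →ₗ[ZMod 2] M :=
  Finsupp.linearCombination (ZMod 2) F

@[simp]
lemma lift_single (F : List E → M) (l : List E) : lift F (Finsupp.single l 1) = F l := by
  simp [lift]

/-- The cone operator, which adds the apex `x` as first vertex of every simplex. -/
def cone (x : E) : ListChain E →ₗ[ZMod 2] ListChain E :=
  Finsupp.lmapDomain _ _ (List.cons x)

@[simp]
lemma cone_single (x : E) (l : List E) :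
    cone x (Finsupp.single l 1) = Finsupp.single (x :: l) 1 := by
  simp [cone]

/-- The sum of the facets of a simplex. -/
def facets : List E → ListChain E
  | [] => 0
  | x :: l => Finsupp.single l 1 + cone x (facets l)

/-- The boundary operator of the augmented complex of chains. -/
def boundary : ListChain E →ₗ[ZMod 2] ListChain E := lift facets

@[simp]
lemma boundary_single (l : List E) : boundary (Finsupp.single l 1) = facets l :=
  lift_single _ _

lemma chain_hom_ext {F G : ListChain E →ₗ[ZMod 2] M}
    (h : ∀ l, F (Finsupp.single l 1) = G (Finsupp.single l 1)) : F = G :=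
  Finsupp.lhom_ext' fun l => LinearMap.ext_ring (h l)

lemma boundary_cone (x : E) (z : ListChain E) :
    boundary (cone x z) = z + cone x (boundary z) := by
  have h : boundary ∘ₗ cone x = LinearMap.id + cone x ∘ₗ boundary :=
    chain_hom_ext fun l => by simp [facets]
  exact LinearMap.congr_fun h z

lemma boundary_facets (l : List E) : boundary (facets l) = 0 := by
  induction l with
  | nil => simp [facets]
  | cons x l ih => simp [facets, boundary_cone, ih, ZModModule.add_self]

/-- The chains all of whose simplices belong to `S`. -/
abbrev chainsIn (S : Set (List E)) : Submodule (ZMod 2) (ListChain E) :=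
  Finsupp.supported (ZMod 2) (ZMod 2) S

lemma single_mem_chainsIn {S : Set (List E)} {l : List E} (h : l ∈ S) :
    (Finsupp.single l 1 : ListChain E) ∈ chainsIn S :=
  Finsupp.single_mem_supported _ _ h

lemma map_mem_of_mem_chainsIn {S : Set (List E)} {F : ListChain E →ₗ[ZMod 2] M}
    {Q : Submodule (ZMod 2) M} (h : ∀ l ∈ S, F (Finsupp.single l 1) ∈ Q) {z : ListChain E}
    (hz : z ∈ chainsIn S) : F z ∈ Q := by
  have hspan : chainsIn S ≤ Q.comap F := by
    rw [chainsIn, Finsupp.supported_eq_span_single, Submodule.span_le]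
    rintro _ ⟨l, hl, rfl⟩
    exact h l hl
  exact hspan hz

lemma eq_of_eqOn_chainsIn {S : Set (List E)} {F G : ListChain E →ₗ[ZMod 2] M}
    (h : ∀ l ∈ S, F (Finsupp.single l 1) = G (Finsupp.single l 1)) {z : ListChain E}
    (hz : z ∈ chainsIn S) : F z = G z := by
  have hker : (F - G) z ∈ (⊥ : Submodule (ZMod 2) M) :=
    map_mem_of_mem_chainsIn (fun l hl => by simp [h l hl]) hz
  simpa [sub_eq_zero] using hker

lemma cone_mem_chainsIn {S T : Set (List E)} {x : E} (h : ∀ l ∈ S, x :: l ∈ T) {z : ListChain E}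
    (hz : z ∈ chainsIn S) : cone x z ∈ chainsIn T :=
  map_mem_of_mem_chainsIn (fun l hl => cone_single x l ▸ single_mem_chainsIn (h l hl)) hz

lemma facets_mem_chainsIn (l : List E) :
    facets l ∈ chainsIn {t | t.length + 1 = l.length ∧ t ⊆ l} := by
  induction l with
  | nil => simp [facets]
  | cons x l ih =>
    refine add_mem (single_mem_chainsIn ⟨by simp, List.subset_cons_self x l⟩) ?_
    refine cone_mem_chainsIn ?_ ih
    rintro t ⟨hlen, hsub⟩
    exact ⟨by simp [← hlen], List.cons_subset_cons x hsub⟩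

end Chains

section Alternation

/-- The indicator, in `ZMod 2`, of the lists of signs that alternate, starting with `s`. -/
def alternates : Bool → List Bool → ZMod 2
  | _, [] => 1
  | s, x :: l => if x = s then alternates (!s) l else 0

variable {E : Type*}

/-- The coboundary of a cochain `φ`: the sum of the values of `φ` on the facets of a simplex. -/
def coboundary : (List E → ZMod 2) → List E → ZMod 2
  | _, [] => 0
  | φ, x :: l => φ l + coboundary (fun t => φ (x :: t)) l

lemma lift_facets (φ : List E → ZMod 2) (l : List E) : lift φ (facets l) = coboundary φ l := by
  induction l generalizing φ with
  | nil => simp [facets, coboundary]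
  | cons x l ih =>
    have h : lift φ ∘ₗ cone x = lift fun t => φ (x :: t) := chain_hom_ext fun l => by simp
    simp only [facets, map_add, lift_single, coboundary, ← ih, ← h, LinearMap.comp_apply]

lemma coboundary_zero (l : List E) : coboundary (fun _ => 0) l = 0 := by
  induction l with
  | nil => rfl
  | cons x l ih => simp [coboundary, ih]

-- An alternating list has exactly one facet that alternates starting with `s`: delete its last sign
-- if it starts with `s`, its first sign otherwise. A list that does not alternate has none or two.
lemma coboundary_alternates (s : Bool) (l : List Bool) :
    coboundary (alternates s) l = alternates s l + alternates (!s) l := by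
  induction l generalizing s with
  | nil => exact (ZModModule.add_self (1 : ZMod 2)).symm
  | cons x l ih =>
    rcases eq_or_ne x s with rfl | hxs
    · have hself := ZModModule.add_self (alternates x l)
      simp only [coboundary, ih, Bool.not_not, alternates, Bool.eq_not_self, if_true, if_false]
      linear_combination hself
    · simp [coboundary, coboundary_zero, alternates, Bool.eq_not.2 hxs]

lemma coboundary_perm {φ : List E → ZMod 2} (hφ : ∀ l t, l.Perm t → φ l = φ t) {l t : List E}
    (h : l.Perm t) : coboundary φ l = coboundary φ t := by
  induction h generalizing φ with
  | nil => rfl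
  | cons x h ih =>
    simp only [coboundary]
    rw [hφ _ _ h, ih fun l t h => hφ _ _ (h.cons x)]
  | swap x y l =>
    have hswap : (fun t => φ (y :: x :: t)) = fun t => φ (x :: y :: t) := by
      ext t; exact hφ _ _ (List.Perm.swap _ _ _)
    simp only [coboundary, hswap]
    ring
  | trans _ _ h₁ h₂ => rw [h₁ hφ, h₂ hφ]

lemma coboundary_congr {φ ψ : List E → ZMod 2} {l : List E}
    (h : ∀ t, t.Sublist l → φ t = ψ t) : coboundary φ l = coboundary ψ l := by
  induction l generalizing φ ψ with
  | nil => rfl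
  | cons x l ih =>
    simp only [coboundary]
    rw [h l (List.sublist_cons_self x l), ih fun t ht => h _ (ht.cons_cons x)]

lemma coboundary_comp_map {F : Type*} (g : E → F) (φ : List F → ZMod 2) (l : List E) :
    coboundary (fun t => φ (t.map g)) l = coboundary φ (l.map g) := by
  induction l generalizing φ with
  | nil => rfl
  | cons x l ih =>
    simp only [coboundary, List.map]
    rw [← ih]

end Alternation

section Labels

variable {ι : Type*}

/-- A list of signed labels which does not contain both signs of the same label. -/
def NoComplementary (l : List (ι × Bool)) : Prop := ∀ x ∈ l, ∀ y ∈ l, x.1 = y.1 → x = y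

/-- The label with the opposite sign. -/
def flipSign (x : ι × Bool) : ι × Bool := (x.1, !x.2)

lemma NoComplementary.of_subset {l t : List (ι × Bool)} (hl : NoComplementary l) (h : t ⊆ l) :
    NoComplementary t :=
  fun x hx y hy e => hl x (h hx) y (h hy) e

lemma NoComplementary.map_flipSign {l : List (ι × Bool)} (hl : NoComplementary l) :
    NoComplementary (l.map flipSign) := by
  intro x hx y hy e
  obtain ⟨a, ha, rfl⟩ := List.mem_map.1 hx
  obtain ⟨b, hb, rfl⟩ := List.mem_map.1 hy
  rw [hl a ha b hb e]

variable [LinearOrder ι]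

/-- The order on signed labels that ignores the sign. -/
abbrev LabelLE : ι × Bool → ι × Bool → Prop := fun x y => x.1 ≤ y.1

instance : Std.Total (LabelLE (ι := ι)) := ⟨fun a b => le_total a.1 b.1⟩

instance : IsTrans (ι × Bool) LabelLE := ⟨fun _ _ _ h₁ h₂ => le_trans h₁ h₂⟩

lemma NoComplementary.insertionSort_eq {l t : List (ι × Bool)} (hl : NoComplementary l)
    (ht : t.Pairwise LabelLE) (h : l.Perm t) : l.insertionSort LabelLE = t := by
  have hsort := List.perm_insertionSort LabelLE l
  refine List.Perm.eq_of_pairwise ?_ (List.pairwise_insertionSort LabelLE l) ht (hsort.trans h)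
  intro a b ha hb hab hba
  exact hl a (hsort.mem_iff.1 ha) b (h.mem_iff.2 hb) (le_antisymm hab hba)

open Classical in
/-- Ky Fan's cochain: the indicator of the lists of labels without complementary pair whose signs,
read in the order of the labels, alternate, starting with `s`. -/
def fanCochain (s : Bool) (l : List (ι × Bool)) : ZMod 2 :=
  if NoComplementary l then alternates s ((l.insertionSort LabelLE).map Prod.snd) else 0

lemma NoComplementary.fanCochain_eq (s : Bool) {l t : List (ι × Bool)} (hl : NoComplementary l)
    (ht : t.Pairwise LabelLE) (h : l.Perm t) : fanCochain s l = alternates s (t.map Prod.snd) := by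
  rw [fanCochain, if_pos hl, hl.insertionSort_eq ht h]

lemma fanCochain_perm (s : Bool) (l t : List (ι × Bool)) (h : l.Perm t) :
    fanCochain s l = fanCochain s t := by
  by_cases hl : NoComplementary l
  · have ht : NoComplementary t := hl.of_subset h.symm.subset
    rw [hl.fanCochain_eq s (List.pairwise_insertionSort LabelLE t)
      (h.trans (List.perm_insertionSort LabelLE t).symm), fanCochain, if_pos ht]
  · have ht : ¬ NoComplementary t := fun ht => hl (ht.of_subset h.subset)
    rw [fanCochain, fanCochain, if_neg hl, if_neg ht]

lemma coboundary_fanCochain (s : Bool) {l : List (ι × Bool)} (hl : NoComplementary l) :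
    coboundary (fanCochain s) l = fanCochain s l + fanCochain (!s) l := by
  set t := l.insertionSort LabelLE
  have hperm : l.Perm t := (List.perm_insertionSort LabelLE l).symm
  have hsorted : t.Pairwise LabelLE := List.pairwise_insertionSort LabelLE l
  have hfan : ∀ u : List (ι × Bool), u.Sublist t →
      fanCochain s u = alternates s (u.map Prod.snd) := fun u hu =>
    (hl.of_subset fun x hx => hperm.symm.subset (hu.subset hx)).fanCochain_eq s
      (hsorted.sublist hu) (List.Perm.refl u)
  rw [coboundary_perm (fanCochain_perm s) hperm, coboundary_congr hfan, coboundary_comp_map,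
    coboundary_alternates, hl.fanCochain_eq s hsorted hperm, hl.fanCochain_eq (!s) hsorted hperm]

lemma alternates_map_not (s : Bool) (l : List Bool) :
    alternates (!s) (l.map Bool.not) = alternates s l := by
  induction l generalizing s with
  | nil => rfl
  | cons x l ih =>
    have h := ih (!s)
    rw [Bool.not_not] at h
    simp [alternates, h]

lemma fanCochain_map_flipSign (s : Bool) {l : List (ι × Bool)} (hl : NoComplementary l) :
    fanCochain s (l.map flipSign) = fanCochain (!s) l := by
  have hperm : l.Perm (l.insertionSort LabelLE) := (List.perm_insertionSort LabelLE l).symm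
  have hsorted := List.pairwise_insertionSort LabelLE l
  have hsorted' : ((l.insertionSort LabelLE).map flipSign).Pairwise LabelLE :=
    List.pairwise_map.2 hsorted
  rw [hl.map_flipSign.fanCochain_eq s hsorted' (hperm.map flipSign),
    hl.fanCochain_eq (!s) hsorted hperm, ← alternates_map_not (!s), Bool.not_not]
  simp [List.map_map, Function.comp_def, flipSign]

lemma NoComplementary.pairwise_lt_of_alternates {l : List (ι × Bool)} {s : Bool}
    (hl : NoComplementary l) (hsorted : l.Pairwise LabelLE)
    (h : alternates s (l.map Prod.snd) ≠ 0) : (l.map Prod.fst).Pairwise (· < ·) := by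
  rw [← List.isChain_iff_pairwise]
  induction l generalizing s with
  | nil => simp
  | cons x l ih =>
    simp only [List.map, alternates] at h
    split_ifs at h with hx
    · have hchain := ih (hl.of_subset (List.subset_cons_self x l))
        (List.pairwise_cons.1 hsorted).2 h
      cases l with
      | nil => simp
      | cons y l =>
        refine List.IsChain.cons_cons ?_ hchain
        refine lt_of_le_of_ne ((List.pairwise_cons.1 hsorted).1 y (by simp)) fun e => ?_
        have hxy : x = y := hl x (by simp) y (by simp) e
        simp [alternates, ← hxy, hx] at h
    · exact absurd rfl h

lemma length_le_card_of_fanCochain_ne_zero [Fintype ι] {l : List (ι × Bool)} {s : Bool}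
    (h : fanCochain s l ≠ 0) : l.length ≤ Fintype.card ι := by
  have hl : NoComplementary l := by
    by_contra hl
    exact h (if_neg hl)
  rw [fanCochain, if_pos hl] at h
  have hlt := (hl.of_subset (List.perm_insertionSort LabelLE l).subset).pairwise_lt_of_alternates
    (List.pairwise_insertionSort LabelLE l) h
  have hnodup : ((l.insertionSort LabelLE).map Prod.fst).Nodup := hlt.imp ne_of_lt
  simpa using hnodup.length_le_card

end Labels

section Antipode

variable {V : Type*} [AddCommGroup V]

/-- The chain map induced by the antipodal map `x ↦ -x`. -/
def antipode : ListChain V →ₗ[ZMod 2] ListChain V := Finsupp.lmapDomain _ _ (List.map Neg.neg)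

@[simp]
lemma antipode_single (l : List V) :
    antipode (Finsupp.single l 1) = Finsupp.single (l.map Neg.neg) 1 := by
  simp [antipode]

lemma antipode_cone (x : V) (z : ListChain V) : antipode (cone x z) = cone (-x) (antipode z) := by
  have h : antipode ∘ₗ cone x = cone (-x) ∘ₗ antipode := chain_hom_ext fun l => by simp
  exact LinearMap.congr_fun h z

lemma antipode_facets (l : List V) : antipode (facets l) = facets (l.map Neg.neg) := by
  induction l with
  | nil => simp [facets]
  | cons x l ih => simp [facets, antipode_cone, ih]

lemma antipode_boundary (z : ListChain V) : antipode (boundary z) = boundary (antipode z) := by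
  have h : antipode ∘ₗ boundary = boundary ∘ₗ antipode (V := V) :=
    chain_hom_ext fun l => by simp [antipode_facets]
  exact LinearMap.congr_fun h z

lemma antipode_antipode (z : ListChain V) : antipode (antipode z) = z := by
  have h : antipode ∘ₗ antipode (V := V) = LinearMap.id := chain_hom_ext fun l => by simp
  exact LinearMap.congr_fun h z

lemma antipode_mem_chainsIn {S T : Set (List V)} (h : ∀ l ∈ S, l.map Neg.neg ∈ T)
    {z : ListChain V} (hz : z ∈ chainsIn S) : antipode z ∈ chainsIn T :=
  map_mem_of_mem_chainsIn (fun l hl => antipode_single l ▸ single_mem_chainsIn (h l hl)) hz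

end Antipode

section Subdivision

/-- The simplices with `k` vertices in the set `K`, of diameter at most `d`. -/
def smallSimplices {V : Type*} [PseudoMetricSpace V] (k : ℕ) (K : Set V) (d : ℝ) :
    Set (List V) :=
  {l | l.length = k ∧ (∀ x ∈ l, x ∈ K) ∧ ∀ x ∈ l, ∀ y ∈ l, dist x y ≤ d}

lemma cons_mem_smallSimplices {V : Type*} [PseudoMetricSpace V] {k : ℕ} {K : Set V} {d : ℝ}
    {x : V} (hx : x ∈ K) (hd : 0 ≤ d) {l : List V}
    (hl : l ∈ smallSimplices k (K ∩ Metric.closedBall x d) d) :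
    x :: l ∈ smallSimplices (k + 1) K d := by
  obtain ⟨hlen, hK, hdist⟩ := hl
  refine ⟨by simp [hlen], ?_, ?_⟩
  · exact List.forall_mem_cons.2 ⟨hx, fun y hy => (hK y hy).1⟩
  · refine List.forall_mem_cons.2 ⟨List.forall_mem_cons.2 ⟨by simpa, fun y hy => ?_⟩,
      fun y hy => List.forall_mem_cons.2 ⟨(hK y hy).2, hdist y hy⟩⟩
    rw [dist_comm]
    exact (hK y hy).2

variable {V : Type*} [NormedAddCommGroup V] [NormedSpace ℝ V]

/-- The barycenter of a list of points, with the junk value `0` for the empty list. -/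
def barycenter (l : List V) : V := (l.length : ℝ)⁻¹ • l.sum

/-- The barycentric subdivision of a simplex with `k` vertices: the cone from the barycenter over
the subdivided boundary. -/
def subdivision : ℕ → List V → ListChain V
  | 0, l => Finsupp.single l 1
  | k + 1, l => cone (barycenter l) (lift (subdivision k) (facets l))

lemma boundary_subdivision {k : ℕ} {l : List V} (hl : l.length = k + 1) :
    boundary (subdivision (k + 1) l) = lift (subdivision k) (facets l) := by
  induction k generalizing l with
  | zero =>
    obtain ⟨x, rfl⟩ := List.length_eq_one_iff.1 hl
    simp [subdivision, facets]
  | succ k ih =>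
    have hcomm : (boundary ∘ₗ lift (subdivision (k + 1))) (facets l) =
        (lift (subdivision k) ∘ₗ boundary) (facets l) :=
      eq_of_eqOn_chainsIn (fun t ht => by
        simpa using ih (by have := ht.1; omega)) (facets_mem_chainsIn l)
    simp only [LinearMap.comp_apply, boundary_facets, map_zero] at hcomm
    rw [subdivision, boundary_cone, hcomm, map_zero, add_zero]

lemma norm_sum_sub_length_smul_le {l : List V} {x : V} {d : ℝ} (h : ∀ y ∈ l, ‖y - x‖ ≤ d) :
    ‖l.sum - (l.length : ℝ) • x‖ ≤ l.length * d := by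
  induction l with
  | nil => simp
  | cons y l ih =>
    have hsplit : (y :: l).sum - ((y :: l).length : ℝ) • x =
        (y - x) + (l.sum - (l.length : ℝ) • x) := by
      simp only [List.sum_cons, List.length_cons, Nat.cast_add, Nat.cast_one, add_smul, one_smul]
      abel
    calc ‖(y :: l).sum - ((y :: l).length : ℝ) • x‖
        ≤ ‖y - x‖ + ‖l.sum - (l.length : ℝ) • x‖ := hsplit ▸ norm_add_le _ _
      _ ≤ d + l.length * d :=
        add_le_add (h y (by simp)) (ih fun z hz => h z (List.mem_cons_of_mem y hz))
      _ = (y :: l).length * d := by push_cast [List.length_cons]; ring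

lemma dist_barycenter_le {l : List V} {d : ℝ} {n : ℕ} (hn : l.length ≤ n + 1)
    (h : ∀ x ∈ l, ∀ y ∈ l, dist x y ≤ d) {x : V} (hx : x ∈ l) :
    dist x (barycenter l) ≤ n / (n + 1) * d := by
  classical
  have hd : 0 ≤ d := dist_nonneg.trans (h x hx x hx)
  have hperm := List.perm_cons_erase hx
  have hsum : l.sum = x + (l.erase x).sum := by simpa using hperm.sum_eq
  have hnorm := norm_sum_sub_length_smul_le (l := l.erase x) (x := x) (d := d) fun y hy => by
    rw [← dist_eq_norm]; exact h y (List.mem_of_mem_erase hy) x hx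
  have hlen : l.length = (l.erase x).length + 1 := by simpa using hperm.length_eq
  set m := (l.erase x).length
  have hlen' : (l.length : ℝ) = m + 1 := by rw [hlen]; push_cast; rfl
  have hm : (m : ℝ) + 1 ≠ 0 := by positivity
  have hsub : barycenter l - x = ((m : ℝ) + 1)⁻¹ • ((l.erase x).sum - (m : ℝ) • x) := by
    rw [barycenter, hlen', hsum, eq_inv_smul_iff₀ hm, smul_sub, smul_inv_smul₀ hm, add_smul,
      one_smul]
    abel
  have hmn : (m : ℝ) ≤ n := by exact_mod_cast (by omega : m ≤ n)
  calc dist x (barycenter l) = ((m : ℝ) + 1)⁻¹ * ‖(l.erase x).sum - (m : ℝ) • x‖ := by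
        rw [dist_comm, dist_eq_norm, hsub, norm_smul, norm_inv, Real.norm_of_nonneg (by positivity)]
    _ ≤ ((m : ℝ) + 1)⁻¹ * (m * d) := by gcongr
    _ = m / (m + 1) * d := by field_simp
    _ ≤ n / (n + 1) * d := by
      gcongr ?_ * d
      rw [div_le_div_iff₀ (by positivity) (by positivity)]
      nlinarith

lemma barycenter_mem {l : List V} {K : Set V} (hK : Convex ℝ K) (h : ∀ x ∈ l, x ∈ K)
    (hl : l ≠ []) : barycenter l ∈ K := by
  have hpos : 0 < l.length := List.length_pos_iff.2 hl
  have hmem := hK.sum_mem (t := Finset.univ) (w := fun _ : Fin l.length => (l.length : ℝ)⁻¹)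
    (z := l.get) (fun _ _ => by positivity) (by simp [hpos.ne']) fun i _ => h _ (List.get_mem l i)
  rwa [← Finset.smul_sum, ← List.sum_ofFn, List.ofFn_get] at hmem

lemma subdivision_mem_chainsIn {n k : ℕ} (hk : k ≤ n + 1) {K : Set V} (hK : Convex ℝ K) {d : ℝ}
    {l : List V} (hl : l ∈ smallSimplices k K d) :
    subdivision k l ∈ chainsIn (smallSimplices k K (n / (n + 1) * d)) := by
  induction k generalizing K l with
  | zero =>
    obtain rfl := List.length_eq_zero_iff.1 hl.1
    exact single_mem_chainsIn ⟨rfl, by simp, by simp⟩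
  | succ k ih =>
    obtain ⟨hlen, hlK, hld⟩ := hl
    have hne : l ≠ [] := List.ne_nil_of_length_eq_add_one hlen
    obtain ⟨x, hx⟩ := List.exists_mem_of_ne_nil l hne
    have hd : 0 ≤ d := dist_nonneg.trans (hld x hx x hx)
    refine cone_mem_chainsIn
      (fun t => cons_mem_smallSimplices (barycenter_mem hK hlK hne) (by positivity))
      (map_mem_of_mem_chainsIn (fun t ht => ?_) (facets_mem_chainsIn l))
    obtain ⟨htlen, htl⟩ := ht
    rw [lift_single]
    exact ih (by omega) (hK.inter (convex_closedBall _ _)) ⟨by omega,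
      fun y hy => ⟨hlK y (htl hy), dist_barycenter_le (by omega) hld (htl hy)⟩,
      fun y hy z hz => hld y (htl hy) z (htl hz)⟩

lemma barycenter_map_neg (l : List V) : barycenter (l.map Neg.neg) = -barycenter l := by
  simp [barycenter, ← List.sum_neg]

lemma lift_subdivision_antipode (k : ℕ) (z : ListChain V) :
    lift (subdivision k) (antipode z) = antipode (lift (subdivision k) z) := by
  have h : lift (subdivision k) ∘ₗ antipode (V := V) = antipode ∘ₗ lift (subdivision k) := by
    induction k with
    | zero => exact chain_hom_ext fun l => by simp [subdivision]
    | succ k ih =>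
      refine chain_hom_ext fun l => ?_
      have hl := LinearMap.congr_fun ih (facets l)
      simp only [LinearMap.comp_apply, antipode_facets] at hl
      simp [subdivision, antipode_cone, barycenter_map_neg, hl]
  exact LinearMap.congr_fun h z

end Subdivision

section Sphere

/-- The unit sphere of the `ℓ¹` norm. -/
def l1Sphere (ι : Type*) [Fintype ι] : Set (ι → ℝ) := {x | ∑ k, |x k| = 1}

/-- The face of the cross-polytope in the orthant with signs `ε`. -/
def orthantFace {ι : Type*} [Fintype ι] (ε : ι → ℝ) : Set (ι → ℝ) :=
  {x | ∑ k, ε k * x k = 1 ∧ ∀ k, 0 ≤ ε k * x k}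

section

variable {ι : Type*} [Fintype ι]

lemma convex_orthantFace (ε : ι → ℝ) : Convex ℝ (orthantFace ε) := by
  intro x hx y hy a b ha hb hab
  have hcomb : ∀ k, ε k * (a • x + b • y) k = a * (ε k * x k) + b * (ε k * y k) := fun k => by
    simp only [Pi.add_apply, Pi.smul_apply, smul_eq_mul]; ring
  refine ⟨?_, fun k => ?_⟩
  · simp only [hcomb, Finset.sum_add_distrib, ← Finset.mul_sum, hx.1, hy.1, mul_one, hab]
  · have := hx.2 k
    have := hy.2 k
    rw [hcomb]
    positivity

lemma orthantFace_subset_l1Sphere {ε : ι → ℝ} (hε : ∀ k, |ε k| = 1) :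
    orthantFace ε ⊆ l1Sphere ι := by
  rintro x ⟨hsum, hnonneg⟩
  have habs : ∀ k, |x k| = ε k * x k := fun k => by
    rw [← abs_of_nonneg (hnonneg k), abs_mul, hε, one_mul]
  simpa only [l1Sphere, Set.mem_ofPred_eq, habs] using hsum

lemma norm_le_one_of_mem_l1Sphere {x : ι → ℝ} (hx : x ∈ l1Sphere ι) : ‖x‖ ≤ 1 := by
  rw [pi_norm_le_iff_of_nonneg zero_le_one, ← show ∑ k, |x k| = 1 from hx]
  exact fun k => Finset.single_le_sum (f := fun k => |x k|) (fun _ _ => abs_nonneg _)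
    (Finset.mem_univ k)

lemma isCompact_l1Sphere : IsCompact (l1Sphere ι) :=
  Metric.isCompact_of_isClosed_isBounded (isClosed_eq (by fun_prop) continuous_const)
    ((Metric.isBounded_closedBall (x := 0) (r := 1)).subset fun _ hx =>
      mem_closedBall_zero_iff.2 (norm_le_one_of_mem_l1Sphere hx))

/-- The simplices with `k` vertices and of diameter at most `d` which lie in a face of the
cross-polytope. -/
def sphereSimplices (ι : Type*) [Fintype ι] (k : ℕ) (d : ℝ) : Set (List (ι → ℝ)) :=
  {l | ∃ ε : ι → ℝ, (∀ k, |ε k| = 1) ∧ l ∈ smallSimplices k (orthantFace ε) d}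

lemma mem_l1Sphere_of_mem_sphereSimplices {k : ℕ} {d : ℝ} {l : List (ι → ℝ)}
    (hl : l ∈ sphereSimplices ι k d) {x : ι → ℝ} (hx : x ∈ l) : x ∈ l1Sphere ι := by
  obtain ⟨ε, hε, -, hface, -⟩ := hl
  exact orthantFace_subset_l1Sphere hε (hface x hx)

end

/-- A sequence of chains in which `c i` is a chain of dimension `i` filling, for `i > 0`, the
antipodally symmetric sphere `c (i - 1) + antipode (c (i - 1))`, so that `c n` plays the role of a
hemisphere of the `n`-dimensional sphere; all simplices have diameter at most `d`. -/
structure IsHemisphereSequence (n : ℕ) (d : ℝ) (c : ℕ → ListChain (Fin (n + 1) → ℝ)) : Prop where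
  boundary_zero : boundary (c 0) = Finsupp.single [] 1
  boundary_succ : ∀ i < n, boundary (c (i + 1)) = c i + antipode (c i)
  mem_chainsIn : ∀ i ≤ n, c i ∈ chainsIn (sphereSimplices (Fin (n + 1)) (i + 1) d)

/-- The `j`-th standard basis vector; it vanishes for `j > n`. -/
def basisVec (n j : ℕ) : Fin (n + 1) → ℝ := fun k => if k.val = j then 1 else 0

/-- The hemispheres of the cross-polytope, each a cone over the sphere of one dimension less. -/
def hemisphere (n : ℕ) : ℕ → ListChain (Fin (n + 1) → ℝ)
  | 0 => Finsupp.single [basisVec n 0] 1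
  | i + 1 => cone (basisVec n (i + 1)) (hemisphere n i + antipode (hemisphere n i))

/-- The simplices with `i + 1` vertices among `±e₀, …, ±eᵢ`, without antipodal vertices. -/
def signedBasisSimplices (n i : ℕ) : Set (List (Fin (n + 1) → ℝ)) :=
  {l | l.length = i + 1 ∧
    ∃ ε : ℕ → ℝ, (∀ k, |ε k| = 1) ∧ ∀ x ∈ l, ∃ j ≤ i, x = ε j • basisVec n j}

lemma map_neg_mem_signedBasisSimplices {n i : ℕ} {l : List (Fin (n + 1) → ℝ)}
    (hl : l ∈ signedBasisSimplices n i) : l.map Neg.neg ∈ signedBasisSimplices n i := by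
  obtain ⟨hlen, ε, hε, hvert⟩ := hl
  refine ⟨by simp [hlen], fun j => -ε j, fun k => by rw [abs_neg, hε], fun x hx => ?_⟩
  obtain ⟨y, hy, rfl⟩ := List.mem_map.1 hx
  obtain ⟨j, hj, rfl⟩ := hvert y hy
  exact ⟨j, hj, (neg_smul _ _).symm⟩

lemma cons_mem_signedBasisSimplices {n i : ℕ} {l : List (Fin (n + 1) → ℝ)}
    (hl : l ∈ signedBasisSimplices n i) :
    basisVec n (i + 1) :: l ∈ signedBasisSimplices n (i + 1) := by
  obtain ⟨hlen, ε, hε, hvert⟩ := hl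
  refine ⟨by simp [hlen], Function.update ε (i + 1) 1, fun k => ?_, ?_⟩
  · rcases eq_or_ne k (i + 1) with rfl | hk
    · simp
    · simp [hk, hε]
  · refine List.forall_mem_cons.2 ⟨⟨i + 1, le_rfl, by simp⟩, fun x hx => ?_⟩
    obtain ⟨j, hj, rfl⟩ := hvert x hx
    exact ⟨j, by omega, by simp [show j ≠ i + 1 by omega]⟩

lemma hemisphere_mem_chainsIn (n i : ℕ) :
    hemisphere n i ∈ chainsIn (signedBasisSimplices n i) := by
  induction i with
  | zero =>
    exact single_mem_chainsIn ⟨rfl, fun _ => 1, by simp, fun x hx => ⟨0, le_rfl, by simpa using hx⟩⟩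
  | succ i ih =>
    exact cone_mem_chainsIn (fun l => cons_mem_signedBasisSimplices)
      (add_mem ih (antipode_mem_chainsIn (fun l => map_neg_mem_signedBasisSimplices) ih))

lemma boundary_hemisphere_succ (n i : ℕ) :
    boundary (hemisphere n (i + 1)) = hemisphere n i + antipode (hemisphere n i) := by
  suffices hcycle : boundary (hemisphere n i + antipode (hemisphere n i)) = 0 by
    rw [hemisphere, boundary_cone, hcycle, map_zero, add_zero]
  cases i with
  | zero => simp [hemisphere, facets, ZModModule.add_self]
  | succ i =>
    rw [map_add boundary, ← antipode_boundary, boundary_hemisphere_succ n i, map_add antipode,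
      antipode_antipode, add_comm (antipode (hemisphere n i)), ZModModule.add_self]

lemma smul_basisVec_mem_orthantFace {n j : ℕ} (hj : j ≤ n) {ε : ℕ → ℝ} (hε : |ε j| = 1) :
    ε j • basisVec n j ∈ orthantFace fun k : Fin (n + 1) => ε k := by
  have hcoord : ∀ k : Fin (n + 1),
      ε k * (ε j • basisVec n j) k = if k = ⟨j, by omega⟩ then 1 else 0 := by
    intro k
    simp only [basisVec, Pi.smul_apply, smul_eq_mul, Fin.ext_iff]
    split_ifs with h
    · rw [h, mul_one, ← abs_mul_abs_self, hε, one_mul]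
    · simp
  refine ⟨by simp only [hcoord, Finset.sum_ite_eq', Finset.mem_univ, if_true], fun k => ?_⟩
  rw [hcoord]
  split_ifs <;> norm_num

lemma isHemisphereSequence_hemisphere (n : ℕ) : IsHemisphereSequence n 2 (hemisphere n) where
  boundary_zero := by simp [hemisphere, facets]
  boundary_succ i _ := boundary_hemisphere_succ n i
  mem_chainsIn i hi := by
    refine Finsupp.supported_mono ?_ (hemisphere_mem_chainsIn n i)
    rintro l ⟨hlen, ε, hε, hvert⟩
    have hface : ∀ x ∈ l, x ∈ orthantFace fun k : Fin (n + 1) => ε k := fun x hx => by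
      obtain ⟨j, hj, rfl⟩ := hvert x hx
      exact smul_basisVec_mem_orthantFace (hj.trans hi) (hε j)
    have hnorm : ∀ x ∈ l, ‖x‖ ≤ 1 := fun x hx =>
      norm_le_one_of_mem_l1Sphere
        (orthantFace_subset_l1Sphere (fun k : Fin (n + 1) => hε k) (hface x hx))
    refine ⟨fun k => ε k, fun k => hε k, hlen, hface, fun x hx y hy => ?_⟩
    rw [dist_eq_norm]
    linarith [norm_sub_le x y, hnorm x hx, hnorm y hy]

lemma IsHemisphereSequence.subdivide {n : ℕ} {d : ℝ} {c : ℕ → ListChain (Fin (n + 1) → ℝ)}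
    (hc : IsHemisphereSequence n d c) :
    IsHemisphereSequence n (n / (n + 1) * d) fun i => lift (subdivision (i + 1)) (c i) := by
  have hboundary : ∀ i ≤ n, boundary (lift (subdivision (i + 1)) (c i)) =
      lift (subdivision i) (boundary (c i)) := by
    intro i hi
    have h : (boundary ∘ₗ lift (subdivision (i + 1))) (c i) =
        (lift (subdivision i) ∘ₗ boundary) (c i) :=
      eq_of_eqOn_chainsIn (fun l hl => by
        obtain ⟨_, -, hlen, -⟩ := hl
        simpa using boundary_subdivision hlen) (hc.mem_chainsIn i hi)
    exact h
  refine ⟨?_, fun i hi => ?_, fun i hi => ?_⟩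
  · rw [hboundary 0 n.zero_le, hc.boundary_zero, lift_single]; rfl
  · rw [hboundary (i + 1) hi, hc.boundary_succ i hi, map_add, lift_subdivision_antipode]
  · refine map_mem_of_mem_chainsIn (fun l hl => ?_) (hc.mem_chainsIn i hi)
    obtain ⟨ε, hε, hl⟩ := hl
    rw [lift_single]
    have hface := subdivision_mem_chainsIn (Nat.succ_le_succ hi) (convex_orthantFace ε) hl
    refine Finsupp.supported_mono (fun t ht => ?_) hface
    exact ⟨ε, hε, ht⟩

lemma exists_isHemisphereSequence (n : ℕ) {δ : ℝ} (hδ : 0 < δ) :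
    ∃ c, IsHemisphereSequence n δ c := by
  have hiter : ∀ m : ℕ, ∃ c, IsHemisphereSequence n ((n / (n + 1) : ℝ) ^ m * 2) c := by
    intro m
    induction m with
    | zero => exact ⟨_, by simpa using isHemisphereSequence_hemisphere n⟩
    | succ m ih =>
      obtain ⟨c, hc⟩ := ih
      exact ⟨_, by simpa only [pow_succ', mul_assoc] using hc.subdivide⟩
  have hratio : (n / (n + 1) : ℝ) < 1 := by rw [div_lt_one (by positivity)]; linarith
  obtain ⟨m, hm⟩ := exists_pow_lt_of_lt_one (half_pos hδ) hratio
  obtain ⟨c, hc⟩ := hiter m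
  refine ⟨c, hc.boundary_zero, hc.boundary_succ, fun i hi =>
    Finsupp.supported_mono ?_ (hc.mem_chainsIn i hi)⟩
  rintro l ⟨ε, hε, hlen, hface, hdist⟩
  exact ⟨ε, hε, hlen, hface, fun x hx y hy => (hdist x hx y hy).trans (by linarith)⟩

end Sphere

section Tucker

variable {n : ℕ}

/-- The number modulo `2` of simplices of a chain whose labels under `lam` alternate in sign,
starting with `s`. -/
def alternatingCount (lam : (Fin (n + 1) → ℝ) → Fin n × Bool) (s : Bool) :
    ListChain (Fin (n + 1) → ℝ) →ₗ[ZMod 2] ZMod 2 :=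
  lift fun l => fanCochain s (l.map lam)

variable {lam : (Fin (n + 1) → ℝ) → Fin n × Bool} {S : Set (List (Fin (n + 1) → ℝ))}
  {z : ListChain (Fin (n + 1) → ℝ)}

lemma alternatingCount_boundary (hS : ∀ l ∈ S, NoComplementary (l.map lam))
    (hz : z ∈ chainsIn S) :
    alternatingCount lam true (boundary z) =
      alternatingCount lam true z + alternatingCount lam false z := by
  refine eq_of_eqOn_chainsIn (F := alternatingCount lam true ∘ₗ boundary)
    (G := alternatingCount lam true + alternatingCount lam false) (fun l hl => ?_) hz
  simp only [LinearMap.comp_apply, LinearMap.add_apply, boundary_single, alternatingCount,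
    lift_single, lift_facets]
  rw [coboundary_comp_map lam (fanCochain true), coboundary_fanCochain true (hS l hl),
    Bool.not_true]

lemma alternatingCount_antipode (hS : ∀ l ∈ S, NoComplementary (l.map lam))
    (hlam : ∀ l ∈ S, ∀ x ∈ l, lam (-x) = flipSign (lam x)) (hz : z ∈ chainsIn S) :
    alternatingCount lam true (antipode z) = alternatingCount lam false z := by
  refine eq_of_eqOn_chainsIn (F := alternatingCount lam true ∘ₗ antipode)
    (G := alternatingCount lam false) (fun l hl => ?_) hz
  have hmap : (l.map Neg.neg).map lam = (l.map lam).map flipSign := by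
    rw [List.map_map, List.map_map]
    exact List.map_congr_left (hlam l hl)
  simp only [LinearMap.comp_apply, antipode_single, alternatingCount, lift_single]
  rw [hmap, fanCochain_map_flipSign true (hS l hl), Bool.not_true]

lemma alternatingCount_eq_zero (s : Bool) (hS : ∀ l ∈ S, n < l.length) (hz : z ∈ chainsIn S) :
    alternatingCount lam s z = 0 := by
  refine eq_of_eqOn_chainsIn (F := alternatingCount lam s) (G := 0) (fun l hl => ?_) hz
  rw [alternatingCount, lift_single, LinearMap.zero_apply]
  by_contra h
  have hlen := length_le_card_of_fanCochain_ne_zero h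
  rw [List.length_map, Fintype.card_fin] at hlen
  exact absurd (hS l hl) hlen.not_gt

/-- Tucker's lemma. The sum of the two alternating counts is invariant along the hemispheres: it is
`1` in dimension `0`, but in dimension `n` there are not enough labels for `n + 1` vertices. -/
theorem exists_complementary_labels {δ : ℝ} (hδ : 0 < δ)
    (hlam : ∀ x ∈ l1Sphere (Fin (n + 1)), lam (-x) = flipSign (lam x)) :
    ∃ x ∈ l1Sphere (Fin (n + 1)), ∃ y ∈ l1Sphere (Fin (n + 1)),
      dist x y ≤ δ ∧ (lam x).1 = (lam y).1 ∧ lam x ≠ lam y := by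
  by_contra! hcon
  obtain ⟨c, hc⟩ := exists_isHemisphereSequence n hδ
  have hcompl : ∀ i, ∀ l ∈ sphereSimplices (Fin (n + 1)) (i + 1) δ,
      NoComplementary (l.map lam) := by
    intro i l hl x hx y hy
    obtain ⟨a, ha, rfl⟩ := List.mem_map.1 hx
    obtain ⟨b, hb, rfl⟩ := List.mem_map.1 hy
    obtain ⟨ε, -, -, -, hdist⟩ := id hl
    exact hcon a (mem_l1Sphere_of_mem_sphereSimplices hl ha)
      b (mem_l1Sphere_of_mem_sphereSimplices hl hb) (hdist a ha b hb)
  have hodd : ∀ i ≤ n, alternatingCount lam true (c i) + alternatingCount lam false (c i) = 1 := by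
    intro i hi
    rw [← alternatingCount_boundary (hcompl i) (hc.mem_chainsIn i hi)]
    induction i with
    | zero =>
      simp [hc.boundary_zero, alternatingCount, fanCochain, NoComplementary, alternates]
    | succ i ih =>
      have hmem := hc.mem_chainsIn i (by omega)
      rw [hc.boundary_succ i hi, map_add, alternatingCount_antipode (hcompl i)
        (fun l hl x hx => hlam x (mem_l1Sphere_of_mem_sphereSimplices hl hx)) hmem,
        ← alternatingCount_boundary (hcompl i) hmem]
      exact ih (by omega)
  have hzero : ∀ s, alternatingCount lam s (c n) = 0 := fun s =>
    alternatingCount_eq_zero s (fun l hl => by obtain ⟨_, -, hlen, -⟩ := hl; omega)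
      (hc.mem_chainsIn n le_rfl)
  simpa [hzero] using hodd n le_rfl

end Tucker

lemma pos_iff_pos_of_abs_sub_lt {a b μ : ℝ} (ha : μ ≤ |a|) (hb : μ ≤ |b|) (hab : |a - b| < μ) :
    0 < a ↔ 0 < b := by
  rw [abs_lt] at hab
  rcases abs_cases a with ⟨_, _⟩ | ⟨_, _⟩ <;> rcases abs_cases b with ⟨_, _⟩ | ⟨_, _⟩ <;>
    constructor <;> intro <;> linarith

lemma exists_pos_le_norm_of_ne_zero {ι V : Type*} [Fintype ι] [NormedAddCommGroup V]
    {g : (ι → ℝ) → V} (hg : Continuous g) (hne : ∀ x ∈ l1Sphere ι, g x ≠ 0) :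
    ∃ μ > 0, ∀ x ∈ l1Sphere ι, μ ≤ ‖g x‖ := by
  rcases (l1Sphere ι).eq_empty_or_nonempty with hempty | hnonempty
  · exact ⟨1, one_pos, by simp [hempty]⟩
  obtain ⟨x₀, hx₀, hmin⟩ :=
    isCompact_l1Sphere.exists_isMinOn hnonempty (f := fun x => ‖g x‖) (by fun_prop)
  exact ⟨‖g x₀‖, norm_pos_iff.2 (hne x₀ hx₀), fun x hx => hmin hx⟩

-- Label `x` by the index and the sign of a coordinate of largest modulus of `g x`.
theorem borsuk_ulam {n : ℕ} {g : (Fin (n + 1) → ℝ) → Fin n → ℝ} (hg : Continuous g)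
    (hodd : ∀ x, g (-x) = -g x) : ∃ x ∈ l1Sphere (Fin (n + 1)), g x = 0 := by
  by_contra! hne
  have hindex : Nonempty (Fin n) := by
    rcases n with _ | n
    · exact absurd (Subsingleton.elim _ _) (hne (fun _ => 1) (by simp [l1Sphere]))
    · infer_instance
  obtain ⟨μ, hμ, hμle⟩ := exists_pos_le_norm_of_ne_zero hg hne
  obtain ⟨δ, hδ, hδdist⟩ := Metric.uniformContinuousOn_iff.1
    (isCompact_l1Sphere.uniformContinuousOn_of_continuous hg.continuousOn) μ hμ
  choose argmax hargmax using fun w : Fin n → ℝ => Finite.exists_max w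
  let idx x := argmax fun i => |g x i|
  have hidx : ∀ x ∈ l1Sphere (Fin (n + 1)), μ ≤ |g x (idx x)| := fun x hx =>
    (hμle x hx).trans <| (pi_norm_le_iff_of_nonneg (abs_nonneg _)).2 (hargmax fun i => |g x i|)
  have hidx_neg : ∀ x, idx (-x) = idx x := fun x => by simp [idx, hodd]
  obtain ⟨x, hx, y, hy, hxy, hfst, hlabel⟩ := exists_complementary_labels
    (lam := fun x => (idx x, decide (0 < g x (idx x)))) (half_pos hδ) fun x hx => by
      have hne : g x (idx x) ≠ 0 := abs_pos.1 (hμ.trans_le (hidx x hx))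
      simp [flipSign, hidx_neg, hodd, ← decide_not, hne.le_iff_lt]
  replace hfst : idx x = idx y := hfst
  have hclose : |g x (idx x) - g y (idx x)| < μ :=
    (dist_le_pi_dist (g x) (g y) (idx x)).trans_lt (hδdist x hx y hy (by linarith))
  have hsign := pos_iff_pos_of_abs_sub_lt (hidx x hx) (hfst ▸ hidx y hy) hclose
  exact hlabel (by simp [← hfst, hsign])

end BorsukUlam

namespace GuthKatz

section LinearODE

open Polynomial

variable {K : Type*} [Field K] [CharZero K] {k : ℕ} {φ G : K[X]} {A : ℕ → K[X]}

lemma X_pow_succ_dvd_of_linear_ode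
    (hode : G * derivative^[k] φ = ∑ j ∈ Finset.range k, A j * derivative^[j] φ)
    (hG : G.eval 0 ≠ 0) {n : ℕ} (hkn : k ≤ n) (hn : X ^ n ∣ φ) : X ^ (n + 1) ∣ φ := by
  have hprod : X ^ (n - k + 1) ∣ G * derivative^[k] φ := by
    rw [hode]
    refine Finset.dvd_sum fun j hj => Dvd.dvd.mul_left ?_ _
    have hj := Finset.mem_range.1 hj
    exact (pow_dvd_pow _ (by lia)).trans (pow_sub_dvd_iterate_derivative_of_pow_dvd j hn)
  have hderiv : X ^ (n - k + 1) ∣ derivative^[k] φ :=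
    prime_X.pow_dvd_of_dvd_mul_left _ (by rwa [X_dvd_iff, coeff_zero_eq_eval_zero]) hprod
  have hcoeff := X_pow_dvd_iff.1 hderiv (n - k) (by lia)
  rw [coeff_iterate_derivative, Nat.sub_add_cancel hkn, nsmul_eq_mul, mul_eq_zero,
    Nat.cast_eq_zero, Nat.descFactorial_eq_zero_iff_lt] at hcoeff
  refine X_pow_dvd_iff.2 fun m hm => ?_
  rcases Nat.lt_succ_iff_lt_or_eq.1 hm with hm | rfl
  · exact X_pow_dvd_iff.1 hn m hm
  · exact hcoeff.resolve_left hkn.not_gt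

lemma X_pow_dvd_of_iterate_derivative_eval_zero (h : ∀ j < k, (derivative^[j] φ).eval 0 = 0) :
    X ^ k ∣ φ := by
  refine X_pow_dvd_iff.2 fun j hj => ?_
  have hcoeff := h j hj
  rw [← coeff_zero_eq_eval_zero, coeff_iterate_derivative] at hcoeff
  simpa [Nat.descFactorial_self, Nat.factorial_ne_zero] using hcoeff

theorem eq_zero_of_linear_ode
    (hode : G * derivative^[k] φ = ∑ j ∈ Finset.range k, A j * derivative^[j] φ)
    (hG : G.eval 0 ≠ 0) (h0 : ∀ j < k, (derivative^[j] φ).eval 0 = 0) : φ = 0 := by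
  have hdvd (n : ℕ) (hn : k ≤ n) : X ^ n ∣ φ := by
    induction n, hn using Nat.le_induction with
    | base => exact X_pow_dvd_of_iterate_derivative_eval_zero h0
    | succ n hn ih => exact X_pow_succ_dvd_of_linear_ode hode hG hn ih
  ext n
  exact X_pow_dvd_iff.1 (hdvd (n + k + 1) (by lia)) n (by lia)

end LinearODE

open MvPolynomial

section HamSandwich

variable {X : Type*}

/-- The function `f` bisects the finite set `S`: each of the open sides `f > 0` and `f < 0` contains
at most half of the points of `S`. -/
def Bisects (f : X → ℝ) (S : Finset X) : Prop :=
  2 * {p ∈ S | 0 < f p}.card ≤ S.card ∧ 2 * {p ∈ S | f p < 0}.card ≤ S.card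

/-- The projection of `ℝ` onto `[-1, 1]`, a continuous odd approximation (after rescaling) of the
sign function. -/
def clamp (t : ℝ) : ℝ := max (-1) (min 1 t)

lemma continuous_clamp : Continuous clamp := by
  unfold clamp
  fun_prop

lemma neg_one_le_clamp (t : ℝ) : -1 ≤ clamp t := le_max_left _ _

lemma clamp_eq_one {t : ℝ} (ht : 1 ≤ t) : clamp t = 1 := by
  rw [clamp, min_eq_left ht]
  norm_num

lemma clamp_neg (t : ℝ) : clamp (-t) = -clamp t := by
  unfold clamp
  grind

lemma two_mul_card_filter_le_of_sum_eq_zero {S : Finset X} {c : X → ℝ} (Q : X → Prop)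
    [DecidablePred Q] (hc : ∀ p ∈ S, -1 ≤ c p) (hQ : ∀ p ∈ S, Q p → c p = 1)
    (hsum : ∑ p ∈ S, c p = 0) : 2 * {p ∈ S | Q p}.card ≤ S.card := by
  have hQ' : ∑ p ∈ S with Q p, c p = {p ∈ S | Q p}.card := by
    rw [Finset.sum_congr rfl fun p hp => hQ p (Finset.mem_filter.1 hp).1 (Finset.mem_filter.1 hp).2]
    simp
  have hnQ : -({p ∈ S | ¬Q p}.card : ℝ) ≤ ∑ p ∈ S with ¬Q p, c p := by
    simpa using Finset.sum_le_sum fun p (hp : p ∈ S.filter (¬Q ·)) =>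
      hc p (Finset.mem_filter.1 hp).1
  have hcard : ({p ∈ S | Q p}.card : ℝ) + {p ∈ S | ¬Q p}.card = S.card := by
    exact_mod_cast Finset.card_filter_add_card_filter_not (s := S) Q
  rw [← Finset.sum_filter_add_sum_filter_not S Q c] at hsum
  have : (2 * {p ∈ S | Q p}.card : ℝ) ≤ S.card := by linarith
  exact_mod_cast this

lemma eventually_clamp_mul_eq_one {s u : ℕ → ℝ} {a : ℝ} (ha : 0 < a)
    (hs : Filter.Tendsto s Filter.atTop Filter.atTop)
    (hu : Filter.Tendsto u Filter.atTop (nhds a)) :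
    ∀ᶠ m in Filter.atTop, clamp (s m * u m) = 1 :=
  ((hs.atTop_mul_pos ha hu).eventually_ge_atTop 1).mono fun _ => clamp_eq_one

lemma two_mul_card_pos_le_of_sum_clamp_eq_zero {S : Finset X} {s : ℕ → ℝ} {u : ℕ → X → ℝ}
    {f : X → ℝ} (hs : Filter.Tendsto s Filter.atTop Filter.atTop)
    (hu : ∀ p, Filter.Tendsto (u · p) Filter.atTop (nhds (f p)))
    (hsum : ∀ m, ∑ p ∈ S, clamp (s m * u m p) = 0) :
    2 * {p ∈ S | 0 < f p}.card ≤ S.card := by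
  have hone : ∀ᶠ m in Filter.atTop, ∀ p ∈ S, 0 < f p → clamp (s m * u m p) = 1 := by
    refine (Filter.eventually_all_finset S).2 fun p _ => ?_
    by_cases hp : 0 < f p
    · filter_upwards [eventually_clamp_mul_eq_one hp hs (hu p)] with m hm _ using hm
    · exact .of_forall fun m h => absurd h hp
  obtain ⟨m, hm⟩ := hone.exists
  exact two_mul_card_filter_le_of_sum_eq_zero _ (fun p _ => neg_one_le_clamp _) hm (hsum m)

lemma bisects_of_sum_clamp_eq_zero {S : Finset X} {s : ℕ → ℝ} {u : ℕ → X → ℝ} {f : X → ℝ}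
    (hs : Filter.Tendsto s Filter.atTop Filter.atTop)
    (hu : ∀ p, Filter.Tendsto (u · p) Filter.atTop (nhds (f p)))
    (hsum : ∀ m, ∑ p ∈ S, clamp (s m * u m p) = 0) : Bisects f S := by
  refine ⟨two_mul_card_pos_le_of_sum_clamp_eq_zero hs hu hsum, ?_⟩
  simpa using two_mul_card_pos_le_of_sum_clamp_eq_zero (S := S) (u := fun m p => -u m p)
    (f := fun p => -f p) hs (fun p => (hu p).neg) fun m => by
      simp only [mul_neg, clamp_neg, Finset.sum_neg_distrib, hsum m, neg_zero]

theorem exists_linearCombination_bisects {n : ℕ} (φ : Fin (n + 1) → X → ℝ) (S : Fin n → Finset X) :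
    ∃ x : Fin (n + 1) → ℝ, x ≠ 0 ∧ ∀ i, Bisects (fun p => ∑ k, x k * φ k p) (S i) := by
  have hzero (m : ℕ) : ∃ x ∈ BorsukUlam.l1Sphere (Fin (n + 1)),
      ∀ i, ∑ p ∈ S i, clamp (m * ∑ k, x k * φ k p) = 0 := by
    obtain ⟨x, hx, h⟩ := BorsukUlam.borsuk_ulam
      (g := fun x i => ∑ p ∈ S i, clamp (m * ∑ k, x k * φ k p))
      (by have := continuous_clamp; fun_prop)
      (fun x => by
        ext i
        simp only [Pi.neg_apply, neg_mul, Finset.sum_neg_distrib, mul_neg, clamp_neg])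
    exact ⟨x, hx, congrFun h⟩
  choose x hx h using hzero
  obtain ⟨a, ha, ψ, hψ, hlim⟩ := BorsukUlam.isCompact_l1Sphere.tendsto_subseq hx
  refine ⟨a, ?_, fun i => bisects_of_sum_clamp_eq_zero
    (tendsto_natCast_atTop_atTop.comp hψ.tendsto_atTop) (fun p => ?_) fun m => h (ψ m) i⟩
  · rintro rfl
    simp [BorsukUlam.l1Sphere] at ha
  · have hcont : Continuous fun y : Fin (n + 1) → ℝ => ∑ k, y k * φ k p := by fun_prop
    exact (hcont.tendsto a).comp hlim

end HamSandwich

section Partition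

variable {d : ℕ}

theorem exists_mvPolynomial_bisects {r : ℕ} {ι : Type*} (T : Finset ι) (hT : T.card < r ^ d)
    (S : ι → Finset (Fin d → ℝ)) :
    ∃ f : MvPolynomial (Fin d) ℝ, f ≠ 0 ∧ f.totalDegree ≤ d * r ∧
      ∀ i ∈ T, Bisects (fun p => eval p f) (S i) := by
  obtain ⟨e⟩ : Nonempty (Fin (T.card + 1) ↪ (Fin d → Fin r)) :=
    Function.Embedding.nonempty_of_card_le (by simpa using hT)
  let mon (k : Fin (T.card + 1)) : Fin d →₀ ℕ :=
    Finsupp.equivFunOnFinite.symm fun j => (e k j : ℕ)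
  have hmon : Function.Injective mon := fun k k' h => e.injective <| by
    ext j
    simpa [mon] using DFunLike.congr_fun h j
  obtain ⟨x, hx, h⟩ := exists_linearCombination_bisects
    (fun k p => eval p (monomial (mon k) (1 : ℝ))) fun i => S (T.equivFin.symm i)
  refine ⟨∑ k, monomial (mon k) (x k), fun h0 => hx ?_, ?_, fun i hi => ?_⟩
  · ext k
    simpa [coeff_sum, coeff_monomial, hmon.eq_iff] using congrArg (coeff (mon k)) h0
  · refine totalDegree_finsetSum_le fun k _ => (totalDegree_monomial_le _ _).trans ?_
    rw [Finsupp.sum_fintype _ _ fun _ => rfl]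
    simpa [mon] using Finset.sum_le_card_nsmul Finset.univ _ r fun j _ => (e k j).2.le
  · simpa [eval_monomial] using h (T.equivFin ⟨i, hi⟩)

/-- The set of those indices `i < J` for which `f i` is positive at `p`. Together with the
nonvanishing of all `f i` it determines the sign vector of `p`. -/
def positiveSet (f : ℕ → MvPolynomial (Fin d) ℝ) (J : ℕ) (p : Fin d → ℝ) : Finset ℕ :=
  {i ∈ Finset.range J | 0 < eval p (f i)}

open Classical in
/-- The points of `S` in the open cell, cut out by `f 0, …, f (J - 1)`, on which exactly the `f i`
with `i ∈ c` are positive. -/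
def cell (f : ℕ → MvPolynomial (Fin d) ℝ) (J : ℕ) (S : Finset (Fin d → ℝ)) (c : Finset ℕ) :
    Finset (Fin d → ℝ) :=
  {p ∈ S | (∀ i < J, eval p (f i) ≠ 0) ∧ positiveSet f J p = c}

variable {f : ℕ → MvPolynomial (Fin d) ℝ} {J : ℕ} {S : Finset (Fin d → ℝ)} {c : Finset ℕ}
  {p : Fin d → ℝ}

lemma mem_cell : p ∈ cell f J S c ↔
    p ∈ S ∧ (∀ i < J, eval p (f i) ≠ 0) ∧ positiveSet f J p = c := by
  simp only [cell, Finset.mem_filter]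

lemma cell_subset : cell f J S c ⊆ S := Finset.filter_subset _ _

lemma positiveSet_subset : positiveSet f J p ⊆ Finset.range J := Finset.filter_subset _ _

lemma positiveSet_congr {g : ℕ → MvPolynomial (Fin d) ℝ} (h : ∀ i < J, f i = g i) :
    positiveSet f J p = positiveSet g J p :=
  Finset.filter_congr fun i hi => by rw [h i (Finset.mem_range.1 hi)]

lemma cell_congr {g : ℕ → MvPolynomial (Fin d) ℝ} (h : ∀ i < J, f i = g i) :
    cell f J S c = cell g J S c := by
  ext p
  rw [mem_cell, mem_cell, positiveSet_congr h, forall₂_congr fun i hi => by rw [h i hi]]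

lemma positiveSet_erase :
    (positiveSet f (J + 1) p).erase J = positiveSet f J p := by
  ext i
  simp only [positiveSet, Finset.mem_erase, Finset.mem_filter, Finset.mem_range]
  grind

lemma cell_succ_subset : cell f (J + 1) S c ⊆ cell f J S (c.erase J) := by
  intro p hp
  obtain ⟨hpS, hp0, rfl⟩ := mem_cell.1 hp
  exact mem_cell.2 ⟨hpS, fun i hi => hp0 i (by lia), positiveSet_erase.symm⟩

lemma cell_eq_empty (hc : ¬c ⊆ Finset.range J) : cell f J S c = ∅ := by
  refine Finset.eq_empty_of_forall_notMem fun p hp => hc ?_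
  obtain ⟨-, -, rfl⟩ := mem_cell.1 hp
  exact positiveSet_subset

lemma two_mul_card_cell_succ_le (h : Bisects (fun p => eval p (f J)) (cell f J S (c.erase J))) :
    2 * (cell f (J + 1) S c).card ≤ (cell f J S (c.erase J)).card := by
  have hmem {p} (hp : p ∈ cell f (J + 1) S c) : eval p (f J) ≠ 0 ∧ (0 < eval p (f J) ↔ J ∈ c) := by
    obtain ⟨-, hp0, rfl⟩ := mem_cell.1 hp
    exact ⟨hp0 J (by lia), by simp [positiveSet]⟩
  by_cases hJ : J ∈ c
  · refine (Nat.mul_le_mul_left 2 (Finset.card_le_card fun p hp => ?_)).trans h.1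
    exact Finset.mem_filter.2 ⟨cell_succ_subset hp, (hmem hp).2.2 hJ⟩
  · refine (Nat.mul_le_mul_left 2 (Finset.card_le_card fun p hp => ?_)).trans h.2
    have hle : eval p (f J) ≤ 0 := not_lt.1 ((hmem hp).2.not.2 hJ)
    exact Finset.mem_filter.2 ⟨cell_succ_subset hp, hle.lt_of_ne (hmem hp).1⟩

theorem exists_polynomial_partition (hd : d ≠ 0) (S : Finset (Fin d → ℝ)) (J : ℕ) :
    ∃ f : ℕ → MvPolynomial (Fin d) ℝ, (∀ i, f i ≠ 0) ∧
      (∀ i, (f i).totalDegree ≤ d * 2 ^ (i / d + 1)) ∧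
      ∀ c, 2 ^ J * (cell f J S c).card ≤ S.card := by
  induction J with
  | zero =>
    exact ⟨fun _ => 1, by simp, by simp, fun c => by simpa using Finset.card_le_card cell_subset⟩
  | succ J ih =>
    obtain ⟨f, hf0, hfdeg, hfcell⟩ := ih
    have hcard : (Finset.range J).powerset.card < (2 ^ (J / d + 1)) ^ d := by
      rw [Finset.card_powerset, Finset.card_range, ← pow_mul, mul_comm]
      exact Nat.pow_lt_pow_right (by norm_num) (Nat.lt_mul_div_succ J (Nat.pos_of_ne_zero hd))
    obtain ⟨g, hg0, hgdeg, hgbis⟩ := exists_mvPolynomial_bisects _ hcard (cell f J S)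
    have hupdate (i : ℕ) (hi : i < J) : Function.update f J g i = f i :=
      Function.update_of_ne hi.ne _ _
    refine ⟨Function.update f J g, fun i => ?_, fun i => ?_, fun c => ?_⟩
    · rcases eq_or_ne i J with rfl | hi <;> simp [*]
    · rcases eq_or_ne i J with rfl | hi <;> simp [*]
    · by_cases hc : c.erase J ⊆ Finset.range J
      · have hhalf := two_mul_card_cell_succ_le (f := Function.update f J g) (J := J) (S := S)
          (c := c) (by
            rw [cell_congr hupdate, Function.update_self]
            exact hgbis _ (Finset.mem_powerset.2 hc))
        rw [cell_congr hupdate] at hhalf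
        calc 2 ^ (J + 1) * (cell (Function.update f J g) (J + 1) S c).card
            = 2 ^ J * (2 * (cell (Function.update f J g) (J + 1) S c).card) := by ring
          _ ≤ 2 ^ J * (cell f J S (c.erase J)).card := by gcongr
          _ ≤ S.card := hfcell _
      · have hempty : cell (Function.update f J g) (J + 1) S c = ∅ :=
          Finset.subset_empty.1 (cell_succ_subset.trans (cell_eq_empty hc).subset)
        simp [hempty]

lemma totalDegree_prod_range_le (hf : ∀ i, (f i).totalDegree ≤ d * 2 ^ (i / d + 1)) (I : ℕ) :
    (∏ i ∈ Finset.range (d * I), f i).totalDegree ≤ 2 * d ^ 2 * 2 ^ I := by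
  induction I with
  | zero => simp
  | succ I ih =>
    have hblock : (∏ j ∈ Finset.range d, f (d * I + j)).totalDegree ≤ d * (d * 2 ^ (I + 1)) := by
      refine (totalDegree_finsetProd _ _).trans ?_
      refine (Finset.sum_le_card_nsmul _ _ (d * 2 ^ (I + 1)) fun j hj => ?_).trans (by simp)
      have hj := Finset.mem_range.1 hj
      have hdiv : (d * I + j) / d = I := by
        rw [Nat.mul_add_div (by lia), Nat.div_eq_of_lt hj, add_zero]
      exact (hf _).trans_eq (by rw [hdiv])
    rw [mul_add, mul_one, Finset.prod_range_add]
    calc _ ≤ 2 * d ^ 2 * 2 ^ I + d * (d * 2 ^ (I + 1)) :=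
          (totalDegree_mul _ _).trans (add_le_add ih hblock)
      _ = 2 * d ^ 2 * 2 ^ (I + 1) := by ring

end Partition

section Line

variable {V : Type*} [AddCommGroup V] [Module ℝ V] {ℓ ℓ' : Set V} {p q w : V}

/-- A straight line, as a set of points. -/
def IsLine (ℓ : Set V) : Prop := ∃ p w : V, w ≠ 0 ∧ ℓ = Set.range fun t : ℝ => p + t • w

lemma injective_add_smul (p : V) (hw : w ≠ 0) : Function.Injective fun t : ℝ => p + t • w :=
  (add_right_injective p).comp (smul_left_injective ℝ hw)

lemma IsLine.infinite (h : IsLine ℓ) : ℓ.Infinite := by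
  obtain ⟨p, w, hw, rfl⟩ := h
  exact Set.infinite_range_of_injective (injective_add_smul p hw)

lemma IsLine.exists_direction (h : IsLine ℓ) (hp : p ∈ ℓ) :
    ∃ w ≠ 0, ℓ = Set.range fun t : ℝ => p + t • w := by
  obtain ⟨q, w, hw, rfl⟩ := h
  obtain ⟨s, rfl⟩ := hp
  refine ⟨w, hw, Set.Subset.antisymm ?_ ?_⟩
  · rintro _ ⟨t, rfl⟩
    exact ⟨t - s, by module⟩
  · rintro _ ⟨t, rfl⟩
    exact ⟨t + s, by module⟩

lemma IsLine.eq_range_of_mem (h : IsLine ℓ) (hpq : p ≠ q) (hp : p ∈ ℓ) (hq : q ∈ ℓ) :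
    ℓ = Set.range fun t : ℝ => p + t • (q - p) := by
  obtain ⟨w, -, rfl⟩ := h.exists_direction hp
  obtain ⟨s, rfl⟩ := hq
  have hs : s ≠ 0 := by
    rintro rfl
    simp at hpq
  refine Set.Subset.antisymm ?_ ?_
  · rintro _ ⟨t, rfl⟩
    exact ⟨t / s, by simp only [add_sub_cancel_left, smul_smul, div_mul_cancel₀ _ hs]⟩
  · rintro _ ⟨t, rfl⟩
    exact ⟨t * s, by module⟩

lemma IsLine.eq_of_mem (h : IsLine ℓ) (h' : IsLine ℓ') (hpq : p ≠ q) (hp : p ∈ ℓ) (hq : q ∈ ℓ)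
    (hp' : p ∈ ℓ') (hq' : q ∈ ℓ') : ℓ = ℓ' :=
  (h.eq_range_of_mem hpq hp hq).trans (h'.eq_range_of_mem hpq hp' hq').symm

end Line

section Restriction

variable {σ : Type*} {ℓ : Set (σ → ℝ)} {f g : MvPolynomial σ ℝ} {p w : σ → ℝ}

/-- The polynomial `f` vanishes identically on the set `ℓ`. -/
def VanishesOn (f : MvPolynomial σ ℝ) (ℓ : Set (σ → ℝ)) : Prop := ∀ x ∈ ℓ, eval x f = 0

/-- The restriction of a polynomial to the parametrized line `t ↦ p + t • w`. -/
def restrict (p w : σ → ℝ) : MvPolynomial σ ℝ →ₐ[ℝ] Polynomial ℝ :=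
  aeval fun i => Polynomial.C (w i) * Polynomial.X + Polynomial.C (p i)

lemma eval_restrict (p w : σ → ℝ) (f : MvPolynomial σ ℝ) (t : ℝ) :
    (restrict p w f).eval t = eval (p + t • w) f := by
  have h : (Polynomial.aeval t).comp (restrict p w) = aeval (p + t • w) :=
    MvPolynomial.algHom_ext fun i => by
      simp only [restrict, AlgHom.comp_apply, aeval_X, map_add, map_mul, Polynomial.aeval_C,
        Polynomial.aeval_X, Algebra.algebraMap_self, RingHom.id_apply, Pi.add_apply, Pi.smul_apply,
        smul_eq_mul]
      ring
  simpa [Polynomial.coe_aeval_eq_eval, aeval_eq_eval] using DFunLike.congr_fun h f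

lemma natDegree_restrict_le (p w : σ → ℝ) (f : MvPolynomial σ ℝ) :
    (restrict p w f).natDegree ≤ f.totalDegree := by
  simpa [restrict] using aeval_natDegree_le f le_rfl
    (fun i => Polynomial.C (w i) * Polynomial.X + Polynomial.C (p i)) (n := 1)
    fun _ => Polynomial.natDegree_linear_le

lemma card_roots_restrict_le (p w : σ → ℝ) (f : MvPolynomial σ ℝ) :
    (restrict p w f).roots.toFinset.card ≤ f.totalDegree :=
  (Multiset.toFinset_card_le _).trans <|
    (Polynomial.card_roots' _).trans <| natDegree_restrict_le p w f

lemma vanishesOn_range_iff :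
    VanishesOn f (Set.range fun t : ℝ => p + t • w) ↔ restrict p w f = 0 := by
  refine ⟨fun h => Polynomial.funext fun t => ?_, fun h => ?_⟩
  · rw [eval_restrict, h _ ⟨t, rfl⟩, Polynomial.eval_zero]
  · rintro _ ⟨t, rfl⟩
    rw [← eval_restrict, h, Polynomial.eval_zero]

lemma VanishesOn.of_dvd (hf : VanishesOn f ℓ) (hfg : f ∣ g) : VanishesOn g ℓ := by
  obtain ⟨c, rfl⟩ := hfg
  intro x hx
  rw [map_mul, hf x hx, zero_mul]

lemma IsLine.vanishesOn_or_of_mul (h : IsLine ℓ) (hfg : VanishesOn (f * g) ℓ) :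
    VanishesOn f ℓ ∨ VanishesOn g ℓ := by
  obtain ⟨p, w, -, rfl⟩ := h
  rwa [vanishesOn_range_iff, map_mul, mul_eq_zero, ← vanishesOn_range_iff,
    ← vanishesOn_range_iff] at hfg

lemma IsLine.card_zeros_le (h : IsLine ℓ) (hf : ¬VanishesOn f ℓ) {T : Finset (σ → ℝ)}
    (hT : ∀ x ∈ T, x ∈ ℓ ∧ eval x f = 0) : T.card ≤ f.totalDegree := by
  classical
  obtain ⟨p, w, -, rfl⟩ := h
  rw [vanishesOn_range_iff] at hf
  have hsub : T ⊆ (restrict p w f).roots.toFinset.image fun t => p + t • w := fun x hx => by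
    obtain ⟨⟨t, rfl⟩, hx0⟩ := hT x hx
    refine Finset.mem_image_of_mem _ ?_
    rwa [Multiset.mem_toFinset, Polynomial.mem_roots hf, Polynomial.IsRoot, eval_restrict]
  exact (Finset.card_le_card hsub).trans <| Finset.card_image_le.trans <|
    card_roots_restrict_le p w f

end Restriction

section LineCells

variable {d : ℕ} {ℓ : Set (Fin d → ℝ)} {f : ℕ → MvPolynomial (Fin d) ℝ} {J : ℕ}

lemma eval_pos_of_no_root {F : Polynomial ℝ} {s t : ℝ} (h : ∀ u ∈ Set.uIcc s t, F.eval u ≠ 0)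
    (hs : 0 < F.eval s) : 0 < F.eval t := by
  by_contra! ht
  obtain ⟨u, hu, hu0⟩ := intermediate_value_uIcc F.continuous.continuousOn
    (Set.mem_uIcc.2 (Or.inr ⟨ht, hs.le⟩) : (0 : ℝ) ∈ Set.uIcc (F.eval s) (F.eval t))
  exact h u hu hu0

lemma positiveSet_eq_of_no_root {p w : Fin d → ℝ} {s t : ℝ}
    (h : ∀ u ∈ Set.uIcc s t, ∀ i < J, eval (p + u • w) (f i) ≠ 0) :
    positiveSet f J (p + s • w) = positiveSet f J (p + t • w) := by
  refine Finset.filter_congr fun i hi => ?_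
  simp only [← eval_restrict] at h ⊢
  have hi := Finset.mem_range.1 hi
  exact ⟨eval_pos_of_no_root fun u hu => h u hu i hi,
    eval_pos_of_no_root fun u hu => h u (Set.uIcc_comm t s ▸ hu) i hi⟩

lemma notMem_of_card_filter_lt_eq {R : Finset ℝ} {s t u : ℝ} (hu : u ∈ Set.Ico s t)
    (h : {r ∈ R | r < s}.card = {r ∈ R | r < t}.card) : u ∉ R := by
  intro huR
  have hsub : {r ∈ R | r < s} ⊆ {r ∈ R | r < t} :=
    Finset.monotone_filter_right R fun r _ hr => hr.trans (hu.1.trans_lt hu.2)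
  have hmem : u ∈ {r ∈ R | r < s} := by
    rw [Finset.eq_of_subset_of_card_le hsub h.ge]
    exact Finset.mem_filter.2 ⟨huR, hu.2⟩
  exact ((Finset.mem_filter.1 hmem).2.trans_le hu.1).false

lemma positiveSet_eq_of_card_roots_lt_eq {p w : Fin d → ℝ} {R : Finset ℝ}
    (hR : ∀ u, ∀ i < J, eval (p + u • w) (f i) = 0 → u ∈ R) {s t : ℝ} (hst : s ≤ t) (ht : t ∉ R)
    (h : {r ∈ R | r < s}.card = {r ∈ R | r < t}.card) :
    positiveSet f J (p + s • w) = positiveSet f J (p + t • w) := by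
  refine positiveSet_eq_of_no_root fun u hu i hi h0 => ?_
  rw [Set.uIcc_of_le hst] at hu
  rcases hu.2.eq_or_lt with rfl | hut
  · exact ht (hR u i hi h0)
  · exact notMem_of_card_filter_lt_eq ⟨hu.1, hut⟩ h (hR u i hi h0)

/- On a line, the sign vector at a point `t` that is not a root only depends on the number of roots
to the left of `t`. -/
theorem IsLine.card_image_positiveSet_le (h : IsLine ℓ)
    (hf : ¬VanishesOn (∏ i ∈ Finset.range J, f i) ℓ) {T : Finset (Fin d → ℝ)}
    (hT : ∀ x ∈ T, x ∈ ℓ ∧ ∀ i < J, eval x (f i) ≠ 0) :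
    (T.image (positiveSet f J)).card ≤ (∏ i ∈ Finset.range J, f i).totalDegree + 1 := by
  obtain ⟨p, w, -, rfl⟩ := h
  rw [vanishesOn_range_iff] at hf
  set R := (restrict p w (∏ i ∈ Finset.range J, f i)).roots.toFinset
  have hmemR (t : ℝ) : t ∈ R ↔ ∃ i < J, eval (p + t • w) (f i) = 0 := by
    rw [Multiset.mem_toFinset, Polynomial.mem_roots hf, Polynomial.IsRoot, eval_restrict, map_prod,
      Finset.prod_eq_zero_iff]
    simp only [Finset.mem_range]
  have hτ (c : Finset ℕ) (hc : c ∈ T.image (positiveSet f J)) :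
      ∃ t : ℝ, t ∉ R ∧ positiveSet f J (p + t • w) = c := by
    obtain ⟨x, hx, rfl⟩ := Finset.mem_image.1 hc
    obtain ⟨⟨t, rfl⟩, hx0⟩ := hT x hx
    exact ⟨t, fun ht => let ⟨i, hi, h0⟩ := (hmemR t).1 ht; hx0 i hi h0, rfl⟩
  choose! τ hτR hτ using hτ
  have hinj : Set.InjOn (fun c => {r ∈ R | r < τ c}.card) (T.image (positiveSet f J)) := by
    intro c hc c' hc' hcc
    have hR (u : ℝ) (i : ℕ) (hi : i < J) (h0 : eval (p + u • w) (f i) = 0) : u ∈ R :=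
      (hmemR u).2 ⟨i, hi, h0⟩
    rw [← hτ c hc, ← hτ c' hc']
    rcases le_total (τ c) (τ c') with hle | hle
    · exact positiveSet_eq_of_card_roots_lt_eq hR hle (hτR c' hc') hcc
    · exact (positiveSet_eq_of_card_roots_lt_eq hR hle (hτR c hc) hcc.symm).symm
  have hmaps : ∀ c ∈ T.image (positiveSet f J),
      {r ∈ R | r < τ c}.card ∈ Finset.range (R.card + 1) := fun c _ =>
    Finset.mem_range_succ_iff.2 (Finset.card_filter_le _ _)
  calc (T.image (positiveSet f J)).card ≤ (Finset.range (R.card + 1)).card :=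
        Finset.card_le_card_of_injOn _ hmaps hinj
    _ = R.card + 1 := Finset.card_range _
    _ ≤ _ := Nat.add_le_add_right (card_roots_restrict_le p w _) 1

end LineCells

section DualSystem

variable {K E ι : Type*} [Field K] [AddCommGroup E] [Module K E]

lemma pi_surjective_of_separating [Finite ι] {φ : ι → Module.Dual K E}
    (hsep : ∀ i, ∃ v, φ i v ≠ 0 ∧ ∀ j ≠ i, φ j v = 0) :
    Function.Surjective (LinearMap.pi φ) := by
  classical
  have := Fintype.ofFinite ι
  rw [← LinearMap.range_eq_top, eq_top_iff]
  intro y _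
  rw [← Finset.univ_sum_single y]
  refine Submodule.sum_mem _ fun i _ => ?_
  obtain ⟨v, hv, hv0⟩ := hsep i
  refine ⟨(y i / φ i v) • v, ?_⟩
  ext j
  rcases eq_or_ne j i with rfl | hj
  · simp [hv]
  · simp [hv0 j hj, hj]

lemma finrank_add_card_le_of_separating [Fintype ι] {I V : Submodule K E} [Module.Finite K V]
    (hIV : I ≤ V) {φ : ι → Module.Dual K E} (hI : ∀ i, I ≤ LinearMap.ker (φ i))
    (hsep : ∀ i, ∃ v ∈ V, φ i v ≠ 0 ∧ ∀ j ≠ i, φ j v = 0) :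
    Module.finrank K I + Fintype.card ι ≤ Module.finrank K V := by
  let Φ : V →ₗ[K] (ι → K) := LinearMap.pi fun i => φ i ∘ₗ V.subtype
  have hsurj : Function.Surjective Φ := pi_surjective_of_separating fun i =>
    let ⟨v, hvV, hv⟩ := hsep i
    ⟨⟨v, hvV⟩, hv⟩
  have hker : I ≤ (LinearMap.ker Φ).map V.subtype := fun v hv =>
    ⟨⟨v, hIV hv⟩, LinearMap.mem_ker.2 (funext fun i => hI i hv), rfl⟩
  have hrank := LinearMap.finrank_range_add_finrank_ker Φ
  rw [LinearMap.range_eq_top.2 hsurj, finrank_top, Module.finrank_fintype_fun_eq_card] at hrank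
  have hle := Submodule.finrank_mono hker
  rw [Submodule.finrank_map_subtype_eq] at hle
  lia

end DualSystem

section Separation

variable {σ : Type*}

/-- The affine form `x ↦ ∑ i, n i * (x i - p i)` as a polynomial. -/
def affineForm [Fintype σ] (n p : σ → ℝ) : MvPolynomial σ ℝ := ∑ i, C (n i) * (X i - C (p i))

lemma eval_affineForm [Fintype σ] (n p x : σ → ℝ) :
    eval x (affineForm n p) = ∑ i, n i * (x i - p i) := by
  simp [affineForm]

lemma totalDegree_affineForm_le [Fintype σ] (n p : σ → ℝ) :
    (affineForm n p).totalDegree ≤ 1 := by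
  refine totalDegree_finsetSum_le fun i _ => (totalDegree_mul _ _).trans ?_
  rw [totalDegree_C, zero_add]
  exact (totalDegree_sub _ _).trans (by simp)

lemma eval_affineForm_dual [Fintype σ] [DecidableEq σ] (L : Module.Dual ℝ (σ → ℝ))
    (p x : σ → ℝ) :
    eval x (affineForm (fun i => L fun j => if i = j then 1 else 0) p) = L (x - p) := by
  rw [eval_affineForm, L.pi_apply_eq_sum_univ (x - p)]
  simp [mul_comm]

lemma IsLine.exists_separating [Finite σ] {ℓ : Set (σ → ℝ)} (h : IsLine ℓ) {x : σ → ℝ}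
    (hx : x ∉ ℓ) :
    ∃ f : MvPolynomial σ ℝ, f.totalDegree ≤ 1 ∧ VanishesOn f ℓ ∧ eval x f ≠ 0 := by
  classical
  have := Fintype.ofFinite σ
  obtain ⟨p, w, -, rfl⟩ := h
  have hspan : x - p ∉ Submodule.span ℝ {w} := fun hmem => by
    obtain ⟨t, ht⟩ := Submodule.mem_span_singleton.1 hmem
    exact hx ⟨t, by simp only [ht, add_sub_cancel]⟩
  obtain ⟨L, hLx, hLw⟩ := Submodule.exists_le_ker_of_notMem hspan
  have hLw : L w = 0 := hLw (Submodule.mem_span_singleton_self w)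
  refine ⟨_, totalDegree_affineForm_le _ p, ?_, (eval_affineForm_dual L p x).trans_ne hLx⟩
  rintro _ ⟨t, rfl⟩
  rw [eval_affineForm_dual, add_sub_cancel_left, map_smul, hLw, smul_zero]

lemma exists_separating_points {x y : σ → ℝ} (h : x ≠ y) :
    ∃ f : MvPolynomial σ ℝ, f.totalDegree ≤ 1 ∧ eval y f = 0 ∧ eval x f ≠ 0 := by
  obtain ⟨j, hj⟩ := Function.ne_iff.1 h
  refine ⟨X j - C (y j), (totalDegree_sub _ _).trans (by simp), by simp, ?_⟩
  simpa [sub_eq_zero] using hj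

lemma totalDegree_prod_le_card {ι : Type*} {s : Finset ι} {f : ι → MvPolynomial σ ℝ}
    (h : ∀ i ∈ s, (f i).totalDegree ≤ 1) : (∏ i ∈ s, f i).totalDegree ≤ s.card :=
  (totalDegree_finsetProd s f).trans ((Finset.sum_le_sum h).trans (by simp))

/-- `S` picks `n` points on each of the lines in `L`, away from the other lines in `L`. -/
def IsSample {V : Type*} (L : Finset (Set V)) (n : ℕ) (S : Set V → Finset V) : Prop :=
  ∀ ℓ ∈ L, (S ℓ).card = n ∧ ∀ x ∈ S ℓ, x ∈ ℓ ∧ ∀ ℓ' ∈ L, ℓ' ≠ ℓ → x ∉ ℓ'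

lemma exists_isSample {V : Type*} [AddCommGroup V] [Module ℝ V] {L : Finset (Set V)}
    (hL : ∀ ℓ ∈ L, IsLine ℓ) (n : ℕ) : ∃ S, IsSample L n S := by
  classical
  have hpts (ℓ : Set V) (hℓ : ℓ ∈ L) :
      ∃ S : Finset V, S.card = n ∧ ∀ x ∈ S, x ∈ ℓ ∧ ∀ ℓ' ∈ L, ℓ' ≠ ℓ → x ∉ ℓ' := by
    have hfin : (⋃ ℓ' ∈ L.erase ℓ, ℓ ∩ ℓ').Finite := by
      refine (L.erase ℓ).finite_toSet.biUnion fun ℓ' hℓ' => Set.Subsingleton.finite ?_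
      obtain ⟨hne, hℓ'⟩ := Finset.mem_erase.1 hℓ'
      intro x hx y hy
      by_contra hxy
      exact hne ((hL ℓ hℓ).eq_of_mem (hL ℓ' hℓ') hxy hx.1 hy.1 hx.2 hy.2).symm
    obtain ⟨S, hS, hcard⟩ := ((hL ℓ hℓ).infinite.sdiff hfin).exists_subset_card_eq n
    refine ⟨S, hcard, fun x hx => ⟨(hS hx).1, fun ℓ' hℓ' hne hx' => (hS hx).2 ?_⟩⟩
    exact Set.mem_biUnion (Finset.mem_erase.2 ⟨hne, hℓ'⟩) ⟨(hS hx).1, hx'⟩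
  choose! S hS using hpts
  exact ⟨S, hS⟩

lemma IsSample.card_biUnion {V : Type*} [DecidableEq V] {L : Finset (Set V)} {n : ℕ}
    {S : Set V → Finset V} (hS : IsSample L n S) : (L.biUnion S).card = L.card * n := by
  rw [Finset.card_biUnion, Finset.sum_congr rfl fun ℓ hℓ => (hS ℓ hℓ).1, Finset.sum_const,
    smul_eq_mul]
  intro ℓ hℓ ℓ' hℓ' hne
  refine Finset.disjoint_left.2 fun x hx hx' => ?_
  exact ((hS ℓ hℓ).2 x hx).2 ℓ' hℓ' hne.symm ((hS ℓ' hℓ').2 x hx').1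

lemma IsSample.exists_separating [Finite σ] {L : Finset (Set (σ → ℝ))} {n : ℕ}
    {S : Set (σ → ℝ) → Finset (σ → ℝ)} (hS : IsSample L n S) (hL : ∀ ℓ ∈ L, IsLine ℓ)
    {ℓ : Set (σ → ℝ)} (hℓ : ℓ ∈ L) {x : σ → ℝ} (hx : x ∈ S ℓ) :
    ∃ f : MvPolynomial σ ℝ, f.totalDegree ≤ L.card + n ∧ eval x f ≠ 0 ∧
      ∀ ℓ' ∈ L, ∀ y ∈ S ℓ', y ≠ x → eval y f = 0 := by
  classical
  have hline (ℓ' : Set (σ → ℝ)) (hℓ' : ℓ' ∈ L.erase ℓ) :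
      ∃ F : MvPolynomial σ ℝ, F.totalDegree ≤ 1 ∧ VanishesOn F ℓ' ∧ eval x F ≠ 0 :=
    have ⟨hne, hmem⟩ := Finset.mem_erase.1 hℓ'
    (hL ℓ' hmem).exists_separating (((hS ℓ hℓ).2 x hx).2 ℓ' hmem hne)
  have hpoint (y : σ → ℝ) (hy : y ∈ (S ℓ).erase x) :
      ∃ F : MvPolynomial σ ℝ, F.totalDegree ≤ 1 ∧ eval y F = 0 ∧ eval x F ≠ 0 :=
    exists_separating_points (Finset.ne_of_mem_erase hy).symm
  choose! A hAdeg hAvan hAx using hline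
  choose! B hBdeg hBvan hBx using hpoint
  refine ⟨(∏ ℓ' ∈ L.erase ℓ, A ℓ') * ∏ y ∈ (S ℓ).erase x, B y, ?_, ?_, fun ℓ' hℓ' y hy hyx => ?_⟩
  · refine (totalDegree_mul _ _).trans (add_le_add ?_ ?_)
    · exact (totalDegree_prod_le_card hAdeg).trans Finset.card_erase_le
    · exact (totalDegree_prod_le_card hBdeg).trans (Finset.card_erase_le.trans_eq (hS ℓ hℓ).1)
  · rw [map_mul, map_prod, map_prod]
    exact mul_ne_zero (Finset.prod_ne_zero_iff.2 hAx) (Finset.prod_ne_zero_iff.2 hBx)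
  · rw [map_mul, map_prod, map_prod]
    rcases eq_or_ne ℓ' ℓ with rfl | hne
    · have hy' := Finset.mem_erase.2 ⟨hyx, hy⟩
      rw [Finset.prod_eq_zero hy' (hBvan y hy'), mul_zero]
    · have hℓ'' := Finset.mem_erase.2 ⟨hne, hℓ'⟩
      rw [Finset.prod_eq_zero hℓ'' (hAvan ℓ' hℓ'' y ((hS ℓ' hℓ').2 y hy).1), zero_mul]

end Separation

section DegreeBox

variable {σ : Type*}

/-- The space of polynomials whose degree in each variable `i` is at most `N i`. -/
abbrev degreeBox (N : σ → ℕ) : Submodule ℝ (MvPolynomial σ ℝ) :=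
  restrictSupport ℝ {m : σ →₀ ℕ | ∀ i, m i ≤ N i}

lemma mem_degreeBox {N : σ → ℕ} {f : MvPolynomial σ ℝ} :
    f ∈ degreeBox N ↔ ∀ i, f.degreeOf i ≤ N i := by
  simp only [mem_restrictSupport_iff, degreeOf_le_iff]
  exact ⟨fun h i m hm => h hm i, fun h m hm i => h i m hm⟩

/-- The exponents of the monomials spanning `degreeBox N`, as functions. -/
def degreeBoxEquiv [Finite σ] (N : σ → ℕ) :
    {m : σ →₀ ℕ | ∀ i, m i ≤ N i} ≃ (Set.Iic N : Set (σ → ℕ)) :=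
  Finsupp.equivFunOnFinite.subtypeEquiv fun _ => Iff.rfl

instance [Finite σ] (N : σ → ℕ) : Module.Finite ℝ (degreeBox N) :=
  have : Finite (Set.Iic N) := by
    classical
    have := Fintype.ofFinite σ
    exact (Set.finite_Iic N).to_subtype
  have : Finite {m : σ →₀ ℕ | ∀ i, m i ≤ N i} := Finite.of_equiv _ (degreeBoxEquiv N).symm
  Module.Finite.of_basis (basisRestrictSupport ℝ _)

lemma finrank_degreeBox [Fintype σ] (N : σ → ℕ) :
    Module.finrank ℝ (degreeBox N) = ∏ i, (N i + 1) := by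
  classical
  rw [Module.finrank_eq_nat_card_basis (basisRestrictSupport ℝ _),
    Nat.card_congr (degreeBoxEquiv N), ← Finset.coe_Iic, Nat.card_coe_set_eq,
    Set.ncard_coe_finset, Pi.card_Iic]
  simp

/-- The linear map `(a, b) ↦ f * a + g * b` on `V × W`. -/
def combination (f g : MvPolynomial σ ℝ) (V W : Submodule ℝ (MvPolynomial σ ℝ)) :
    V × W →ₗ[ℝ] MvPolynomial σ ℝ :=
  (LinearMap.mulLeft ℝ f ∘ₗ V.subtype).coprod (LinearMap.mulLeft ℝ g ∘ₗ W.subtype)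

lemma combination_apply (f g : MvPolynomial σ ℝ) (V W : Submodule ℝ (MvPolynomial σ ℝ))
    (x : V × W) : combination f g V W x = f * x.1 + g * x.2 := rfl

variable {f g : MvPolynomial σ ℝ}

/- If `f * a + g * b = 0` then `f ∣ b`, so the kernel of `(a, b) ↦ f * a + g * b` embeds into the
multiples of `f`. -/
lemma finrank_add_finrank_le_range_combination [Finite σ] (hf : Irreducible f) (hfg : ¬f ∣ g)
    (V : Submodule ℝ (MvPolynomial σ ℝ)) [Module.Finite ℝ V] {M N : σ → ℕ}
    (hM : ∀ i, M i = N i + f.degreeOf i) :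
    Module.finrank ℝ V + Module.finrank ℝ (degreeBox M) ≤
      Module.finrank ℝ (combination f g V (degreeBox M)).range +
        Module.finrank ℝ (degreeBox N) := by
  set Φ := combination f g V (degreeBox M)
  let π : Φ.ker →ₗ[ℝ] MvPolynomial σ ℝ :=
    (degreeBox M).subtype ∘ₗ LinearMap.snd ℝ V (degreeBox M) ∘ₗ Φ.ker.subtype
  have hker (x : Φ.ker) : f * (x : V × degreeBox M).1 + g * (x : V × degreeBox M).2 = 0 := x.2
  have hinj : Function.Injective π := by
    rw [injective_iff_map_eq_zero]
    rintro ⟨⟨a, b⟩, hx⟩ (hb : (b : MvPolynomial σ ℝ) = 0)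
    have ha : f * (a : MvPolynomial σ ℝ) = 0 := by simpa [hb] using hker ⟨⟨a, b⟩, hx⟩
    ext <;> simp_all [hf.ne_zero]
  have hrange : π.range ≤ (degreeBox N).map (LinearMap.mulLeft ℝ f) := by
    rintro _ ⟨⟨⟨a, b⟩, hx⟩, rfl⟩
    have hdvd : f ∣ g * b := ⟨-a, by linear_combination hker ⟨⟨a, b⟩, hx⟩⟩
    obtain ⟨c, hc⟩ := (hf.prime.dvd_or_dvd hdvd).resolve_left hfg
    refine ⟨c, mem_degreeBox.2 fun i => ?_, hc.symm⟩
    rcases eq_or_ne c 0 with rfl | hc0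
    · simp
    · have hdeg := mem_degreeBox.1 b.2 i
      rw [hc, degreeOf_mul_eq hf.ne_zero hc0, hM i] at hdeg
      lia
  have hle := (Submodule.finrank_mono hrange).trans (Submodule.finrank_map_le _ _)
  rw [LinearMap.finrank_range_of_inj hinj] at hle
  have hrank := LinearMap.finrank_range_add_finrank_ker Φ
  rw [Module.finrank_prod] at hrank
  lia

end DegreeBox

section Bezout

variable {σ : Type*} {f g : MvPolynomial σ ℝ}

lemma range_combination_le_degreeBox {M : ℕ} (hfM : ∀ i, f.degreeOf i ≤ M)
    (hgM : ∀ i, g.degreeOf i ≤ M) :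
    (combination f g (degreeBox fun i => M - f.degreeOf i)
      (degreeBox fun i => M - g.degreeOf i)).range ≤ degreeBox fun _ => M := by
  rintro _ ⟨⟨a, b⟩, rfl⟩
  rw [combination_apply]
  refine Submodule.add_mem _ (mem_degreeBox.2 fun i => ?_) (mem_degreeBox.2 fun i => ?_)
  · have := mem_degreeBox.1 a.2 i
    exact (degreeOf_mul_le i f _).trans (by grind)
  · have := mem_degreeBox.1 b.2 i
    exact (degreeOf_mul_le i g _).trans (by grind)

lemma card_add_prod_add_prod_le [Fintype σ] (hf : Irreducible f) (hfg : ¬f ∣ g)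
    {L : Finset (Set (σ → ℝ))}
    (hL : ∀ ℓ ∈ L, IsLine ℓ ∧ VanishesOn f ℓ ∧ VanishesOn g ℓ) {M n : ℕ} (hM : L.card + n ≤ M)
    (hdeg : ∀ i, f.degreeOf i + g.degreeOf i ≤ M) :
    L.card * n + (∏ i, (M - f.degreeOf i + 1) + ∏ i, (M - g.degreeOf i + 1)) ≤
      (M + 1) ^ Fintype.card σ + ∏ i, (M - f.degreeOf i - g.degreeOf i + 1) := by
  classical
  obtain ⟨S, hS⟩ := exists_isSample (fun ℓ hℓ => (hL ℓ hℓ).1) n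
  have hrange := finrank_add_finrank_le_range_combination hf hfg
    (degreeBox fun i => M - f.degreeOf i) (M := fun i => M - g.degreeOf i)
    (N := fun i => M - f.degreeOf i - g.degreeOf i) fun i => by grind
  have hpoints := finrank_add_card_le_of_separating (ι := L.biUnion S)
    (φ := fun x => (aeval (x : σ → ℝ)).toLinearMap)
    (range_combination_le_degreeBox (f := f) (g := g) (M := M) (by grind) (by grind))
    (fun ⟨x, hx⟩ => by
      obtain ⟨ℓ, hℓ, hxℓ⟩ := Finset.mem_biUnion.1 hx
      have hxℓ := ((hS ℓ hℓ).2 x hxℓ).1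
      rintro _ ⟨⟨a, b⟩, rfl⟩
      simp [combination_apply, aeval_eq_eval, (hL ℓ hℓ).2.1 x hxℓ, (hL ℓ hℓ).2.2 x hxℓ])
    (fun ⟨x, hx⟩ => by
      obtain ⟨ℓ, hℓ, hxℓ⟩ := Finset.mem_biUnion.1 hx
      obtain ⟨F, hFdeg, hFx, hF⟩ := hS.exists_separating (fun ℓ hℓ => (hL ℓ hℓ).1) hℓ hxℓ
      refine ⟨F, mem_degreeBox.2 fun i => ?_, by simpa [aeval_eq_eval] using hFx, ?_⟩
      · exact (degreeOf_le_totalDegree F i).trans (hFdeg.trans hM)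
      · rintro ⟨y, hy⟩ hyx
        obtain ⟨ℓ', hℓ', hyℓ'⟩ := Finset.mem_biUnion.1 hy
        simpa [aeval_eq_eval] using hF ℓ' hℓ' y hyℓ' fun h => hyx (Subtype.ext h))
  rw [Fintype.card_coe, hS.card_biUnion] at hpoints
  simp only [finrank_degreeBox, Finset.prod_const, Finset.card_univ] at hpoints hrange
  lia

lemma box_mixed_difference_le {x D E : ℤ} {d e : Fin 3 → ℤ} (hx : 0 ≤ x) (hd : ∀ i, 0 ≤ d i)
    (he : ∀ i, 0 ≤ e i) (hdD : ∀ i, d i ≤ D) (heE : ∀ i, e i ≤ E) :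
    x ^ 3 + ∏ i, (x - d i - e i) - ∏ i, (x - d i) - ∏ i, (x - e i) ≤ 6 * D * E * x := by
  have hprod (i j : Fin 3) : d i * e j ≤ D * E :=
    mul_le_mul (hdD i) (heE j) (he j) ((hd i).trans (hdD i))
  have hcubic : 0 ≤ d 0 * d 1 * e 2 + d 0 * e 1 * d 2 + e 0 * d 1 * d 2 + d 0 * e 1 * e 2 +
      e 0 * d 1 * e 2 + e 0 * e 1 * d 2 := by
    have := hd 0; have := hd 1; have := hd 2; have := he 0; have := he 1; have := he 2
    positivity
  have hquadratic : d 0 * e 1 + d 0 * e 2 + d 1 * e 0 + d 1 * e 2 + d 2 * e 0 + d 2 * e 1 ≤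
      6 * (D * E) := by
    linarith [hprod 0 1, hprod 0 2, hprod 1 0, hprod 1 2, hprod 2 0, hprod 2 1]
  simp only [Fin.prod_univ_three]
  linear_combination x * hquadratic + hcubic

lemma card_mul_le_of_not_dvd {f g : MvPolynomial (Fin 3) ℝ} (hf : Irreducible f) (hfg : ¬f ∣ g)
    {L : Finset (Set (Fin 3 → ℝ))} (hL : ∀ ℓ ∈ L, IsLine ℓ ∧ VanishesOn f ℓ ∧ VanishesOn g ℓ)
    {n : ℕ} (hn : f.totalDegree + g.totalDegree ≤ n) :
    L.card * n ≤ 6 * f.totalDegree * g.totalDegree * (L.card + n + 1) := by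
  set x := L.card + n + 1
  have hfd (i : Fin 3) : f.degreeOf i ≤ f.totalDegree := degreeOf_le_totalDegree f i
  have hgd (i : Fin 3) : g.degreeOf i ≤ g.totalDegree := degreeOf_le_totalDegree g i
  have hcount := card_add_prod_add_prod_le hf hfg hL (n := n) le_rfl fun i => by grind
  have hbox := box_mixed_difference_le (x := x) (D := f.totalDegree) (E := g.totalDegree)
    (d := fun i => f.degreeOf i) (e := fun i => g.degreeOf i) (by positivity)
    (fun i => by positivity) (fun i => by positivity) (by exact_mod_cast hfd)
    (by exact_mod_cast hgd)
  have hf (i : Fin 3) : (x - f.degreeOf i : ℤ) = (L.card + n - f.degreeOf i + 1 : ℕ) := by grind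
  have hg (i : Fin 3) : (x - g.degreeOf i : ℤ) = (L.card + n - g.degreeOf i + 1 : ℕ) := by grind
  have hfg (i : Fin 3) : (x - f.degreeOf i - g.degreeOf i : ℤ) =
      (L.card + n - f.degreeOf i - g.degreeOf i + 1 : ℕ) := by grind
  simp_rw [hfg, hf, hg, ← Nat.cast_prod] at hbox
  rw [Fintype.card_fin] at hcount
  have hcount : ((_ : ℕ) : ℤ) ≤ (_ : ℕ) := Nat.cast_le.2 hcount
  rw [← Nat.cast_le (α := ℤ)]
  simp only [Nat.cast_add, Nat.cast_mul, Nat.cast_pow] at hcount ⊢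
  grind

theorem card_lines_le_of_not_dvd {f g : MvPolynomial (Fin 3) ℝ} (hf : Irreducible f)
    (hfg : ¬f ∣ g) {L : Finset (Set (Fin 3 → ℝ))}
    (hL : ∀ ℓ ∈ L, IsLine ℓ ∧ VanishesOn f ℓ ∧ VanishesOn g ℓ) :
    L.card ≤ 6 * f.totalDegree * g.totalDegree := by
  set n := 6 * f.totalDegree * g.totalDegree * (L.card + 1) + f.totalDegree + g.totalDegree + 1
    with hn
  have hcount := card_mul_le_of_not_dvd hf hfg hL (n := n) (by lia)
  by_contra! hcon
  have hgap := Nat.mul_le_mul_right n hcon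
  linarith only [hgap, hcount, hn]

end Bezout

section Derivative

variable {σ : Type*} {f g : MvPolynomial σ ℝ} {p w : σ → ℝ}

/-- The formal directional derivative of a polynomial in the constant direction `u`. -/
def dirDeriv (u : σ → ℝ) : Derivation ℝ (MvPolynomial σ ℝ) (MvPolynomial σ ℝ) :=
  mkDerivation ℝ fun i => C (u i)

lemma dirDeriv_X (u : σ → ℝ) (i : σ) : dirDeriv u (X i) = C (u i) := mkDerivation_X _ _ _

lemma dirDeriv_zero (f : MvPolynomial σ ℝ) : dirDeriv 0 f = 0 :=
  DFunLike.congr_fun (derivation_ext fun i => by simp [dirDeriv_X] : dirDeriv 0 = 0) f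

lemma dirDeriv_add (u v : σ → ℝ) (f : MvPolynomial σ ℝ) :
    dirDeriv (u + v) f = dirDeriv u f + dirDeriv v f := by
  have h : dirDeriv (u + v) = dirDeriv u + dirDeriv v :=
    derivation_ext fun i => by simp [dirDeriv_X]
  rw [h, Derivation.add_apply]

lemma dirDeriv_smul (a : ℝ) (u : σ → ℝ) (f : MvPolynomial σ ℝ) :
    dirDeriv (a • u) f = C a * dirDeriv u f := by
  have h : dirDeriv (a • u) = a • dirDeriv u :=
    derivation_ext fun i => by simp [dirDeriv_X, smul_eq_C_mul]
  rw [h, Derivation.smul_apply, smul_eq_C_mul]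

lemma dirDeriv_comm (u v : σ → ℝ) (f : MvPolynomial σ ℝ) :
    dirDeriv u (dirDeriv v f) = dirDeriv v (dirDeriv u f) := by
  have h : ⁅dirDeriv u, dirDeriv v⁆ = 0 :=
    derivation_ext fun i => by simp [Derivation.commutator_apply, dirDeriv_X]
  have hf := DFunLike.congr_fun h f
  rwa [Derivation.commutator_apply, Derivation.zero_apply, sub_eq_zero] at hf

lemma dirDeriv_C_mul (u : σ → ℝ) (a : ℝ) (f : MvPolynomial σ ℝ) :
    dirDeriv u (C a * f) = C a * dirDeriv u f := by
  simp [Derivation.leibniz]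

lemma dirDeriv_eq_sum [Fintype σ] (u : σ → ℝ) (f : MvPolynomial σ ℝ) :
    dirDeriv u f = ∑ i, C (u i) * pderiv i f := by
  classical
  have h : dirDeriv u = ∑ i, u i • pderiv i := derivation_ext fun j => by
    change _ = Derivation.coeFnAddMonoidHom (∑ i, u i • pderiv i) (X j)
    simp [dirDeriv_X, smul_eq_C_mul, pderiv_X, Pi.single_apply]
  rw [h]
  change Derivation.coeFnAddMonoidHom (∑ i, u i • pderiv i) f = _
  simp [smul_eq_C_mul]

lemma totalDegree_pderiv_le (i : σ) (f : MvPolynomial σ ℝ) :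
    (pderiv i f).totalDegree ≤ f.totalDegree - 1 := by
  refine Finset.sup_le fun m hm => ?_
  rw [mem_support_iff, coeff_pderiv] at hm
  have h := le_totalDegree (p := f) (mem_support_iff.2 (left_ne_zero_of_mul hm))
  rw [Finsupp.sum_add_index' (by simp) (by simp), Finsupp.sum_single_index rfl] at h
  lia

lemma totalDegree_dirDeriv_le [Finite σ] (u : σ → ℝ) (f : MvPolynomial σ ℝ) :
    (dirDeriv u f).totalDegree ≤ f.totalDegree - 1 := by
  have := Fintype.ofFinite σ
  rw [dirDeriv_eq_sum]
  refine totalDegree_finsetSum_le fun i _ => (totalDegree_mul _ _).trans ?_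
  rw [totalDegree_C, zero_add]
  exact totalDegree_pderiv_le i f

lemma not_dvd_of_totalDegree_lt (hg : g ≠ 0) (h : g.totalDegree < f.totalDegree) : ¬f ∣ g :=
  fun hfg => h.not_ge (totalDegree_le_of_dvd_of_isDomain hfg hg)

lemma totalDegree_pos_of_irreducible (hf : Irreducible f) : 0 < f.totalDegree := by
  by_contra! h
  rw [nonpos_iff_eq_zero, totalDegree_eq_zero_iff_eq_C] at h
  have hcoeff : coeff 0 f ≠ 0 := fun h0 => hf.ne_zero (by rw [h, h0, C_0])
  exact hf.not_isUnit (h ▸ (isUnit_iff_ne_zero.2 hcoeff).map C)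

lemma totalDegree_eq_zero_of_pderiv_eq_zero (h : ∀ i, pderiv i f = 0) : f.totalDegree = 0 := by
  refine (totalDegree_eq_zero_iff _ f).2 fun m hm i => ?_
  by_contra hi
  have hcoeff := coeff_pderiv (i := i) f (m - Finsupp.single i 1)
  rw [h i, coeff_zero, tsub_add_cancel_of_le (Finsupp.single_le_iff.2 (by lia))] at hcoeff
  exact mem_support_iff.1 hm <|
    (mul_eq_zero.1 hcoeff.symm).resolve_right (Nat.cast_add_one_ne_zero _)

lemma exists_pderiv_ne_zero_of_irreducible (hf : Irreducible f) : ∃ i, pderiv i f ≠ 0 := by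
  by_contra! h
  exact (totalDegree_pos_of_irreducible hf).ne' (totalDegree_eq_zero_of_pderiv_eq_zero h)

lemma derivative_restrict (p w : σ → ℝ) (f : MvPolynomial σ ℝ) :
    (restrict p w f).derivative = restrict p w (dirDeriv w f) := by
  induction f using MvPolynomial.induction_on with
  | C a => simp [restrict]
  | add f g hf hg => simp [hf, hg]
  | mul_X f i hf =>
    have hX : (restrict p w (X i)).derivative = restrict p w (C (w i)) := by simp [restrict]
    rw [Derivation.leibniz, map_mul, Polynomial.derivative_mul, hf, hX, dirDeriv_X, smul_eq_mul,
      smul_eq_mul, map_add, map_mul, map_mul]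
    ring

lemma iterate_derivative_restrict (p w : σ → ℝ) (f : MvPolynomial σ ℝ) (k : ℕ) :
    Polynomial.derivative^[k] (restrict p w f) = restrict p w ((dirDeriv w)^[k] f) := by
  induction k with
  | zero => rfl
  | succ k ih => simp only [Function.iterate_succ_apply', ih, derivative_restrict]

lemma eval_eq_eval_zero_restrict (p w : σ → ℝ) (f : MvPolynomial σ ℝ) :
    eval p f = (restrict p w f).eval 0 := by
  rw [eval_restrict, zero_smul, add_zero]

lemma restrict_dirDeriv_eq_zero (h : restrict p w f = 0) : restrict p w (dirDeriv w f) = 0 := by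
  rw [← derivative_restrict, h, Polynomial.derivative_zero]

lemma eval_eq_zero_of_restrict_eq_zero (h : restrict p w f = 0) : eval p f = 0 := by
  rw [eval_eq_eval_zero_restrict p w, h, Polynomial.eval_zero]

end Derivative

theorem restrict_eq_zero_of_linear_ode {σ : Type*} {f G : MvPolynomial σ ℝ} {p w : σ → ℝ} {k : ℕ}
    {A : ℕ → MvPolynomial σ ℝ} (hG : eval p G ≠ 0)
    (hode : G * (dirDeriv w)^[k] f = ∑ j ∈ Finset.range k, A j * (dirDeriv w)^[j] f)
    (h0 : ∀ j < k, eval p ((dirDeriv w)^[j] f) = 0) : restrict p w f = 0 := by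
  simp only [eval_eq_eval_zero_restrict p w, ← iterate_derivative_restrict] at hG h0
  refine eq_zero_of_linear_ode (A := fun j => restrict p w (A j)) ?_ hG h0
  simp only [iterate_derivative_restrict, ← map_mul, ← map_sum, hode]

section Ruled

open Filter Topology

lemma dvd_of_infinite_lines {f g : MvPolynomial (Fin 3) ℝ} (hf : Irreducible f)
    {S : Set (Set (Fin 3 → ℝ))} (hS : S.Infinite)
    (h : ∀ ℓ ∈ S, IsLine ℓ ∧ VanishesOn f ℓ ∧ VanishesOn g ℓ) : f ∣ g := by
  by_contra hfg
  obtain ⟨L, hLS, hL⟩ := hS.exists_subset_card_eq (6 * f.totalDegree * g.totalDegree + 1)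
  have := card_lines_le_of_not_dvd hf hfg fun ℓ hℓ => h ℓ (hLS hℓ)
  lia

section Interpolation

lemma exists_eval_eq_zero_of_card_lt {σ ι : Type*} [Fintype ι] {M : Finset (σ →₀ ℕ)}
    (hM : Fintype.card ι < M.card) (P : ι → σ → ℝ) :
    ∃ q ∈ restrictSupport ℝ (M : Set (σ →₀ ℕ)), q ≠ 0 ∧ ∀ j, eval (P j) q = 0 := by
  let basis := basisRestrictSupport ℝ (M : Set (σ →₀ ℕ))
  have := Module.Finite.of_basis basis
  let evals : restrictSupport ℝ (M : Set (σ →₀ ℕ)) →ₗ[ℝ] ι → ℝ :=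
    LinearMap.pi fun j => (aeval (P j)).toLinearMap ∘ₗ Submodule.subtype _
  have hker : evals.ker ≠ ⊥ := LinearMap.ker_ne_bot_of_finrank_lt <| by
    simpa [Module.finrank_eq_card_basis basis] using hM
  obtain ⟨q, hq, hq0⟩ := (Submodule.ne_bot_iff _).1 hker
  refine ⟨q, q.2, by simpa using hq0, fun j => ?_⟩
  simpa [evals, aeval_eq_eval] using congrFun (LinearMap.mem_ker.1 hq) j

lemma exists_quadric_through {ι : Type*} [Fintype ι] (hι : Fintype.card ι < 10)
    (P : ι → Fin 3 → ℝ) :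
    ∃ q : MvPolynomial (Fin 3) ℝ, q ≠ 0 ∧ q.totalDegree ≤ 2 ∧ ∀ j, eval (P j) q = 0 := by
  classical
  let M : Finset (Fin 3 →₀ ℕ) := (Finset.range 3).biUnion (Finset.finsuppAntidiag Finset.univ)
  have hM : M.card = 10 := by
    rw [Finset.card_biUnion]
    · simp [Finset.card_finsuppAntidiag_nat_eq_choose, Finset.sum_range_succ, Nat.choose]
    · intro i _ j _ hij
      exact Finset.disjoint_left.2 fun m hi hj => hij <|
        (Finset.mem_finsuppAntidiag.1 hi).1.symm.trans (Finset.mem_finsuppAntidiag.1 hj).1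
  obtain ⟨q, hqM, hq0, hq⟩ := exists_eval_eq_zero_of_card_lt (hM.symm ▸ hι) P
  refine ⟨q, hq0, Finset.sup_le fun m hm => ?_, hq⟩
  obtain ⟨i, hi, hm⟩ := Finset.mem_biUnion.1 (hqM hm)
  rw [Finsupp.sum_fintype _ _ fun _ => rfl, (Finset.mem_finsuppAntidiag.1 hm).1]
  exact Nat.lt_succ_iff.1 (Finset.mem_range.1 hi)

end Interpolation

section Line

variable {σ : Type*} {f : MvPolynomial σ ℝ} {p w : σ → ℝ}

lemma restrict_eq_zero_of_card_lt {ι : Type*} [Fintype ι] (hι : f.totalDegree < Fintype.card ι)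
    {t : ι → ℝ} (ht : Function.Injective t) (h : ∀ i, eval (p + t i • w) f = 0) :
    restrict p w f = 0 :=
  Polynomial.eq_zero_of_natDegree_lt_card_of_eval_eq_zero _ ht
    (fun i => (eval_restrict p w f (t i)).trans (h i)) ((natDegree_restrict_le p w f).trans_lt hι)

lemma restrict_eq_zero_iff : restrict p w f = 0 ↔ ∀ t : ℝ, eval (p + t • w) f = 0 := by
  rw [← vanishesOn_range_iff]
  exact Set.forall_mem_range

lemma restrict_add_smul_eq_zero (h : restrict p w f = 0) (s : ℝ) :
    restrict (p + s • w) w f = 0 := by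
  rw [restrict_eq_zero_iff] at h ⊢
  intro t
  rw [add_assoc, ← add_smul]
  exact h (s + t)

lemma eval_dirDeriv_dirDeriv_add (p u v w : σ → ℝ) (f : MvPolynomial σ ℝ) :
    eval p (dirDeriv (u + v + w) (dirDeriv (u + v + w) f)) =
      eval p (dirDeriv u (dirDeriv u f)) + eval p (dirDeriv v (dirDeriv v f)) +
        eval p (dirDeriv w (dirDeriv w f)) + 2 * (eval p (dirDeriv u (dirDeriv v f)) +
          eval p (dirDeriv u (dirDeriv w f)) + eval p (dirDeriv v (dirDeriv w f))) := by
  simp only [dirDeriv_add, map_add]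
  rw [dirDeriv_comm v u, dirDeriv_comm w u, dirDeriv_comm w v]
  ring

-- On a neighbourhood where `∂f/∂v ≠ 0`, Rolle's theorem makes the surface a graph over `v`.
lemma exists_nhds_graph [Finite σ] {v : σ → ℝ} (hv : eval p (dirDeriv v f) ≠ 0) :
    ∃ U ∈ 𝓝 p, ∀ (x : σ → ℝ) (c c' : ℝ), x + c • v ∈ U → x + c' • v ∈ U →
      eval (x + c • v) f = 0 → eval (x + c' • v) f = 0 → c = c' := by
  have := Fintype.ofFinite σ
  obtain ⟨ε, hε, hU⟩ := Metric.eventually_nhds_iff_ball.1 <|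
    (continuous_eval (dirDeriv v f)).continuousAt.eventually_ne hv
  refine ⟨_, Metric.ball_mem_nhds p hε, fun x c c' hc hc' h h' => ?_⟩
  by_contra hne
  wlog hlt : c < c' generalizing c c'
  · exact this c' c hc' hc h' h (Ne.symm hne) ((lt_or_gt_of_ne hne).resolve_left hlt)
  obtain ⟨z, hz, hz0⟩ := exists_deriv_eq_zero hlt (f := fun t => (restrict x v f).eval t)
    (Polynomial.continuous _).continuousOn (by simp only [eval_restrict, h, h'])
  rw [Polynomial.deriv, derivative_restrict, eval_restrict] at hz0
  refine hU _ ?_ hz0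
  have hline : ⇑(AffineMap.lineMap (k := ℝ) x (x + v)) = fun t : ℝ => x + t • v := by
    ext t
    simp [AffineMap.lineMap_apply, add_comm]
  have hconvex := (convex_ball p ε).affine_preimage (AffineMap.lineMap (k := ℝ) x (x + v))
  rw [hline] at hconvex
  exact hconvex.ordConnected.out hc hc' ⟨hz.1.le, hz.2.le⟩

end Line

section Ruling

variable {σ : Type*} {f h : MvPolynomial σ ℝ} {p w₁ w₂ v : σ → ℝ} {a c a' c' : ℝ → ℝ}

/-- Every direction in which the surface `f = 0` has contact of order at least three at a point off
`h = 0` spans a line contained in the surface. -/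
def ContainsAsymptoticLines (f h : MvPolynomial σ ℝ) : Prop :=
  ∀ p w : σ → ℝ, eval p f = 0 → eval p h ≠ 0 → eval p (dirDeriv w f) = 0 →
    eval p (dirDeriv w (dirDeriv w f)) = 0 → restrict p w f = 0

/-- A germ at `s = 0` of a family of lines contained in the surface `f = 0`: the line of parameter
`s` passes through `p + s • w₁`, in the direction `a s • w₁ + w₂ + c s • v` close to `w₂`. -/
structure IsRuling (f : MvPolynomial σ ℝ) (p w₁ w₂ v : σ → ℝ) (a c : ℝ → ℝ) : Prop where
  tendsto_left : Tendsto a (𝓝 0) (𝓝 0)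
  tendsto_right : Tendsto c (𝓝 0) (𝓝 0)
  eventually_restrict :
    ∀ᶠ s in 𝓝 0, restrict (p + s • w₁) (a s • w₁ + w₂ + c s • v) f = 0

lemma ContainsAsymptoticLines.restrict_eq_zero (hA : ContainsAsymptoticLines f h)
    (hp : eval p h ≠ 0) (hw₁ : restrict p w₁ f = 0) {a c : ℝ}
    (hc : eval p (dirDeriv w₂ f) + c * eval p (dirDeriv v f) = 0)
    (ha : a * (2 * (eval p (dirDeriv w₁ (dirDeriv w₂ f)) +
        c * eval p (dirDeriv w₁ (dirDeriv v f)))) +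
      (eval p (dirDeriv w₂ (dirDeriv w₂ f)) + 2 * c * eval p (dirDeriv w₂ (dirDeriv v f)) +
        c ^ 2 * eval p (dirDeriv v (dirDeriv v f))) = 0) :
    restrict p (a • w₁ + w₂ + c • v) f = 0 := by
  have hw₁' := restrict_dirDeriv_eq_zero hw₁
  have h₁ := eval_eq_zero_of_restrict_eq_zero hw₁'
  have h₁₁ := eval_eq_zero_of_restrict_eq_zero (restrict_dirDeriv_eq_zero hw₁')
  refine hA p _ (eval_eq_zero_of_restrict_eq_zero hw₁) hp ?_ ?_
  · simp only [dirDeriv_add, dirDeriv_smul, map_add, map_mul, eval_C]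
    linear_combination a * h₁ + hc
  · simp only [eval_dirDeriv_dirDeriv_add, dirDeriv_smul, dirDeriv_C_mul, map_mul, eval_C]
    linear_combination a ^ 2 * h₁₁ + ha

lemma ContainsAsymptoticLines.exists_isRuling (hA : ContainsAsymptoticLines f h)
    (hp : eval p h ≠ 0) (hw₁ : restrict p w₁ f = 0) (hw₂ : restrict p w₂ f = 0)
    (hv : eval p (dirDeriv v f) ≠ 0) (h₁₂ : eval p (dirDeriv w₁ (dirDeriv w₂ f)) ≠ 0) :
    ∃ a c, IsRuling f p w₁ w₂ v a c := by
  let F (q : MvPolynomial σ ℝ) (s : ℝ) : ℝ := eval (p + s • w₁) q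
  have hF (q) : ContinuousAt (F q) 0 := ((continuous_eval q).comp (by fun_prop)).continuousAt
  have hF0 (q) : F q 0 = eval p q := by simp [F]
  have htangent := restrict_dirDeriv_eq_zero hw₂
  have h₂ := eval_eq_zero_of_restrict_eq_zero htangent
  have h₂₂ := eval_eq_zero_of_restrict_eq_zero (restrict_dirDeriv_eq_zero htangent)
  -- `a` and `c` solve the two tangency equations along the line `s ↦ p + s • w₁`.
  let c (s : ℝ) : ℝ := -F (dirDeriv w₂ f) s / F (dirDeriv v f) s
  let den (s : ℝ) : ℝ := 2 * (F (dirDeriv w₁ (dirDeriv w₂ f)) s +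
    c s * F (dirDeriv w₁ (dirDeriv v f)) s)
  let num (s : ℝ) : ℝ := F (dirDeriv w₂ (dirDeriv w₂ f)) s +
    2 * c s * F (dirDeriv w₂ (dirDeriv v f)) s + c s ^ 2 * F (dirDeriv v (dirDeriv v f)) s
  have hc0 : c 0 = 0 := by simp [c, hF0, h₂]
  have hc : ContinuousAt c 0 := (hF _).neg.div (hF _) (by rwa [hF0])
  have hden0 : den 0 ≠ 0 := by simp [den, hc0, hF0, h₁₂]
  have hden : ContinuousAt den 0 := continuousAt_const.mul ((hF _).add (hc.mul (hF _)))
  have hnum0 : num 0 = 0 := by simp [num, hc0, hF0, h₂₂]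
  have hnum : ContinuousAt num 0 :=
    ((hF _).add ((continuousAt_const.mul hc).mul (hF _))).add ((hc.pow 2).mul (hF _))
  have ha : ContinuousAt (fun s => -num s / den s) 0 := hnum.neg.div hden hden0
  refine ⟨fun s => -num s / den s, c, ⟨by simpa [hnum0] using ha.tendsto,
    by simpa [hc0] using hc.tendsto, ?_⟩⟩
  filter_upwards [(hF h).eventually_ne (by rwa [hF0]), (hF (dirDeriv v f)).eventually_ne
    (by rwa [hF0]), hden.eventually_ne hden0] with s hhs hvs hdens
  refine hA.restrict_eq_zero hhs (restrict_add_smul_eq_zero hw₁ s) ?_ ?_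
  · change F _ s + c s * F _ s = 0
    rw [div_mul_cancel₀ _ hvs, add_neg_cancel]
  · change -num s / den s * den s + num s = 0
    rw [div_mul_cancel₀ _ hdens, neg_add_cancel]

/-- The parameter, on the line of parameter `s` of the ruling `(a, c)` along `w₁`, of the point with
the same projection along `v` as a point of the line of parameter `r` of a ruling `(a', c')` along
`w₂`. -/
def meetingParameter (a a' : ℝ → ℝ) (r s : ℝ) : ℝ := (r + s * a' r) / (1 - a s * a' r)

lemma meetingParameter_eq {r s : ℝ} (h : 1 - a s * a' r ≠ 0) :
    meetingParameter a a' r s = r + (s + meetingParameter a a' r s * a s) * a' r := by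
  have hmul : meetingParameter a a' r s * (1 - a s * a' r) = r + s * a' r := div_mul_cancel₀ _ h
  linear_combination hmul

lemma tendsto_meetingParameter (ha : Tendsto a (𝓝 0) (𝓝 0)) (ha' : Tendsto a' (𝓝 0) (𝓝 0)) :
    Tendsto (fun x : ℝ × ℝ => meetingParameter a a' x.1 x.2) (𝓝 0 ×ˢ 𝓝 0) (𝓝 0) := by
  have hnum : Tendsto (fun x : ℝ × ℝ => x.1 + x.2 * a' x.1) (𝓝 0 ×ˢ 𝓝 0) (𝓝 (0 + 0 * 0)) :=
    tendsto_fst.add (tendsto_snd.mul (ha'.comp tendsto_fst))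
  have hden : Tendsto (fun x : ℝ × ℝ => 1 - a x.2 * a' x.1) (𝓝 0 ×ˢ 𝓝 0) (𝓝 (1 - 0 * 0)) :=
    ((ha.comp tendsto_snd).mul (ha'.comp tendsto_fst)).const_sub 1
  have h := hnum.div hden (by simp)
  simp only [mul_zero, add_zero, zero_div] at h
  exact h

lemma tendsto_meetingParameter_right (ha : Tendsto a (𝓝 0) (𝓝 0)) (r : ℝ) :
    Tendsto (meetingParameter a a' r) (𝓝 0) (𝓝 r) := by
  have hnum : Tendsto (fun s => r + s * a' r) (𝓝 0) (𝓝 (r + 0 * a' r)) :=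
    (tendsto_id.mul_const (a' r)).const_add r
  have h := hnum.div ((ha.mul_const (a' r)).const_sub 1) (by simp)
  simp only [zero_mul, add_zero, sub_zero, div_one] at h
  exact h

lemma IsRuling.eventually_meet [Finite σ] (hR : IsRuling f p w₁ w₂ v a c)
    (hR' : IsRuling f p w₂ w₁ v a' c') (hv : eval p (dirDeriv v f) ≠ 0) :
    ∀ᶠ r in 𝓝 (0 : ℝ), ∀ᶠ s in 𝓝 (0 : ℝ), ∃ u : ℝ,
      p + s • w₁ + meetingParameter a a' r s • (a s • w₁ + w₂ + c s • v) =
        p + r • w₂ + u • (a' r • w₂ + w₁ + c' r • v) := by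
  obtain ⟨U, hU, hgraph⟩ := exists_nhds_graph hv
  let T (x : ℝ × ℝ) : ℝ := meetingParameter a a' x.1 x.2
  let u (x : ℝ × ℝ) : ℝ := x.2 + T x * a x.2
  let base (x : ℝ × ℝ) : σ → ℝ := p + u x • w₁ + T x • w₂
  have hT : Tendsto T (𝓝 0 ×ˢ 𝓝 0) (𝓝 0) :=
    tendsto_meetingParameter hR.tendsto_left hR'.tendsto_left
  have hu : Tendsto u (𝓝 0 ×ˢ 𝓝 0) (𝓝 0) := by
    simpa using tendsto_snd.add (hT.mul (hR.tendsto_left.comp tendsto_snd))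
  have hbase {k : ℝ × ℝ → ℝ} (hk : Tendsto k (𝓝 0 ×ˢ 𝓝 0) (𝓝 0)) :
      ∀ᶠ x in 𝓝 0 ×ˢ 𝓝 0, base x + k x • v ∈ U := by
    have h := ((hu.smul_const w₁).const_add p).add (hT.smul_const w₂) |>.add (hk.smul_const v)
    simp only [zero_smul, add_zero] at h
    exact h hU
  have hc := hbase (by simpa using hT.mul (hR.tendsto_right.comp tendsto_snd))
  have hc' := hbase (by simpa using hu.mul (hR'.tendsto_right.comp tendsto_fst))
  have hden : ∀ᶠ x : ℝ × ℝ in 𝓝 0 ×ˢ 𝓝 0, 1 - a x.2 * a' x.1 ≠ 0 :=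
    (((hR.tendsto_left.comp tendsto_snd).mul (hR'.tendsto_left.comp tendsto_fst)).const_sub
      1).eventually_ne (by simp)
  refine Eventually.curry (p := fun x : ℝ × ℝ => ∃ u : ℝ,
    p + x.2 • w₁ + T x • (a x.2 • w₁ + w₂ + c x.2 • v) =
      p + x.1 • w₂ + u • (a' x.1 • w₂ + w₁ + c' x.1 • v)) ?_
  filter_upwards [hc, hc', hden, hR.eventually_restrict.prod_inr (𝓝 0),
    hR'.eventually_restrict.prod_inl (𝓝 0)] with ⟨r, s⟩ hc hc' hden hℓ hm
  have hTu : T (r, s) = r + u (r, s) * a' r := meetingParameter_eq hden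
  have hpt : p + s • w₁ + T (r, s) • (a s • w₁ + w₂ + c s • v) =
      base (r, s) + (T (r, s) * c s) • v := by
    simp only [base, u]
    module
  have hpt' : p + r • w₂ + u (r, s) • (a' r • w₂ + w₁ + c' r • v) =
      base (r, s) + (u (r, s) * c' r) • v := by
    simp only [base, hTu]
    module
  refine ⟨u (r, s), hpt.trans <| .trans ?_ hpt'.symm⟩
  rw [restrict_eq_zero_iff] at hℓ hm
  rw [hgraph _ _ _ hc hc' (hpt ▸ hℓ (T (r, s))) (hpt' ▸ hm (u (r, s)))]

lemma eventually_restrict_eq_zero_of_meet {q : MvPolynomial σ ℝ} {n : ℕ} {r : Fin n → ℝ}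
    (ha : Tendsto a (𝓝 0) (𝓝 0)) (hr : Function.Injective r) (hn : q.totalDegree < n)
    (hq : ∀ j, restrict (p + r j • w₂) (a' (r j) • w₂ + w₁ + c' (r j) • v) q = 0)
    (hmeet : ∀ j, ∀ᶠ s in 𝓝 (0 : ℝ), ∃ u : ℝ,
      p + s • w₁ + meetingParameter a a' (r j) s • (a s • w₁ + w₂ + c s • v) =
        p + r j • w₂ + u • (a' (r j) • w₂ + w₁ + c' (r j) • v)) :
    ∀ᶠ s in 𝓝 0, restrict (p + s • w₁) (a s • w₁ + w₂ + c s • v) q = 0 := by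
  have hne (i j : Fin n) (hij : i ≠ j) :
      ∀ᶠ s in 𝓝 0, meetingParameter a a' (r i) s ≠ meetingParameter a a' (r j) s :=
    (((tendsto_meetingParameter_right ha (r i)).sub
      (tendsto_meetingParameter_right ha (r j))).eventually_ne
      (sub_ne_zero.2 (hr.ne hij))).mono fun _ => sub_ne_zero.1
  filter_upwards [eventually_all.2 hmeet, eventually_all.2 fun i => eventually_all.2 fun j =>
    eventually_all.2 (hne i j)] with s hs hinj
  refine restrict_eq_zero_of_card_lt (t := fun j => meetingParameter a a' (r j) s) (by simpa)
    (fun i j hij => by_contra fun h => hinj i j h hij) fun j => ?_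
  obtain ⟨u, hu⟩ := hs j
  exact hu ▸ restrict_eq_zero_iff.1 (hq j) u

lemma coeff_eq_zero_of_linearIndependent_triple (hw : LinearIndependent ℝ ![w₁, w₂, v])
    {x y z : ℝ} (h : x • w₁ + y • w₂ + z • v = 0) : x = 0 ∧ y = 0 ∧ z = 0 := by
  have h0 := Fintype.linearIndependent_iff.1 hw ![x, y, z] (by simpa [Fin.sum_univ_three] using h)
  exact ⟨h0 0, h0 1, h0 2⟩

lemma ruling_direction_ne_zero (hw : LinearIndependent ℝ ![w₁, w₂, v]) (x z : ℝ) :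
    x • w₁ + w₂ + z • v ≠ 0 := fun h =>
  one_ne_zero (coeff_eq_zero_of_linearIndependent_triple hw (y := (1 : ℝ)) (by simpa using h)).2.1

lemma injective_ruling_line (hw : LinearIndependent ℝ ![w₁, w₂, v]) (p : σ → ℝ) (a c : ℝ → ℝ) :
    Function.Injective fun s : ℝ =>
      Set.range fun t : ℝ => p + s • w₁ + t • (a s • w₁ + w₂ + c s • v) := by
  intro s s' hss'
  obtain ⟨t, ht⟩ : p + s' • w₁ ∈
      Set.range fun t : ℝ => p + s • w₁ + t • (a s • w₁ + w₂ + c s • v) :=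
    (Set.ext_iff.1 hss' _).2 ⟨0, by simp⟩
  have h0 : (s - s' + t * a s) • w₁ + t • w₂ + (t * c s) • v = 0 := by
    rw [← sub_eq_zero.2 ht]
    module
  obtain ⟨hs, rfl, -⟩ := coeff_eq_zero_of_linearIndependent_triple hw h0
  linarith

end Ruling

section Quadric

variable {f h : MvPolynomial (Fin 3) ℝ} {p w₁ w₂ v : Fin 3 → ℝ} {a c a' c' : ℝ → ℝ}

lemma exists_quadric_containing_lines (x w : Fin 3 → Fin 3 → ℝ) :
    ∃ q : MvPolynomial (Fin 3) ℝ, q ≠ 0 ∧ q.totalDegree ≤ 2 ∧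
      ∀ j, restrict (x j) (w j) q = 0 := by
  obtain ⟨q, hq0, hq2, hq⟩ := exists_quadric_through (ι := Fin 3 × Fin 3) (by simp)
    fun k => x k.1 + (k.2 : ℝ) • w k.1
  refine ⟨q, hq0, hq2, fun j => restrict_eq_zero_of_card_lt (t := fun i : Fin 3 => (i : ℝ))
    (by simpa [Nat.lt_succ_iff]) (fun i i' h => Fin.ext (Nat.cast_injective h))
    fun i => hq (j, i)⟩

-- A quadric through three lines of one ruling contains the lines of the other one.
lemma IsRuling.totalDegree_le_two (hf : Irreducible f) (hR : IsRuling f p w₁ w₂ v a c)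
    (hR' : IsRuling f p w₂ w₁ v a' c') (hv : eval p (dirDeriv v f) ≠ 0)
    (hw : LinearIndependent ℝ ![w₁, w₂, v]) : f.totalDegree ≤ 2 := by
  have hinf := infinite_of_mem_nhds (0 : ℝ) (hR.eventually_meet hR' hv)
  let r (j : Fin 3) : ℝ := hinf.natEmbedding _ j
  have hr : Function.Injective r :=
    Subtype.val_injective.comp ((hinf.natEmbedding _).injective.comp Fin.val_injective)
  have hmeet (j : Fin 3) := (hinf.natEmbedding _ j).2
  obtain ⟨q, hq0, hq2, hq⟩ := exists_quadric_containing_lines (fun j => p + r j • w₂)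
    fun j => a' (r j) • w₂ + w₁ + c' (r j) • v
  have hlines := hR.eventually_restrict.and <|
    eventually_restrict_eq_zero_of_meet hR.tendsto_left hr (Nat.lt_succ_of_le hq2) hq hmeet
  have hdvd : f ∣ q := by
    refine dvd_of_infinite_lines hf ((infinite_of_mem_nhds (0 : ℝ) hlines).image
      (injective_ruling_line hw p a c).injOn) ?_
    rintro _ ⟨s, ⟨hfs, hqs⟩, rfl⟩
    exact ⟨⟨_, _, ruling_direction_ne_zero hw _ _, rfl⟩, vanishesOn_range_iff.2 hfs,
      vanishesOn_range_iff.2 hqs⟩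
  by_contra! hlt
  exact not_dvd_of_totalDegree_lt hq0 (hq2.trans_lt hlt) hdvd

theorem ContainsAsymptoticLines.totalDegree_le_two (hA : ContainsAsymptoticLines f h)
    (hf : Irreducible f) (hp : eval p h ≠ 0) (hw₁ : restrict p w₁ f = 0)
    (hw₂ : restrict p w₂ f = 0) (hv : eval p (dirDeriv v f) ≠ 0)
    (h₁₂ : eval p (dirDeriv w₁ (dirDeriv w₂ f)) ≠ 0)
    (hw : LinearIndependent ℝ ![w₁, w₂, v]) : f.totalDegree ≤ 2 := by
  obtain ⟨a, c, hR⟩ := hA.exists_isRuling hp hw₁ hw₂ hv h₁₂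
  obtain ⟨a', c', hR'⟩ := hA.exists_isRuling hp hw₂ hw₁ hv (by rwa [dirDeriv_comm])
  exact hR.totalDegree_le_two hf hR' hv hw

end Quadric

end Ruled

section Degree

variable {σ : Type*} {f g : MvPolynomial σ ℝ} {m n : ℕ}

lemma totalDegree_add_le_of_le (hf : f.totalDegree ≤ n) (hg : g.totalDegree ≤ n) :
    (f + g).totalDegree ≤ n :=
  (totalDegree_add f g).trans (max_le hf hg)

lemma totalDegree_sub_le_of_le (hf : f.totalDegree ≤ n) (hg : g.totalDegree ≤ n) :
    (f - g).totalDegree ≤ n :=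
  (totalDegree_sub f g).trans (max_le hf hg)

lemma totalDegree_mul_le_of_le (hf : f.totalDegree ≤ m) (hg : g.totalDegree ≤ n) :
    (f * g).totalDegree ≤ m + n :=
  (totalDegree_mul f g).trans (add_le_add hf hg)

lemma totalDegree_ofNat_mul_le_of_le (k : ℕ) [k.AtLeastTwo] (hf : f.totalDegree ≤ n) :
    ((ofNat(k) : MvPolynomial σ ℝ) * f).totalDegree ≤ n := by
  refine (totalDegree_mul _ f).trans ?_
  rwa [← map_ofNat C k, totalDegree_C, zero_add]

lemma totalDegree_dirDeriv_le_of_le [Finite σ] (u : σ → ℝ) (hf : f.totalDegree ≤ n) :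
    (dirDeriv u f).totalDegree ≤ n :=
  (totalDegree_dirDeriv_le u f).trans (by lia)

end Degree

section FundamentalForms

variable {σ : Type*} {f : MvPolynomial σ ℝ} {p v w w' x y : σ → ℝ} {a b c : ℝ}

/-- The Hessian of `f` applied to the vector fields `(∂f/∂v) x - (∂f/∂x) v` and
`(∂f/∂v) y - (∂f/∂y) v`, which are tangent to the level sets of `f`: a multiple of the second
fundamental form of these. -/
def secondForm (f : MvPolynomial σ ℝ) (v x y : σ → ℝ) : MvPolynomial σ ℝ :=
  dirDeriv v f ^ 2 * dirDeriv x (dirDeriv y f) -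
    dirDeriv v f * (dirDeriv x f * dirDeriv y (dirDeriv v f) +
      dirDeriv y f * dirDeriv x (dirDeriv v f)) +
    dirDeriv x f * dirDeriv y f * dirDeriv v (dirDeriv v f)

/-- The third derivative of `f` applied to the vector fields `(∂f/∂v) u - (∂f/∂u) v`, for `u` among
`x`, `y`, `z`, which are tangent to the level sets of `f`. -/
def thirdForm (f : MvPolynomial σ ℝ) (v x y z : σ → ℝ) : MvPolynomial σ ℝ :=
  dirDeriv v f ^ 3 * dirDeriv x (dirDeriv y (dirDeriv z f)) -
    dirDeriv v f ^ 2 * (dirDeriv x f * dirDeriv y (dirDeriv z (dirDeriv v f)) +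
      dirDeriv y f * dirDeriv x (dirDeriv z (dirDeriv v f)) +
      dirDeriv z f * dirDeriv x (dirDeriv y (dirDeriv v f))) +
    dirDeriv v f * (dirDeriv x f * dirDeriv y f * dirDeriv z (dirDeriv v (dirDeriv v f)) +
      dirDeriv x f * dirDeriv z f * dirDeriv y (dirDeriv v (dirDeriv v f)) +
      dirDeriv y f * dirDeriv z f * dirDeriv x (dirDeriv v (dirDeriv v f))) -
    dirDeriv x f * dirDeriv y f * dirDeriv z f * dirDeriv v (dirDeriv v (dirDeriv v f))

lemma secondForm_linearCombination (f : MvPolynomial σ ℝ) (v x y : σ → ℝ) (a b c : ℝ) :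
    secondForm f v (a • x + b • y + c • v) (a • x + b • y + c • v) =
      C a ^ 2 * secondForm f v x x + 2 * C a * C b * secondForm f v x y +
        C b ^ 2 * secondForm f v y y := by
  simp only [secondForm, dirDeriv_add, dirDeriv_smul, map_add, dirDeriv_C_mul, dirDeriv_comm y x,
    dirDeriv_comm v x, dirDeriv_comm v y]
  ring

lemma thirdForm_linearCombination (f : MvPolynomial σ ℝ) (v x y : σ → ℝ) (a b c : ℝ) :
    thirdForm f v (a • x + b • y + c • v) (a • x + b • y + c • v) (a • x + b • y + c • v) =
      C a ^ 3 * thirdForm f v x x x + 3 * C a ^ 2 * C b * thirdForm f v x x y +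
        3 * C a * C b ^ 2 * thirdForm f v x y y + C b ^ 3 * thirdForm f v y y y := by
  simp only [thirdForm, dirDeriv_add, dirDeriv_smul, map_add, dirDeriv_C_mul, dirDeriv_comm y x,
    dirDeriv_comm v x, dirDeriv_comm v y]
  ring

lemma exists_sq_mul_eq_secondForm_add (f : MvPolynomial σ ℝ) (v w : σ → ℝ) :
    ∃ U, dirDeriv v f ^ 2 * dirDeriv w (dirDeriv w f) =
      secondForm f v w w + U * dirDeriv w f := by
  refine ⟨2 * dirDeriv v f * dirDeriv w (dirDeriv v f) -
    dirDeriv w f * dirDeriv v (dirDeriv v f), ?_⟩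
  rw [secondForm]
  ring

lemma exists_cube_mul_eq_thirdForm_add (f : MvPolynomial σ ℝ) (v w : σ → ℝ) :
    ∃ U, dirDeriv v f ^ 3 * dirDeriv w (dirDeriv w (dirDeriv w f)) =
      thirdForm f v w w w + U * dirDeriv w f := by
  refine ⟨3 * dirDeriv v f ^ 2 * dirDeriv w (dirDeriv w (dirDeriv v f)) -
    3 * dirDeriv v f * dirDeriv w f * dirDeriv w (dirDeriv v (dirDeriv v f)) +
    dirDeriv w f ^ 2 * dirDeriv v (dirDeriv v (dirDeriv v f)), ?_⟩
  rw [thirdForm]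
  ring

lemma eval_secondForm_of_tangent (hw : eval p (dirDeriv w f) = 0)
    (hw' : eval p (dirDeriv w' f) = 0) :
    eval p (secondForm f v w w') =
      eval p (dirDeriv v f) ^ 2 * eval p (dirDeriv w (dirDeriv w' f)) := by
  simp [secondForm, hw, hw']

lemma eval_thirdForm_of_tangent (hw : eval p (dirDeriv w f) = 0) :
    eval p (thirdForm f v w w w) =
      eval p (dirDeriv v f) ^ 3 * eval p (dirDeriv w (dirDeriv w (dirDeriv w f))) := by
  simp [thirdForm, hw]

/-- With `w = a • x + b • y`, dividing the cubic form `thirdForm f v w w w` by the quadratic form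
`secondForm f v w w`, as polynomials in `b`, leaves the remainder
`(remainderLeading f v x y * b + remainderConst f v x y * a) * a ^ 2`, up to the factor
`secondForm f v y y ^ 2`. -/
def remainderLeading (f : MvPolynomial σ ℝ) (v x y : σ → ℝ) : MvPolynomial σ ℝ :=
  3 * (secondForm f v y y * secondForm f v y y * thirdForm f v x x y) -
    secondForm f v y y * secondForm f v x x * thirdForm f v y y y -
    6 * (secondForm f v y y * secondForm f v x y * thirdForm f v x y y) +
    4 * (secondForm f v x y * secondForm f v x y * thirdForm f v y y y)

/-- The other coefficient of the remainder described at `remainderLeading`. -/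
def remainderConst (f : MvPolynomial σ ℝ) (v x y : σ → ℝ) : MvPolynomial σ ℝ :=
  secondForm f v y y * secondForm f v y y * thirdForm f v x x x -
    3 * (secondForm f v y y * secondForm f v x x * thirdForm f v x y y) +
    2 * (secondForm f v x y * secondForm f v x x * thirdForm f v y y y)

lemma exists_sq_mul_thirdForm_eq (f : MvPolynomial σ ℝ) (v x y : σ → ℝ) (a b c : ℝ) :
    ∃ Q, secondForm f v y y ^ 2 * thirdForm f v (a • x + b • y + c • v) (a • x + b • y + c • v)
        (a • x + b • y + c • v) =
      Q * secondForm f v (a • x + b • y + c • v) (a • x + b • y + c • v) +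
        (remainderLeading f v x y * C b + remainderConst f v x y * C a) * C a ^ 2 := by
  refine ⟨secondForm f v y y * thirdForm f v y y y * C b + (3 * secondForm f v y y *
    thirdForm f v x y y - 2 * secondForm f v x y * thirdForm f v y y y) * C a, ?_⟩
  rw [secondForm_linearCombination, thirdForm_linearCombination, remainderLeading, remainderConst]
  ring

section Degree

variable [Finite σ] (f : MvPolynomial σ ℝ) (v x y z : σ → ℝ)

lemma totalDegree_secondForm_le : (secondForm f v x y).totalDegree ≤ 3 * f.totalDegree := by
  have h₁ (u) : (dirDeriv u f).totalDegree ≤ f.totalDegree :=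
    totalDegree_dirDeriv_le_of_le u le_rfl
  have h₂ (u u') := totalDegree_dirDeriv_le_of_le u (h₁ u')
  have h₁₂ (u₁ u₂ u₃) := totalDegree_mul_le_of_le (h₁ u₁) (h₂ u₂ u₃)
  have hsq := totalDegree_mul_le_of_le (h₁ v) (h₁ v)
  rw [← sq] at hsq
  have h := totalDegree_add_le_of_le (totalDegree_sub_le_of_le
    (totalDegree_mul_le_of_le hsq (h₂ x y)) ((totalDegree_mul_le_of_le (h₁ v)
      (totalDegree_add_le_of_le (h₁₂ x y v) (h₁₂ y x v))).trans (by lia)))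
    (totalDegree_mul_le_of_le (totalDegree_mul_le_of_le (h₁ x) (h₁ y)) (h₂ v v))
  exact h.trans (by lia)

lemma totalDegree_thirdForm_le : (thirdForm f v x y z).totalDegree ≤ 4 * f.totalDegree := by
  have h₁ (u) : (dirDeriv u f).totalDegree ≤ f.totalDegree :=
    totalDegree_dirDeriv_le_of_le u le_rfl
  have h₁₁ (u₁ u₂) := totalDegree_mul_le_of_le (h₁ u₁) (h₁ u₂)
  have h₃ (u₁ u₂ u₃) := totalDegree_dirDeriv_le_of_le u₁ (totalDegree_dirDeriv_le_of_le u₂ (h₁ u₃))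
  have h₁₃ (u₁ u₂ u₃ u₄) := totalDegree_mul_le_of_le (h₁ u₁) (h₃ u₂ u₃ u₄)
  have h₁₁₃ (u₁ u₂ u₃ u₄ u₅) := totalDegree_mul_le_of_le (h₁₁ u₁ u₂) (h₃ u₃ u₄ u₅)
  have hsq : (dirDeriv v f ^ 2).totalDegree ≤ f.totalDegree + f.totalDegree := by
    rw [sq]
    exact h₁₁ v v
  have hcube : (dirDeriv v f ^ 3).totalDegree ≤ f.totalDegree + f.totalDegree + f.totalDegree := by
    rw [pow_succ]
    exact totalDegree_mul_le_of_le hsq (h₁ v)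
  have hlinear := totalDegree_mul_le_of_le hsq (totalDegree_add_le_of_le
    (totalDegree_add_le_of_le (h₁₃ x y z v) (h₁₃ y x z v)) (h₁₃ z x y v))
  have hquadratic := totalDegree_mul_le_of_le (h₁ v) (totalDegree_add_le_of_le
    (totalDegree_add_le_of_le (h₁₁₃ x y z v v) (h₁₁₃ x z y v v)) (h₁₁₃ y z x v v))
  have h := totalDegree_sub_le_of_le (totalDegree_add_le_of_le (totalDegree_sub_le_of_le
    (totalDegree_mul_le_of_le hcube (h₃ x y z)) (hlinear.trans (by lia)))
    (hquadratic.trans (by lia)))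
    (totalDegree_mul_le_of_le (totalDegree_mul_le_of_le (h₁₁ x y) (h₁ z)) (h₃ v v v))
  exact h.trans (by lia)

lemma totalDegree_secondForm_mul_secondForm_mul_thirdForm_le (x₁ x₂ x₃ x₄ x₅ x₆ x₇ : σ → ℝ) :
    (secondForm f v x₁ x₂ * secondForm f v x₃ x₄ * thirdForm f v x₅ x₆ x₇).totalDegree ≤
      10 * f.totalDegree :=
  (totalDegree_mul_le_of_le (totalDegree_mul_le_of_le (totalDegree_secondForm_le f v x₁ x₂)
    (totalDegree_secondForm_le f v x₃ x₄)) (totalDegree_thirdForm_le f v x₅ x₆ x₇)).trans (by lia)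

lemma totalDegree_remainderLeading_le :
    (remainderLeading f v x y).totalDegree ≤ 10 * f.totalDegree := by
  have h := totalDegree_secondForm_mul_secondForm_mul_thirdForm_le f v
  exact totalDegree_add_le_of_le (totalDegree_sub_le_of_le (totalDegree_sub_le_of_le
    (totalDegree_ofNat_mul_le_of_le 3 (h ..)) (h ..)) (totalDegree_ofNat_mul_le_of_le 6 (h ..)))
    (totalDegree_ofNat_mul_le_of_le 4 (h ..))

lemma totalDegree_remainderConst_le :
    (remainderConst f v x y).totalDegree ≤ 10 * f.totalDegree := by
  have h := totalDegree_secondForm_mul_secondForm_mul_thirdForm_le f v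
  exact totalDegree_add_le_of_le (totalDegree_sub_le_of_le (h ..)
    (totalDegree_ofNat_mul_le_of_le 3 (h ..))) (totalDegree_ofNat_mul_le_of_le 2 (h ..))

end Degree

end FundamentalForms

section Tangent

variable {σ : Type*} {f : MvPolynomial σ ℝ} {p v w w' x y : σ → ℝ} {a b c : ℝ}

lemma linearIndependent_of_tangent (hw : LinearIndependent ℝ ![w, w'])
    (hfw : eval p (dirDeriv w f) = 0) (hfw' : eval p (dirDeriv w' f) = 0)
    (hv : eval p (dirDeriv v f) ≠ 0) : LinearIndependent ℝ ![w, w', v] := by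
  refine Fintype.linearIndependent_iff.2 fun g hg => ?_
  have hsum : g 0 • w + g 1 • w' + g 2 • v = 0 := by simpa [Fin.sum_univ_three] using hg
  have h2 : g 2 = 0 := by
    have h := congrArg (fun u => eval p (dirDeriv u f)) hsum
    simpa [dirDeriv_add, dirDeriv_smul, dirDeriv_zero, hfw, hfw', hv] using h
  rw [h2, zero_smul, add_zero] at hsum
  obtain ⟨h0, h1⟩ := LinearIndependent.pair_iff.1 hw _ _ hsum
  intro i
  fin_cases i <;> assumption

lemma coeff_ne_zero_of_asymptotic (hv : eval p (dirDeriv v f) ≠ 0)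
    (hy : eval p (secondForm f v y y) ≠ 0) (hw0 : a • x + b • y + c • v ≠ 0)
    (hw : eval p (dirDeriv (a • x + b • y + c • v) f) = 0)
    (hww : eval p (dirDeriv (a • x + b • y + c • v) (dirDeriv (a • x + b • y + c • v) f)) = 0) :
    a ≠ 0 := by
  rintro rfl
  have hform := eval_secondForm_of_tangent (v := v) hw hw
  rw [hww, mul_zero, secondForm_linearCombination] at hform
  obtain rfl : b = 0 := by simpa [hy] using hform
  obtain rfl : c = 0 := by simpa [dirDeriv_smul, dirDeriv_zero, dirDeriv_add, hv] using hw
  simp at hw0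

lemma remainder_eq_zero_of_restrict_eq_zero (hv : eval p (dirDeriv v f) ≠ 0)
    (hy : eval p (secondForm f v y y) ≠ 0) (hw0 : a • x + b • y + c • v ≠ 0)
    (hw : restrict p (a • x + b • y + c • v) f = 0) :
    a ≠ 0 ∧ eval p (remainderLeading f v x y) * b + eval p (remainderConst f v x y) * a = 0 := by
  have hw' := restrict_dirDeriv_eq_zero hw
  have hw'' := restrict_dirDeriv_eq_zero hw'
  have h₁ := eval_eq_zero_of_restrict_eq_zero hw'
  have h₂ := eval_eq_zero_of_restrict_eq_zero hw''
  have h₃ := eval_eq_zero_of_restrict_eq_zero (restrict_dirDeriv_eq_zero hw'')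
  have ha := coeff_ne_zero_of_asymptotic hv hy hw0 h₁ h₂
  obtain ⟨Q, hQ⟩ := exists_sq_mul_thirdForm_eq f v x y a b c
  have h := congrArg (eval p) hQ
  simp only [map_mul, map_add, map_pow, eval_secondForm_of_tangent h₁ h₁,
    eval_thirdForm_of_tangent h₁, h₂, h₃, mul_zero, zero_add, eval_C] at h
  exact ⟨ha, (mul_eq_zero.1 h.symm).resolve_right (pow_ne_zero 2 ha)⟩

end Tangent

section Surface

variable {f h : MvPolynomial (Fin 3) ℝ} {p v w w' x y : Fin 3 → ℝ}

lemma exists_coordinates (hw : LinearIndependent ℝ ![x, y, v]) (u : Fin 3 → ℝ) :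
    ∃ a b c : ℝ, u = a • x + b • y + c • v := by
  let B := basisOfLinearIndependentOfCardEqFinrank hw (by simp)
  refine ⟨B.repr u 0, B.repr u 1, B.repr u 2, ?_⟩
  simpa [B, Fin.sum_univ_three] using (B.sum_repr u).symm

lemma exists_linearIndependent_triple (h : LinearIndependent ℝ ![y, v]) :
    ∃ x : Fin 3 → ℝ, LinearIndependent ℝ ![x, y, v] := by
  have hspan : Submodule.span ℝ (Set.range ![y, v]) ≠ ⊤ := fun htop => by
    have hrank := finrank_span_eq_card h
    rw [htop, finrank_top] at hrank
    simp at hrank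
  obtain ⟨x, -, hx⟩ := SetLike.exists_of_lt hspan.lt_top
  exact ⟨x, linearIndependent_finCons.2 ⟨h, hx⟩⟩

lemma linearIndependent_of_secondForm_ne_zero (hv : v ≠ 0) (hy : secondForm f v y y ≠ 0) :
    LinearIndependent ℝ ![y, v] := by
  rw [LinearIndependent.pair_symm_iff, LinearIndependent.pair_iff' hv]
  rintro c rfl
  exact hy (by simpa using secondForm_linearCombination f v 0 0 0 0 c)

lemma eval_dirDeriv_dirDeriv_ne_zero (hind : LinearIndependent ℝ ![w, w', v])
    (hy : eval p (secondForm f v y y) ≠ 0) (hw : restrict p w f = 0)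
    (hw' : restrict p w' f = 0) : eval p (dirDeriv w (dirDeriv w' f)) ≠ 0 := by
  intro hmixed
  have h₁ := eval_eq_zero_of_restrict_eq_zero (restrict_dirDeriv_eq_zero hw)
  have h₁' := eval_eq_zero_of_restrict_eq_zero (restrict_dirDeriv_eq_zero hw')
  have h₂ := eval_eq_zero_of_restrict_eq_zero
    (restrict_dirDeriv_eq_zero (restrict_dirDeriv_eq_zero hw))
  have h₂' := eval_eq_zero_of_restrict_eq_zero
    (restrict_dirDeriv_eq_zero (restrict_dirDeriv_eq_zero hw'))
  obtain ⟨a, b, c, rfl⟩ := exists_coordinates hind y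
  refine hy ?_
  simp only [secondForm_linearCombination, map_add, map_mul, eval_secondForm_of_tangent h₁ h₁,
    eval_secondForm_of_tangent h₁ h₁', eval_secondForm_of_tangent h₁' h₁', h₂, h₂', hmixed,
    mul_zero, add_zero]

/-- Through every point off `h = 0` passes at most one line contained in the surface `f = 0`. -/
def UniqueLineOff (f h : MvPolynomial (Fin 3) ℝ) : Prop :=
  ∀ ⦃p w w' : Fin 3 → ℝ⦄, eval p h ≠ 0 → restrict p w f = 0 → restrict p w' f = 0 →
    ¬LinearIndependent ℝ ![w, w']

lemma UniqueLineOff.eq_of_mem (hu : UniqueLineOff f h) {ℓ ℓ' : Set (Fin 3 → ℝ)} (hℓ : IsLine ℓ)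
    (hℓ' : IsLine ℓ') (hp : p ∈ ℓ) (hp' : p ∈ ℓ') (hph : eval p h ≠ 0) (hfℓ : VanishesOn f ℓ)
    (hfℓ' : VanishesOn f ℓ') : ℓ = ℓ' := by
  obtain ⟨w, hw, rfl⟩ := hℓ.exists_direction hp
  obtain ⟨w', hw', rfl⟩ := hℓ'.exists_direction hp'
  have hdep := hu hph (vanishesOn_range_iff.1 hfℓ) (vanishesOn_range_iff.1 hfℓ')
  rw [LinearIndependent.pair_iff' hw] at hdep
  push Not at hdep
  obtain ⟨s, rfl⟩ := hdep
  exact hℓ.eq_of_mem hℓ' (p := p) (q := p + s • w) (by simpa using hw') hp ⟨s, rfl⟩ hp'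
    ⟨1, by simp⟩

section Flat

lemma restrict_eq_zero_of_flat (hflat : ∀ u, f ∣ secondForm f v u u)
    (hv : eval p (dirDeriv v f) ≠ 0) (hp : eval p f = 0) (hw : eval p (dirDeriv w f) = 0) :
    restrict p w f = 0 := by
  obtain ⟨K, hK⟩ := hflat w
  obtain ⟨U, hU⟩ := exists_sq_mul_eq_secondForm_add f v w
  refine restrict_eq_zero_of_linear_ode (k := 2) (G := dirDeriv v f ^ 2)
    (A := ![K, U] ∘ Fin.ofNat 2) (by simpa using hv) ?_ ?_
  · simp only [Finset.sum_range_succ, Finset.sum_range_zero, Function.iterate_succ_apply',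
      Function.iterate_zero, id, zero_add]
    change _ = K * f + U * dirDeriv w f
    linear_combination hU + hK
  · intro j hj
    interval_cases j <;> assumption

lemma injective_pencil (hind : LinearIndependent ℝ ![w, w']) (p : Fin 3 → ℝ) :
    Function.Injective fun s : ℝ => Set.range fun t : ℝ => p + t • (w + s • w') := by
  intro s s' hss'
  obtain ⟨t, ht⟩ : p + (w + s' • w') ∈ Set.range fun t : ℝ => p + t • (w + s • w') :=
    (Set.ext_iff.1 hss' _).2 ⟨1, by simp⟩
  have h0 : (t - 1) • w + (t * s - s') • w' = 0 := by
    rw [← sub_eq_zero.2 ht]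
    module
  obtain ⟨ht, hs⟩ := LinearIndependent.pair_iff.1 hind _ _ h0
  obtain rfl : t = 1 := by linarith
  linarith

lemma pencil_direction_ne_zero (hind : LinearIndependent ℝ ![w, w']) (s : ℝ) : w + s • w' ≠ 0 :=
  fun h => one_ne_zero (LinearIndependent.pair_iff.1 hind 1 s (by rwa [one_smul])).1

lemma eval_affineForm_gradient (f : MvPolynomial (Fin 3) ℝ) (p u : Fin 3 → ℝ) :
    eval (p + u) (affineForm (fun i => eval p (pderiv i f)) p) = eval p (dirDeriv u f) := by
  simp [eval_affineForm, dirDeriv_eq_sum, mul_comm]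

-- The tangent plane at a point of a flat surface shares infinitely many lines with the surface.
lemma totalDegree_le_one_of_flat (hf : Irreducible f) (hflat : ∀ u, f ∣ secondForm f v u u)
    (hv : eval p (dirDeriv v f) ≠ 0) (hw : restrict p w f = 0) (hw' : restrict p w' f = 0)
    (hind : LinearIndependent ℝ ![w, w']) : f.totalDegree ≤ 1 := by
  have h₁ := eval_eq_zero_of_restrict_eq_zero (restrict_dirDeriv_eq_zero hw)
  have h₁' := eval_eq_zero_of_restrict_eq_zero (restrict_dirDeriv_eq_zero hw')
  have htangent (s : ℝ) : eval p (dirDeriv (w + s • w') f) = 0 := by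
    simp [dirDeriv_add, dirDeriv_smul, h₁, h₁']
  set plane := affineForm (fun i => eval p (pderiv i f)) p with hplane
  have hdvd : f ∣ plane := by
    refine dvd_of_infinite_lines hf (Set.infinite_range_of_injective (injective_pencil hind p)) ?_
    rintro _ ⟨s, rfl⟩
    refine ⟨⟨p, _, pencil_direction_ne_zero hind s, rfl⟩, vanishesOn_range_iff.2 <|
      restrict_eq_zero_of_flat hflat hv (eval_eq_zero_of_restrict_eq_zero hw) (htangent s), ?_⟩
    rintro _ ⟨t, rfl⟩
    rw [hplane, eval_affineForm_gradient, dirDeriv_smul, map_mul, htangent s, mul_zero]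
  have hne : plane ≠ 0 := fun h0 => hv <| by
    rw [← eval_affineForm_gradient, ← hplane, h0, map_zero]
  exact (totalDegree_le_of_dvd_of_isDomain hdvd hne).trans (totalDegree_affineForm_le _ p)

lemma totalDegree_le_two_or_uniqueLineOff_of_flat (hf : Irreducible f)
    (hflat : ∀ u, f ∣ secondForm f v u u) :
    f.totalDegree ≤ 2 ∨ UniqueLineOff f (dirDeriv v f) := by
  by_contra! hne
  obtain ⟨hdeg, hu⟩ := hne
  refine hu fun p w w' hp hw hw' hind => hdeg.not_ge ?_
  exact (totalDegree_le_one_of_flat hf hflat hp hw hw' hind).trans one_le_two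

end Flat

section NonFlat

lemma containsAsymptoticLines_of_dvd_remainder (hind : LinearIndependent ℝ ![x, y, v])
    (h₁ : f ∣ remainderLeading f v x y) (h₀ : f ∣ remainderConst f v x y) :
    ContainsAsymptoticLines f (dirDeriv v f * secondForm f v y y) := by
  intro p w hp hne hw hww
  obtain ⟨K₁, hK₁⟩ := h₁
  obtain ⟨K₀, hK₀⟩ := h₀
  rw [map_mul] at hne
  obtain ⟨a, b, c, hcoord⟩ := exists_coordinates hind w
  obtain ⟨Q, hQ⟩ := exists_sq_mul_thirdForm_eq f v x y a b c
  rw [← hcoord, hK₁, hK₀] at hQ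
  obtain ⟨U₂, hU₂⟩ := exists_sq_mul_eq_secondForm_add f v w
  obtain ⟨U₃, hU₃⟩ := exists_cube_mul_eq_thirdForm_add f v w
  -- Eliminating both forms leaves a third order linear differential equation along the line.
  let A₀ := (K₁ * C b + K₀ * C a) * C a ^ 2
  let A₁ := secondForm f v y y ^ 2 * U₃ - Q * U₂
  let A₂ := Q * dirDeriv v f ^ 2
  refine restrict_eq_zero_of_linear_ode (k := 3) (G := secondForm f v y y ^ 2 * dirDeriv v f ^ 3)
    (A := ![A₀, A₁, A₂] ∘ Fin.ofNat 3) (by simpa [and_comm] using hne) ?_ ?_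
  · simp only [Finset.sum_range_succ, Finset.sum_range_zero, Function.iterate_succ_apply',
      Function.iterate_zero, id, zero_add]
    change _ = A₀ * f + A₁ * dirDeriv w f + A₂ * dirDeriv w (dirDeriv w f)
    linear_combination secondForm f v y y ^ 2 * hU₃ + hQ - Q * hU₂
  · intro j hj
    interval_cases j <;> assumption

lemma uniqueLineOff_of_remainder (hind : LinearIndependent ℝ ![x, y, v])
    {R : MvPolynomial (Fin 3) ℝ} (hR : ∀ p, eval p R ≠ 0 →
      eval p (remainderLeading f v x y) ≠ 0 ∨ eval p (remainderConst f v x y) ≠ 0) :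
    UniqueLineOff f (dirDeriv v f * secondForm f v y y * R) := by
  intro p w w' hp hw hw' hww'
  simp only [map_mul, mul_ne_zero_iff] at hp
  obtain ⟨⟨hv, hy⟩, hRp⟩ := hp
  have hind' := linearIndependent_of_tangent hww'
    (eval_eq_zero_of_restrict_eq_zero (restrict_dirDeriv_eq_zero hw))
    (eval_eq_zero_of_restrict_eq_zero (restrict_dirDeriv_eq_zero hw')) hv
  obtain ⟨a, b, c, rfl⟩ := exists_coordinates hind w
  obtain ⟨a', b', c', rfl⟩ := exists_coordinates hind w'
  obtain ⟨ha, hrem⟩ := remainder_eq_zero_of_restrict_eq_zero hv hy (hww'.ne_zero 0) hw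
  obtain ⟨-, hrem'⟩ := remainder_eq_zero_of_restrict_eq_zero hv hy (hww'.ne_zero 1) hw'
  have hdet : a' * b - a * b' ≠ 0 := fun hdet => ha <| by
    have hcomb : a' • (a • x + b • y + c • v) + (-a) • (a' • x + b' • y + c' • v) +
        (a * c' - a' * c) • v = 0 := by
      rw [← zero_smul ℝ y, ← hdet]
      module
    exact neg_eq_zero.1 (coeff_eq_zero_of_linearIndependent_triple hind' hcomb).2.1
  rcases hR p hRp with hR₁ | hR₀
  · refine hR₁ ((mul_eq_zero.1 ?_).resolve_right hdet)
    linear_combination a' * hrem - a * hrem'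
  · refine hR₀ ((mul_eq_zero.1 ?_).resolve_right hdet)
    linear_combination b * hrem' - b' * hrem

lemma totalDegree_le_two_or_exists_uniqueLineOff_of_not_flat (hf : Irreducible f)
    (hind : LinearIndependent ℝ ![x, y, v]) (hv : ¬f ∣ dirDeriv v f)
    (hy : ¬f ∣ secondForm f v y y) :
    f.totalDegree ≤ 2 ∨
      ∃ h, ¬f ∣ h ∧ h.totalDegree ≤ 14 * f.totalDegree ∧ UniqueLineOff f h := by
  have hvy : ¬f ∣ dirDeriv v f * secondForm f v y y := hf.prime.not_dvd_mul hv hy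
  have hdeg : (dirDeriv v f * secondForm f v y y).totalDegree ≤ f.totalDegree + 3 * f.totalDegree :=
    totalDegree_mul_le_of_le (totalDegree_dirDeriv_le_of_le v le_rfl)
      (totalDegree_secondForm_le f v y y)
  by_cases h₁ : f ∣ remainderLeading f v x y
  · by_cases h₀ : f ∣ remainderConst f v x y
    · refine or_iff_not_imp_left.2 fun hlt => ⟨_, hvy, hdeg.trans (by lia), ?_⟩
      intro p w w' hp hw hw' hww'
      have hne := hp
      rw [map_mul, mul_ne_zero_iff] at hne
      have hind' := linearIndependent_of_tangent hww'
        (eval_eq_zero_of_restrict_eq_zero (restrict_dirDeriv_eq_zero hw))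
        (eval_eq_zero_of_restrict_eq_zero (restrict_dirDeriv_eq_zero hw')) hne.1
      exact hlt <| (containsAsymptoticLines_of_dvd_remainder hind h₁ h₀).totalDegree_le_two hf hp
        hw hw' hne.1 (eval_dirDeriv_dirDeriv_ne_zero hind' hne.2 hw hw') hind'
    · exact .inr ⟨_, hf.prime.not_dvd_mul hvy h₀, (totalDegree_mul_le_of_le hdeg
        (totalDegree_remainderConst_le f v x y)).trans (by lia),
        uniqueLineOff_of_remainder hind fun _ => .inr⟩
  · exact .inr ⟨_, hf.prime.not_dvd_mul hvy h₁, (totalDegree_mul_le_of_le hdeg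
      (totalDegree_remainderLeading_le f v x y)).trans (by lia),
      uniqueLineOff_of_remainder hind fun _ => .inl⟩

end NonFlat

theorem totalDegree_le_two_or_exists_uniqueLineOff (hf : Irreducible f) :
    f.totalDegree ≤ 2 ∨
      ∃ h, ¬f ∣ h ∧ h.totalDegree ≤ 14 * f.totalDegree ∧ UniqueLineOff f h := by
  obtain ⟨i, hi⟩ := exists_pderiv_ne_zero_of_irreducible hf
  obtain ⟨v, hv0⟩ : ∃ v, dirDeriv v f ≠ 0 :=
    ⟨Pi.single i 1, by simpa [dirDeriv_eq_sum, Pi.single_apply] using hi⟩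
  have hvlt := (totalDegree_dirDeriv_le v f).trans_lt <|
    Nat.sub_one_lt (totalDegree_pos_of_irreducible hf).ne'
  have hv : ¬f ∣ dirDeriv v f := not_dvd_of_totalDegree_lt hv0 hvlt
  by_cases hflat : ∀ y, f ∣ secondForm f v y y
  · exact (totalDegree_le_two_or_uniqueLineOff_of_flat hf hflat).imp_right fun hu =>
      ⟨_, hv, hvlt.le.trans (by lia), hu⟩
  · obtain ⟨y, hy⟩ := not_forall.1 hflat
    have hvne : v ≠ 0 := by
      rintro rfl
      exact hv0 (dirDeriv_zero f)
    obtain ⟨x, hind⟩ := exists_linearIndependent_triple <|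
      linearIndependent_of_secondForm_ne_zero hvne fun h0 => hy (h0 ▸ dvd_zero f)
    exact totalDegree_le_two_or_exists_uniqueLineOff_of_not_flat hf hind hv hy

end Surface

section Factors

variable {σ : Type*} {F : Finset (MvPolynomial σ ℝ)} {f g i : MvPolynomial σ ℝ}

/-- `F` is a set of representatives, up to associates, of irreducible divisors of `f` that
accounts for every line in the zero set of `f`. Multiplicities are discarded, so the degrees only
add up to at most the degree of `f`. -/
structure IsFactorSet (F : Finset (MvPolynomial σ ℝ)) (f : MvPolynomial σ ℝ) : Prop where
  irreducible : ∀ g ∈ F, Irreducible g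
  dvd : ∀ g ∈ F, g ∣ f
  eq_of_dvd : ∀ g ∈ F, ∀ g' ∈ F, g ∣ g' → g = g'
  exists_vanishesOn : ∀ ℓ, IsLine ℓ → VanishesOn f ℓ → ∃ g ∈ F, VanishesOn g ℓ
  sum_totalDegree_le : ∑ g ∈ F, g.totalDegree ≤ f.totalDegree

lemma isFactorSet_empty_of_isUnit (hf : IsUnit f) : IsFactorSet ∅ f where
  irreducible := by simp
  dvd := by simp
  eq_of_dvd := by simp
  exists_vanishesOn ℓ hℓ hv := by
    obtain ⟨p, w, -, rfl⟩ := hℓ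
    exact ((hf.map (restrict p w)).ne_zero (vanishesOn_range_iff.1 hv)).elim
  sum_totalDegree_le := by simp

lemma IsFactorSet.mul_left_of_dvd (hF : IsFactorSet F f) (hf : f ≠ 0) (hi : i ≠ 0) (hg : g ∈ F)
    (hig : i ∣ g) : IsFactorSet F (i * f) where
  irreducible := hF.irreducible
  dvd g hg := (hF.dvd g hg).mul_left i
  eq_of_dvd := hF.eq_of_dvd
  exists_vanishesOn ℓ hℓ hv := by
    rcases hℓ.vanishesOn_or_of_mul hv with hv | hv
    · exact ⟨g, hg, hv.of_dvd hig⟩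
    · exact hF.exists_vanishesOn ℓ hℓ hv
  sum_totalDegree_le := by
    rw [totalDegree_mul_of_isDomain hi hf]
    exact hF.sum_totalDegree_le.trans (Nat.le_add_left _ _)

lemma IsFactorSet.insert_mul [DecidableEq (MvPolynomial σ ℝ)] (hF : IsFactorSet F f) (hf : f ≠ 0)
    (hi : Irreducible i) (hiF : ∀ g ∈ F, ¬i ∣ g) : IsFactorSet (insert i F) (i * f) where
  irreducible := Finset.forall_mem_insert _ _ _ |>.2 ⟨hi, hF.irreducible⟩
  dvd := Finset.forall_mem_insert _ _ _ |>.2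
    ⟨dvd_mul_right _ _, fun g hg => (hF.dvd g hg).mul_left i⟩
  eq_of_dvd g hg g' hg' hd := by
    rcases Finset.mem_insert.1 hg with rfl | hgF <;> rcases Finset.mem_insert.1 hg' with rfl | hgF'
    · rfl
    · exact (hiF g' hgF' hd).elim
    · exact (hiF g hgF ((hF.irreducible g hgF).associated_of_dvd hi hd).symm.dvd).elim
    · exact hF.eq_of_dvd g hgF g' hgF' hd
  exists_vanishesOn ℓ hℓ hv := by
    rcases hℓ.vanishesOn_or_of_mul hv with hv | hv
    · exact ⟨i, Finset.mem_insert_self _ _, hv⟩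
    · obtain ⟨g, hg, hgv⟩ := hF.exists_vanishesOn ℓ hℓ hv
      exact ⟨g, Finset.mem_insert_of_mem hg, hgv⟩
  sum_totalDegree_le := by
    rw [Finset.sum_insert fun h => hiF i h dvd_rfl, totalDegree_mul_of_isDomain hi.ne_zero hf]
    exact Nat.add_le_add_left hF.sum_totalDegree_le _

lemma exists_isFactorSet (hf : f ≠ 0) : ∃ F, IsFactorSet F f := by
  classical
  induction f using WfDvdMonoid.induction_on_irreducible with
  | zero => exact (hf rfl).elim
  | unit u hu => exact ⟨∅, isFactorSet_empty_of_isUnit hu⟩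
  | mul f i hf₀ hi ih =>
    obtain ⟨F, hF⟩ := ih hf₀
    by_cases h : ∃ g ∈ F, i ∣ g
    · obtain ⟨g, hg, hig⟩ := h
      exact ⟨F, hF.mul_left_of_dvd hf₀ hi.ne_zero hg hig⟩
    · push Not at h
      exact ⟨insert i F, hF.insert_mul hf₀ hi h⟩

lemma IsFactorSet.totalDegree_le (hF : IsFactorSet F f) (hg : g ∈ F) :
    g.totalDegree ≤ f.totalDegree :=
  (Finset.single_le_sum (f := totalDegree) (fun _ _ => Nat.zero_le _) hg).trans
    hF.sum_totalDegree_le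

variable [DecidableEq (MvPolynomial σ ℝ)] {ℓ : Set (σ → ℝ)} {p : σ → ℝ}

lemma IsFactorSet.not_dvd_prod_erase (hF : IsFactorSet F f) (hg : g ∈ F) :
    ¬g ∣ ∏ g' ∈ F.erase g, g' := by
  intro hd
  obtain ⟨g', hg', hd'⟩ := ((hF.irreducible g hg).prime.dvd_finsetProd_iff _).1 hd
  exact Finset.ne_of_mem_erase hg' (hF.eq_of_dvd g hg g' (Finset.mem_of_mem_erase hg') hd').symm

lemma IsFactorSet.totalDegree_prod_erase_le (hF : IsFactorSet F f) (g : MvPolynomial σ ℝ) :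
    (∏ g' ∈ F.erase g, g').totalDegree ≤ f.totalDegree :=
  calc (∏ g' ∈ F.erase g, g').totalDegree
      ≤ ∑ g' ∈ F.erase g, g'.totalDegree := totalDegree_finsetProd _ _
    _ ≤ ∑ g' ∈ F, g'.totalDegree := Finset.sum_le_sum_of_subset (Finset.erase_subset _ _)
    _ ≤ f.totalDegree := hF.sum_totalDegree_le

lemma IsFactorSet.vanishesOn_of_eval_prod_erase_ne_zero (hF : IsFactorSet F f) (hℓ : IsLine ℓ)
    (hp : p ∈ ℓ) (hv : VanishesOn f ℓ) (hpF : eval p (∏ g' ∈ F.erase g, g') ≠ 0) :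
    VanishesOn g ℓ := by
  obtain ⟨g', hg', hgv'⟩ := hF.exists_vanishesOn ℓ hℓ hv
  rw [map_prod, Finset.prod_ne_zero_iff] at hpF
  by_cases hgg : g' = g
  · rwa [hgg] at hgv'
  · exact (hpF g' (Finset.mem_erase.2 ⟨hgg, hg'⟩) (hgv' p hp)).elim

end Factors

section Neighbours

variable {F : Finset (MvPolynomial (Fin 3) ℝ)} {f g : MvPolynomial (Fin 3) ℝ}
  {ℓ : Set (Fin 3 → ℝ)}

/-- Off the zeros of `e`, the lines of the surface `f = 0` that meet `ℓ` lie on the single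
quadric or plane `q = 0`, and `ℓ` itself meets the surface only if it is contained in it. -/
structure ControlsNeighbours (f e q : MvPolynomial (Fin 3) ℝ) (ℓ : Set (Fin 3 → ℝ)) : Prop where
  not_vanishesOn : ¬VanishesOn e ℓ
  totalDegree_le : e.totalDegree ≤ 15 * f.totalDegree
  quadric_ne_zero : q ≠ 0
  quadric_totalDegree_le : q.totalDegree ≤ 2
  vanishesOn : ∀ p ∈ ℓ, eval p e ≠ 0 → eval p f = 0 → VanishesOn f ℓ
  quadric_vanishesOn : ∀ p ∈ ℓ, eval p e ≠ 0 →
    ∀ ℓ', IsLine ℓ' → p ∈ ℓ' → ℓ' ≠ ℓ → VanishesOn f ℓ' → VanishesOn q ℓ'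

lemma controlsNeighbours_self_one (h : ¬VanishesOn f ℓ) : ControlsNeighbours f f 1 ℓ where
  not_vanishesOn := h
  totalDegree_le := Nat.le_mul_of_pos_left _ (by norm_num)
  quadric_ne_zero := one_ne_zero
  quadric_totalDegree_le := by simp
  vanishesOn _ _ hpe hpf := (hpe hpf).elim
  quadric_vanishesOn p _ hpe _ _ hp' _ hv' := (hpe (hv' p hp')).elim

lemma exists_not_dvd_totalDegree_le_two_or_uniqueLineOff (hg : Irreducible g) :
    ∃ h, ¬g ∣ h ∧ h.totalDegree ≤ 14 * g.totalDegree ∧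
      (g.totalDegree ≤ 2 ∨ UniqueLineOff g h) := by
  rcases totalDegree_le_two_or_exists_uniqueLineOff hg with hdeg | ⟨h, hgh, hh, hu⟩
  · exact ⟨1, hg.not_dvd_one, by simp, Or.inl hdeg⟩
  · exact ⟨h, hgh, hh, Or.inr hu⟩

-- `e` combines the exceptional polynomial of the component `g` with all the other components.
lemma IsFactorSet.exists_controlsNeighbours (hF : IsFactorSet F f) (hg : g ∈ F) :
    ∃ e, ¬g ∣ e ∧ e.totalDegree ≤ 15 * f.totalDegree ∧
      ∀ ℓ, IsLine ℓ → VanishesOn g ℓ → ¬VanishesOn e ℓ → ∃ q, ControlsNeighbours f e q ℓ := by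
  classical
  have hirr := hF.irreducible g hg
  obtain ⟨h, hgh, hh, hquad⟩ := exists_not_dvd_totalDegree_le_two_or_uniqueLineOff hirr
  have hdeg : (h * ∏ g' ∈ F.erase g, g').totalDegree ≤ 15 * f.totalDegree :=
    (totalDegree_mul_le_of_le hh (hF.totalDegree_prod_erase_le g)).trans
      (by have := hF.totalDegree_le hg; lia)
  refine ⟨h * ∏ g' ∈ F.erase g, g', hirr.prime.not_dvd_mul hgh (hF.not_dvd_prod_erase hg), hdeg,
    fun ℓ hℓ hgv hev => ?_⟩
  have hfv : VanishesOn f ℓ := hgv.of_dvd (hF.dvd g hg)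
  rcases hquad with hdeg₂ | hu
  · refine ⟨g, hev, hdeg, hirr.ne_zero, hdeg₂, fun _ _ _ _ => hfv, ?_⟩
    intro p _ hpe ℓ' hℓ' hp' _ hv'
    rw [map_mul] at hpe
    exact hF.vanishesOn_of_eval_prod_erase_ne_zero hℓ' hp' hv' (right_ne_zero_of_mul hpe)
  · refine ⟨1, hev, hdeg, one_ne_zero, by simp, fun _ _ _ _ => hfv, ?_⟩
    intro p hp hpe ℓ' hℓ' hp' hne hv'
    rw [map_mul] at hpe
    have hgv' :=
      hF.vanishesOn_of_eval_prod_erase_ne_zero hℓ' hp' hv' (right_ne_zero_of_mul hpe)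
    exact (hne (hu.eq_of_mem hℓ' hℓ hp' hp (left_ne_zero_of_mul hpe) hgv' hgv)).elim

end Neighbours

section Exceptional

variable {f : MvPolynomial (Fin 3) ℝ} {L : Finset (Set (Fin 3 → ℝ))}

lemma card_filter_exists_vanishesOn_le {F : Finset (MvPolynomial (Fin 3) ℝ)}
    (hF : IsFactorSet F f) (hL : ∀ ℓ ∈ L, IsLine ℓ)
    {e : MvPolynomial (Fin 3) ℝ → MvPolynomial (Fin 3) ℝ} {D : ℕ} (hge : ∀ g ∈ F, ¬g ∣ e g)
    (he : ∀ g ∈ F, (e g).totalDegree ≤ D)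
    [DecidablePred fun ℓ => ∃ g ∈ F, VanishesOn g ℓ ∧ VanishesOn (e g) ℓ] :
    (L.filter fun ℓ => ∃ g ∈ F, VanishesOn g ℓ ∧ VanishesOn (e g) ℓ).card
      ≤ 6 * f.totalDegree * D := by
  classical
  have hsub : (L.filter fun ℓ => ∃ g ∈ F, VanishesOn g ℓ ∧ VanishesOn (e g) ℓ) ⊆
      F.biUnion fun g => L.filter fun ℓ => VanishesOn g ℓ ∧ VanishesOn (e g) ℓ := by
    intro ℓ hℓ
    obtain ⟨hℓL, g, hg, hv⟩ := Finset.mem_filter.1 hℓ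
    exact Finset.mem_biUnion.2 ⟨g, hg, Finset.mem_filter.2 ⟨hℓL, hv⟩⟩
  calc _ ≤ _ := Finset.card_le_card hsub
    _ ≤ ∑ g ∈ F, (L.filter fun ℓ => VanishesOn g ℓ ∧ VanishesOn (e g) ℓ).card :=
      Finset.card_biUnion_le
    _ ≤ ∑ g ∈ F, 6 * g.totalDegree * D := by
      refine Finset.sum_le_sum fun g hg => ?_
      refine (card_lines_le_of_not_dvd (hF.irreducible g hg) (hge g hg) fun ℓ hℓ => ?_).trans
        (Nat.mul_le_mul_left _ (he g hg))
      obtain ⟨hℓL, hv⟩ := Finset.mem_filter.1 hℓ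
      exact ⟨hL ℓ hℓL, hv⟩
    _ = 6 * (∑ g ∈ F, g.totalDegree) * D := by rw [Finset.mul_sum, Finset.sum_mul]
    _ ≤ 6 * f.totalDegree * D := by gcongr; exact hF.sum_totalDegree_le

theorem exists_exceptional_lines (hf : f ≠ 0) (hL : ∀ ℓ ∈ L, IsLine ℓ) :
    ∃ B ⊆ L, B.card ≤ 90 * f.totalDegree ^ 2 ∧ (∀ ℓ ∈ B, VanishesOn f ℓ) ∧
      ∀ ℓ ∈ L, ℓ ∉ B → ∃ e q, ControlsNeighbours f e q ℓ := by
  classical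
  obtain ⟨F, hF⟩ := exists_isFactorSet hf
  choose! e hge he hctrl using fun g hg => hF.exists_controlsNeighbours (g := g) hg
  refine ⟨L.filter fun ℓ => ∃ g ∈ F, VanishesOn g ℓ ∧ VanishesOn (e g) ℓ, Finset.filter_subset _ _,
    ?_, ?_, ?_⟩
  · exact (card_filter_exists_vanishesOn_le hF hL hge he).trans_eq (by ring)
  · intro ℓ hℓ
    obtain ⟨-, g, hg, hgv, -⟩ := Finset.mem_filter.1 hℓ
    exact hgv.of_dvd (hF.dvd g hg)
  · intro ℓ hℓ hB
    by_cases hv : VanishesOn f ℓ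
    · obtain ⟨g, hg, hgv⟩ := hF.exists_vanishesOn ℓ (hL ℓ hℓ) hv
      have hev : ¬VanishesOn (e g) ℓ := fun hev =>
        hB (Finset.mem_filter.2 ⟨hℓ, g, hg, hgv, hev⟩)
      exact ⟨e g, hctrl g hg ℓ (hL ℓ hℓ) hgv hev⟩
    · exact ⟨f, 1, controlsNeighbours_self_one hv⟩

end Exceptional

section Incidence

variable {V : Type*} {L : Finset (Set V)}

open Classical in
/-- The members of `L` through the point `p`. -/
def linesThrough (L : Finset (Set V)) (p : V) : Finset (Set V) := {ℓ ∈ L | p ∈ ℓ}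

/-- Every point of `S` lies on at least `k` members of `L`. -/
def IsRich (k : ℕ) (L : Finset (Set V)) (S : Finset V) : Prop :=
  ∀ p ∈ S, k ≤ (linesThrough L p).card

@[simp]
lemma mem_linesThrough {p : V} {ℓ : Set V} : ℓ ∈ linesThrough L p ↔ ℓ ∈ L ∧ p ∈ ℓ := by
  simp [linesThrough]

lemma card_linesThrough_eq_add_sdiff [DecidableEq (Set V)] {B : Finset (Set V)} (hB : B ⊆ L)
    (p : V) :
    (linesThrough L p).card = (linesThrough B p).card + (linesThrough (L \ B) p).card := by
  rw [← Finset.card_union_of_disjoint]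
  · congr 1
    ext ℓ
    have := @hB ℓ
    simp only [mem_linesThrough, Finset.mem_union, Finset.mem_sdiff]
    tauto
  · simp only [Finset.disjoint_left, mem_linesThrough, Finset.mem_sdiff]
    tauto

end Incidence

section Degenerate

variable {σ : Type*} {M : Finset (Set (σ → ℝ))}

open Classical in
/-- The members of `M` through `p` whose attached polynomial `e ℓ` vanishes at `p`. -/
def degenerateLines (M : Finset (Set (σ → ℝ))) (e : Set (σ → ℝ) → MvPolynomial σ ℝ) (p : σ → ℝ) :
    Finset (Set (σ → ℝ)) := {ℓ ∈ linesThrough M p | eval p (e ℓ) = 0}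

open Classical in
/-- The members of `M` through `p` whose attached polynomial `e ℓ` does not vanish at `p`. -/
def regularLines (M : Finset (Set (σ → ℝ))) (e : Set (σ → ℝ) → MvPolynomial σ ℝ) (p : σ → ℝ) :
    Finset (Set (σ → ℝ)) := {ℓ ∈ linesThrough M p | eval p (e ℓ) ≠ 0}

variable {e : Set (σ → ℝ) → MvPolynomial σ ℝ} {D : ℕ}

lemma mem_regularLines {p : σ → ℝ} {ℓ : Set (σ → ℝ)} :
    ℓ ∈ regularLines M e p ↔ (ℓ ∈ M ∧ p ∈ ℓ) ∧ eval p (e ℓ) ≠ 0 := by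
  simp [regularLines]

lemma card_degenerateLines_add_card_regularLines (p : σ → ℝ) :
    (degenerateLines M e p).card + (regularLines M e p).card = (linesThrough M p).card :=
  Finset.card_filter_add_card_filter_not _

lemma sum_card_degenerateLines_le (hM : ∀ ℓ ∈ M, IsLine ℓ) (he : ∀ ℓ ∈ M, ¬VanishesOn (e ℓ) ℓ)
    (hD : ∀ ℓ ∈ M, (e ℓ).totalDegree ≤ D) (S : Finset (σ → ℝ)) :
    ∑ p ∈ S, (degenerateLines M e p).card ≤ M.card * D := by
  classical
  calc ∑ p ∈ S, (degenerateLines M e p).card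
      = ∑ p ∈ S, (M.filter fun ℓ => p ∈ ℓ ∧ eval p (e ℓ) = 0).card := by
        simp only [degenerateLines, linesThrough, Finset.filter_filter]
    _ = ∑ ℓ ∈ M, (S.filter fun p => p ∈ ℓ ∧ eval p (e ℓ) = 0).card :=
        Finset.sum_card_bipartiteAbove_eq_sum_card_bipartiteBelow _
    _ ≤ M.card * D := by
        refine (Finset.sum_le_card_nsmul M _ D fun ℓ hℓ => ?_).trans_eq (smul_eq_mul _ _)
        exact ((hM ℓ hℓ).card_zeros_le (he ℓ hℓ) fun x hx => (Finset.mem_filter.1 hx).2).trans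
          (hD ℓ hℓ)

end Degenerate

section Surface

variable {f : MvPolynomial (Fin 3) ℝ} {L B : Finset (Set (Fin 3 → ℝ))} {S : Finset (Fin 3 → ℝ)}
  {e q : Set (Fin 3 → ℝ) → MvPolynomial (Fin 3) ℝ} {Q k : ℕ}

open Classical in
/-- The members of `L` contained in the zero set of `f`. -/
def linesIn {σ : Type*} (L : Finset (Set (σ → ℝ))) (f : MvPolynomial σ ℝ) :
    Finset (Set (σ → ℝ)) := {ℓ ∈ L | VanishesOn f ℓ}

@[simp]
lemma mem_linesIn {σ : Type*} {L : Finset (Set (σ → ℝ))} {f : MvPolynomial σ ℝ}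
    {ℓ : Set (σ → ℝ)} : ℓ ∈ linesIn L f ↔ ℓ ∈ L ∧ VanishesOn f ℓ := by
  simp [linesIn]

/-- No nonzero polynomial of degree at most two vanishes on more than `Q` members of `L`; planes
are included. -/
def FewLinesInQuadrics (Q : ℕ) (L : Finset (Set (Fin 3 → ℝ))) : Prop :=
  ∀ q : MvPolynomial (Fin 3) ℝ, q ≠ 0 → q.totalDegree ≤ 2 → (linesIn L q).card ≤ Q

-- Two lines meet at most once, so the other lines in `f = 0` through distinct points are distinct.
lemma ControlsNeighbours.sum_card_linesThrough_erase_le [DecidableEq (Set (Fin 3 → ℝ))]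
    {e q : MvPolynomial (Fin 3) ℝ} {ℓ : Set (Fin 3 → ℝ)} (h : ControlsNeighbours f e q ℓ)
    (hℓ : IsLine ℓ) (hL : ∀ ℓ' ∈ L, IsLine ℓ') (hS : ∀ p ∈ S, p ∈ ℓ ∧ eval p e ≠ 0) :
    ∑ p ∈ S, ((linesThrough (linesIn L f) p).erase ℓ).card ≤ (linesIn L q).card := by
  rw [← Finset.card_biUnion]
  · refine Finset.card_le_card fun ℓ' hℓ' => ?_
    obtain ⟨p, hp, hℓ'⟩ := Finset.mem_biUnion.1 hℓ'
    simp only [Finset.mem_erase, mem_linesThrough, mem_linesIn] at hℓ' ⊢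
    obtain ⟨hne, ⟨hℓ'L, hv⟩, hpℓ'⟩ := hℓ'
    exact ⟨hℓ'L, h.quadric_vanishesOn p (hS p hp).1 (hS p hp).2 ℓ' (hL ℓ' hℓ'L) hpℓ' hne hv⟩
  · intro p hp p' hp' hne
    rw [Function.onFun, Finset.disjoint_left]
    intro ℓ' h₁ h₂
    simp only [Finset.mem_erase, mem_linesThrough, mem_linesIn] at h₁ h₂
    exact h₁.1 ((hL ℓ' h₁.2.1.1).eq_of_mem hℓ hne h₁.2.2 h₂.2.2 (hS p hp).1 (hS p' hp').1)

lemma card_regularLines_add_card_le [DecidableEq (Set (Fin 3 → ℝ))] (hBL : B ⊆ L)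
    (hBf : ∀ ℓ ∈ B, VanishesOn f ℓ) (hctrl : ∀ ℓ ∈ L \ B, ControlsNeighbours f (e ℓ) (q ℓ) ℓ)
    {p : Fin 3 → ℝ} (hpf : eval p f = 0) :
    (regularLines (L \ B) e p).card + (linesThrough B p).card ≤
      (linesThrough (linesIn L f) p).card := by
  rw [← Finset.card_union_of_disjoint]
  · refine Finset.card_le_card fun ℓ hℓ => ?_
    simp only [Finset.mem_union, mem_regularLines, mem_linesThrough, mem_linesIn] at hℓ ⊢
    rcases hℓ with ⟨⟨hℓ, hp⟩, hpe⟩ | ⟨hℓ, hp⟩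
    · exact ⟨⟨(Finset.mem_sdiff.1 hℓ).1, (hctrl ℓ hℓ).vanishesOn p hp hpe hpf⟩, hp⟩
    · exact ⟨⟨hBL hℓ, hBf ℓ hℓ⟩, hp⟩
  · simp only [Finset.disjoint_left, mem_regularLines, mem_linesThrough, Finset.mem_sdiff]
    tauto

lemma sum_card_regularLines_mul_le [DecidableEq (Set (Fin 3 → ℝ))] (hL : ∀ ℓ ∈ L, IsLine ℓ)
    (hQ : FewLinesInQuadrics Q L) (hBL : B ⊆ L) (hBf : ∀ ℓ ∈ B, VanishesOn f ℓ)
    (hctrl : ∀ ℓ ∈ L \ B, ControlsNeighbours f (e ℓ) (q ℓ) ℓ) (hSf : ∀ p ∈ S, eval p f = 0) :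
    ∑ p ∈ S, (regularLines (L \ B) e p).card *
      ((regularLines (L \ B) e p).card + (linesThrough B p).card - 1) ≤ (L \ B).card * Q := by
  classical
  calc ∑ p ∈ S, (regularLines (L \ B) e p).card *
        ((regularLines (L \ B) e p).card + (linesThrough B p).card - 1)
      ≤ ∑ p ∈ S, ∑ ℓ ∈ regularLines (L \ B) e p,
          ((linesThrough (linesIn L f) p).erase ℓ).card := by
        refine Finset.sum_le_sum fun p hp => ?_
        rw [← smul_eq_mul]
        refine Finset.card_nsmul_le_sum _ _ _ fun ℓ _ => ?_
        have := card_regularLines_add_card_le hBL hBf hctrl (hSf p hp)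
        have := Finset.pred_card_le_card_erase (s := linesThrough (linesIn L f) p) (a := ℓ)
        lia
    _ = ∑ ℓ ∈ L \ B, ∑ p ∈ S with p ∈ ℓ ∧ eval p (e ℓ) ≠ 0,
          ((linesThrough (linesIn L f) p).erase ℓ).card := by
        refine Finset.sum_comm' fun p ℓ => ?_
        simp only [mem_regularLines, Finset.mem_filter]
        tauto
    _ ≤ (L \ B).card * Q := by
        refine (Finset.sum_le_card_nsmul _ _ Q fun ℓ hℓ => ?_).trans_eq (smul_eq_mul _ _)
        have h := hctrl ℓ hℓ
        exact (h.sum_card_linesThrough_erase_le (hL ℓ (Finset.mem_sdiff.1 hℓ).1) hL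
          fun p hp => (Finset.mem_filter.1 hp).2).trans
            (hQ _ h.quadric_ne_zero h.quadric_totalDegree_le)

lemma sq_le_of_le_add_add {b x g : ℕ} (hk : 2 ≤ k) (h : k ≤ b + (x + g)) :
    k ^ 2 ≤ 4 * k * x + (if max 2 ((k + 1) / 2) ≤ b then k ^ 2 else 0) +
      8 * (g * (g + b - 1)) := by
  by_cases hx : k ≤ 4 * x
  · have : k * k ≤ k * (4 * x) := Nat.mul_le_mul_left k hx
    lia
  split_ifs with hb
  · lia
  · have hg : k ≤ 4 * g := by lia
    have hgb : k ≤ 2 * (g + b - 1) := by lia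
    calc k ^ 2 = k * k := sq k
      _ ≤ 4 * g * (2 * (g + b - 1)) := Nat.mul_le_mul hg hgb
      _ = 8 * (g * (g + b - 1)) := by ring
      _ ≤ _ := Nat.le_add_left _ _

theorem exists_isRich_subset_of_surface (hf : f ≠ 0) (hL : ∀ ℓ ∈ L, IsLine ℓ)
    (hQ : FewLinesInQuadrics Q L) (hk : 2 ≤ k) (hSf : ∀ p ∈ S, eval p f = 0) (hS : IsRich k L S) :
    ∃ B ⊆ L, B.card ≤ 90 * f.totalDegree ^ 2 ∧ ∃ S', IsRich (max 2 ((k + 1) / 2)) B S' ∧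
      S.card * k ^ 2 ≤ 60 * f.totalDegree * L.card * k + S'.card * k ^ 2 + 8 * L.card * Q := by
  classical
  obtain ⟨B, hBL, hBcard, hBf, hctrl⟩ := exists_exceptional_lines hf hL
  replace hctrl : ∀ ℓ ∈ L \ B, ∃ e q, ControlsNeighbours f e q ℓ := fun ℓ hℓ =>
    hctrl ℓ (Finset.mem_sdiff.1 hℓ).1 (Finset.mem_sdiff.1 hℓ).2
  choose! e q hctrl using hctrl
  refine ⟨B, hBL, hBcard, S.filter fun p => max 2 ((k + 1) / 2) ≤ (linesThrough B p).card,
    fun p hp => (Finset.mem_filter.1 hp).2, ?_⟩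
  set S' := S.filter fun p => max 2 ((k + 1) / 2) ≤ (linesThrough B p).card
  let x p := (degenerateLines (L \ B) e p).card
  let g p := (regularLines (L \ B) e p).card
  let b p := (linesThrough B p).card
  have hpoint : ∀ p ∈ S, k ^ 2 ≤ 4 * k * x p +
      (if max 2 ((k + 1) / 2) ≤ b p then k ^ 2 else 0) + 8 * (g p * (g p + b p - 1)) := by
    refine fun p hp => sq_le_of_le_add_add hk ((hS p hp).trans_eq ?_)
    rw [card_linesThrough_eq_add_sdiff hBL, card_degenerateLines_add_card_regularLines]
  have hdegenerate : ∑ p ∈ S, x p ≤ (L \ B).card * (15 * f.totalDegree) :=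
    sum_card_degenerateLines_le (fun ℓ hℓ => hL ℓ (Finset.mem_sdiff.1 hℓ).1)
      (fun ℓ hℓ => (hctrl ℓ hℓ).not_vanishesOn) (fun ℓ hℓ => (hctrl ℓ hℓ).totalDegree_le) S
  have hregular : ∑ p ∈ S, g p * (g p + b p - 1) ≤ (L \ B).card * Q :=
    sum_card_regularLines_mul_le hL hQ hBL hBf hctrl hSf
  have hcard : (L \ B).card ≤ L.card := Finset.card_le_card Finset.sdiff_subset
  calc S.card * k ^ 2 = ∑ _p ∈ S, k ^ 2 := by simp
    _ ≤ _ := Finset.sum_le_sum hpoint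
    _ = 4 * k * ∑ p ∈ S, x p + S'.card * k ^ 2 + 8 * ∑ p ∈ S, g p * (g p + b p - 1) := by
      rw [Finset.sum_add_distrib, Finset.sum_add_distrib, ← Finset.mul_sum, ← Finset.mul_sum,
        ← Finset.sum_filter, Finset.sum_const, smul_eq_mul]
    _ ≤ 4 * k * (L.card * (15 * f.totalDegree)) + S'.card * k ^ 2 + 8 * (L.card * Q) := by
      gcongr
      · exact hdegenerate.trans (Nat.mul_le_mul_right _ hcard)
      · exact hregular.trans (Nat.mul_le_mul_right _ hcard)
    _ = _ := by ring

end Surface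

section DoubleCounting

variable {V : Type*} {L : Finset (Set V)} {S : Finset V} {k : ℕ}

open Classical in
/-- The members of `L` that meet `S`. -/
def linesMeeting (L : Finset (Set V)) (S : Finset V) : Finset (Set V) := {ℓ ∈ L | ∃ p ∈ S, p ∈ ℓ}

@[simp]
lemma mem_linesMeeting {ℓ : Set V} : ℓ ∈ linesMeeting L S ↔ ℓ ∈ L ∧ ∃ p ∈ S, p ∈ ℓ := by
  simp [linesMeeting]

lemma IsRich.mono_points {S' : Finset V} (h : IsRich k L S) (hS : S' ⊆ S) : IsRich k L S' :=
  fun p hp => h p (hS hp)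

lemma IsRich.isRich_linesMeeting (h : IsRich k L S) : IsRich k (linesMeeting L S) S := by
  intro p hp
  refine (h p hp).trans (Finset.card_le_card fun ℓ hℓ => ?_)
  rw [mem_linesThrough] at hℓ
  exact mem_linesThrough.2 ⟨mem_linesMeeting.2 ⟨hℓ.1, p, hp, hℓ.2⟩, hℓ.2⟩

variable [AddCommGroup V] [Module ℝ V]

lemma IsRich.card_mul_sq_le (hL : ∀ ℓ ∈ L, IsLine ℓ) (hk : 2 ≤ k) (hS : IsRich k L S) :
    S.card * k ^ 2 ≤ 2 * L.card ^ 2 := by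
  classical
  have hdisj : (S : Set V).PairwiseDisjoint fun p => (linesThrough L p).offDiag := by
    intro p _ q _ hpq
    rw [Function.onFun, Finset.disjoint_left]
    rintro ⟨ℓ, ℓ'⟩ hp hq
    simp only [Finset.mem_offDiag, mem_linesThrough] at hp hq
    exact hp.2.2 ((hL ℓ hp.1.1).eq_of_mem (hL ℓ' hp.2.1.1) hpq hp.1.2 hq.1.2 hp.2.1.2 hq.2.1.2)
  have hsub : (S.biUnion fun p => (linesThrough L p).offDiag) ⊆ L ×ˢ L := by
    refine Finset.biUnion_subset.2 fun p _ x hx => ?_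
    simp only [Finset.mem_offDiag, mem_linesThrough] at hx
    exact Finset.mem_product.2 ⟨hx.1.1, hx.2.1.1⟩
  have hpoint : ∀ p ∈ S, k * (k - 1) ≤ ((linesThrough L p).offDiag).card := by
    intro p hp
    rw [Finset.offDiag_card, ← Nat.mul_sub_one]
    exact Nat.mul_le_mul (hS p hp) (Nat.sub_le_sub_right (hS p hp) 1)
  have hpairs : S.card * (k * (k - 1)) ≤ L.card ^ 2 :=
    calc S.card * (k * (k - 1)) ≤ ∑ p ∈ S, ((linesThrough L p).offDiag).card := by
          simpa using Finset.card_nsmul_le_sum S _ _ hpoint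
      _ = (S.biUnion fun p => (linesThrough L p).offDiag).card :=
          (Finset.card_biUnion hdisj).symm
      _ ≤ (L ×ˢ L).card := Finset.card_le_card hsub
      _ = L.card ^ 2 := by rw [Finset.card_product, sq]
  calc S.card * k ^ 2 ≤ S.card * (k * (2 * (k - 1))) := by
        rw [sq]
        gcongr
        lia
    _ = 2 * (S.card * (k * (k - 1))) := by ring
    _ ≤ 2 * L.card ^ 2 := Nat.mul_le_mul_left 2 hpairs

lemma card_linesMeeting_erase_linesThrough_le [DecidableEq V] (hL : ∀ ℓ ∈ L, IsLine ℓ) (p : V) :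
    (linesMeeting (linesThrough L p) (S.erase p)).card ≤ S.card := by
  refine Finset.card_le_card_of_forall_subsingleton (fun ℓ q => q ≠ p ∧ q ∈ ℓ) ?_ ?_
  · intro ℓ hℓ
    simp only [mem_linesMeeting, Finset.mem_erase] at hℓ
    obtain ⟨-, q, ⟨hqp, hq⟩, hqℓ⟩ := hℓ
    exact ⟨q, hq, hqp, hqℓ⟩
  · intro q _ ℓ hℓ ℓ' hℓ'
    simp only [Set.mem_ofPred_eq, mem_linesMeeting, mem_linesThrough] at hℓ hℓ'
    exact (hL ℓ hℓ.1.1.1).eq_of_mem (hL ℓ' hℓ'.1.1.1) hℓ.2.1 hℓ.2.2 hℓ.1.1.2 hℓ'.2.2 hℓ'.1.1.2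

lemma IsRich.card_mul_le (hL : ∀ ℓ ∈ L, IsLine ℓ) (hS : IsRich k L S) (hk : 2 * S.card ≤ k) :
    S.card * k ≤ 2 * (linesMeeting L S).card := by
  classical
  let ownLines p := linesThrough L p \ linesMeeting (linesThrough L p) (S.erase p)
  have hpoint : ∀ p ∈ S, k ≤ 2 * (ownLines p).card := by
    intro p hp
    have := hS p hp
    have := card_linesMeeting_erase_linesThrough_le (S := S) hL p
    have := Finset.le_card_sdiff (linesMeeting (linesThrough L p) (S.erase p)) (linesThrough L p)
    lia
  have hdisj : (S : Set V).PairwiseDisjoint ownLines := by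
    intro p _ q hq hpq
    rw [Function.onFun, Finset.disjoint_left]
    intro ℓ hℓp hℓq
    simp only [ownLines, Finset.mem_sdiff, mem_linesThrough, mem_linesMeeting] at hℓp hℓq
    exact hℓp.2 ⟨hℓp.1, q, Finset.mem_erase.2 ⟨hpq.symm, hq⟩, hℓq.1.2⟩
  have hsub : S.biUnion ownLines ⊆ linesMeeting L S := by
    refine Finset.biUnion_subset.2 fun p hp ℓ hℓ => ?_
    have := mem_linesThrough.1 (Finset.mem_sdiff.1 hℓ).1
    exact mem_linesMeeting.2 ⟨this.1, p, hp, this.2⟩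
  calc S.card * k ≤ ∑ p ∈ S, 2 * (ownLines p).card := by
        simpa using Finset.card_nsmul_le_sum S _ _ hpoint
    _ = 2 * (S.biUnion ownLines).card := by rw [← Finset.mul_sum, Finset.card_biUnion hdisj]
    _ ≤ _ := Nat.mul_le_mul_left 2 (Finset.card_le_card hsub)

end DoubleCounting

section Cells

variable {d : ℕ} {L : Finset (Set (Fin d → ℝ))} {S : Finset (Fin d → ℝ)} {ι : Type*}

open Classical in
/-- The finite sets `cl c` for `c ∈ C` are the cells into which a polynomial `f` of degree
comparable to `n` splits the part of `S` off the hypersurface `f = 0`: each cell contains a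
fraction `n ^ (-d)` of the points, and each member of `L` enters few cells. -/
structure IsCellDecomposition (L : Finset (Set (Fin d → ℝ))) (S : Finset (Fin d → ℝ)) (n : ℕ)
    (f : MvPolynomial (Fin d) ℝ) (C : Finset ι) (cl : ι → Finset (Fin d → ℝ)) : Prop where
  ne_zero : f ≠ 0
  totalDegree_le : f.totalDegree ≤ 2 * d ^ 2 * n
  subset : ∀ c, cl c ⊆ S
  card_le : ∀ c, n ^ d * (cl c).card ≤ S.card
  card_le_add_sum : S.card ≤ {p ∈ S | eval p f = 0}.card + ∑ c ∈ C, (cl c).card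
  sum_card_linesMeeting_le :
    ∑ c ∈ C, (linesMeeting L (cl c)).card ≤ L.card * ((2 * d ^ 2 + 1) * n)

lemma eval_prod_range_ne_zero_iff {f : ℕ → MvPolynomial (Fin d) ℝ} {J : ℕ} {p : Fin d → ℝ} :
    eval p (∏ i ∈ Finset.range J, f i) ≠ 0 ↔ ∀ i < J, eval p (f i) ≠ 0 := by
  simp [map_prod, Finset.prod_ne_zero_iff]

lemma IsLine.card_cells_le {ℓ : Set (Fin d → ℝ)} (hℓ : IsLine ℓ)
    (f : ℕ → MvPolynomial (Fin d) ℝ) (J : ℕ) (C : Finset (Finset ℕ))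
    [DecidablePred fun c => ∃ p ∈ cell f J S c, p ∈ ℓ] :
    (C.filter fun c => ∃ p ∈ cell f J S c, p ∈ ℓ).card ≤
      (∏ i ∈ Finset.range J, f i).totalDegree + 1 := by
  classical
  set T := S.filter fun p => p ∈ ℓ ∧ ∀ i < J, eval p (f i) ≠ 0
  have hsub : (C.filter fun c => ∃ p ∈ cell f J S c, p ∈ ℓ) ⊆ T.image (positiveSet f J) := by
    intro c hc
    obtain ⟨-, p, hp, hpℓ⟩ := Finset.mem_filter.1 hc
    obtain ⟨hpS, hp0, rfl⟩ := mem_cell.1 hp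
    exact Finset.mem_image_of_mem _ (Finset.mem_filter.2 ⟨hpS, hpℓ, hp0⟩)
  refine (Finset.card_le_card hsub).trans ?_
  rcases T.eq_empty_or_nonempty with hT | ⟨p, hp⟩
  · simp [hT]
  · obtain ⟨-, hpℓ, hp0⟩ := Finset.mem_filter.1 hp
    exact hℓ.card_image_positiveSet_le
      (fun hv => eval_prod_range_ne_zero_iff.2 hp0 (hv p hpℓ)) fun x hx =>
        (Finset.mem_filter.1 hx).2

theorem exists_isCellDecomposition (hd : d ≠ 0) (hL : ∀ ℓ ∈ L, IsLine ℓ) (S : Finset (Fin d → ℝ))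
    (I : ℕ) : ∃ (f : MvPolynomial (Fin d) ℝ) (C : Finset (Finset ℕ))
      (cl : Finset ℕ → Finset (Fin d → ℝ)), IsCellDecomposition L S (2 ^ I) f C cl := by
  classical
  obtain ⟨f, hf0, hfdeg, hfcell⟩ := exists_polynomial_partition hd S (d * I)
  have hdeg := totalDegree_prod_range_le hfdeg I
  refine ⟨∏ i ∈ Finset.range (d * I), f i, (Finset.range (d * I)).powerset, cell f (d * I) S,
    Finset.prod_ne_zero_iff.2 fun i _ => hf0 i, hdeg, fun c => cell_subset, fun c => ?_, ?_, ?_⟩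
  · rw [← pow_mul, mul_comm I]
    exact hfcell c
  · rw [← Finset.card_filter_add_card_filter_not (s := S)
      fun p => eval p (∏ i ∈ Finset.range (d * I), f i) = 0]
    refine Nat.add_le_add ?_ ((Finset.card_le_card fun p hp => ?_).trans Finset.card_biUnion_le)
    · convert le_rfl
    obtain ⟨hpS, hp0⟩ := Finset.mem_filter.1 hp
    exact Finset.mem_biUnion.2 ⟨positiveSet f (d * I) p, Finset.mem_powerset.2 positiveSet_subset,
      mem_cell.2 ⟨hpS, eval_prod_range_ne_zero_iff.1 hp0, rfl⟩⟩
  · calc ∑ c ∈ (Finset.range (d * I)).powerset, (linesMeeting L (cell f (d * I) S c)).card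
        = ∑ ℓ ∈ L, ((Finset.range (d * I)).powerset.filter
            fun c => ∃ p ∈ cell f (d * I) S c, p ∈ ℓ).card := by
          simp only [linesMeeting, Finset.card_filter]
          exact Finset.sum_comm
      _ ≤ L.card * ((2 * d ^ 2 + 1) * 2 ^ I) := by
          refine (Finset.sum_le_card_nsmul _ _ _ fun ℓ hℓ => ?_).trans_eq (smul_eq_mul _ _)
          refine ((hL ℓ hℓ).card_cells_le f (d * I) _).trans ?_
          have := Nat.one_le_two_pow (n := I)
          lia

end Cells

section CellBounds

variable {L : Finset (Set (Fin 3 → ℝ))} {S : Finset (Fin 3 → ℝ)} {ι : Type*} {n k : ℕ}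
  {f : MvPolynomial (Fin 3) ℝ} {C : Finset ι} {cl : ι → Finset (Fin 3 → ℝ)}

-- A cell met by few lines is bounded by pairs of lines, one met by many lines by its share of `S`.
lemma IsCellDecomposition.mul_sum_card_mul_sq_le (h : IsCellDecomposition L S n f C cl)
    (hL : ∀ ℓ ∈ L, IsLine ℓ) (hk : 2 ≤ k) (hS : IsRich k L S) (hn : 0 < n) (hL₀ : 0 < L.card) :
    4 * n * ((∑ c ∈ C, (cl c).card) * k ^ 2) ≤ n * (S.card * k ^ 2) + 11552 * L.card ^ 2 := by
  set X := L.card * (19 * n) with hX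
  let m c := (linesMeeting L (cl c)).card
  have hpairs (c) : (cl c).card * k ^ 2 ≤ 2 * m c ^ 2 :=
    (hS.mono_points (h.subset c)).isRich_linesMeeting.card_mul_sq_le
      (fun ℓ hℓ => hL ℓ (mem_linesMeeting.1 hℓ).1) hk
  have hcell (c) : 4 * X * (k ^ 2 * n ^ 3) * (cl c).card ≤
      m c * (S.card * k ^ 2 * n ^ 3 + 32 * X ^ 2) := by
    rcases le_total (m c * n ^ 3) (4 * X) with hfew | hmany
    · calc 4 * X * (k ^ 2 * n ^ 3) * (cl c).card = 4 * X * n ^ 3 * ((cl c).card * k ^ 2) := by ring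
        _ ≤ 4 * X * n ^ 3 * (2 * m c ^ 2) := Nat.mul_le_mul_left _ (hpairs c)
        _ = 8 * X * m c * (m c * n ^ 3) := by ring
        _ ≤ 8 * X * m c * (4 * X) := Nat.mul_le_mul_left _ hfew
        _ = m c * (32 * X ^ 2) := by ring
        _ ≤ _ := Nat.mul_le_mul_left _ (Nat.le_add_left _ _)
    · calc 4 * X * (k ^ 2 * n ^ 3) * (cl c).card
          ≤ m c * n ^ 3 * (k ^ 2 * n ^ 3) * (cl c).card := by gcongr
        _ = m c * (n ^ 3 * (cl c).card * k ^ 2 * n ^ 3) := by ring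
        _ ≤ m c * (S.card * k ^ 2 * n ^ 3) := by
          gcongr
          exact h.card_le c
        _ ≤ _ := Nat.mul_le_mul_left _ (Nat.le_add_right _ _)
  have hsum : 4 * X * (k ^ 2 * n ^ 3) * ∑ c ∈ C, (cl c).card ≤
      X * (S.card * k ^ 2 * n ^ 3 + 32 * X ^ 2) := by
    rw [Finset.mul_sum]
    refine (Finset.sum_le_sum fun c _ => hcell c).trans ?_
    rw [← Finset.sum_mul]
    exact Nat.mul_le_mul_right _ h.sum_card_linesMeeting_le
  refine le_of_mul_le_mul_left (a := X * n ^ 2) ?_ (by positivity)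
  calc _ = 4 * X * (k ^ 2 * n ^ 3) * ∑ c ∈ C, (cl c).card := by ring
    _ ≤ _ := hsum
    _ = _ := by rw [hX]; ring

lemma IsCellDecomposition.sum_card_mul_le (h : IsCellDecomposition L S n f C cl)
    (hL : ∀ ℓ ∈ L, IsLine ℓ) (hS : IsRich k L S) (hn : 0 < n) (hSk : 2 * S.card ≤ n ^ 3 * k) :
    (∑ c ∈ C, (cl c).card) * k ≤ 38 * n * L.card := by
  have hcell (c) : (cl c).card * k ≤ 2 * (linesMeeting L (cl c)).card := by
    refine (hS.mono_points (h.subset c)).card_mul_le hL ?_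
    refine le_of_mul_le_mul_left (a := n ^ 3) ?_ (by positivity)
    have := h.card_le c
    lia
  calc (∑ c ∈ C, (cl c).card) * k = ∑ c ∈ C, (cl c).card * k := Finset.sum_mul _ _ _
    _ ≤ 2 * ∑ c ∈ C, (linesMeeting L (cl c)).card := by
      rw [Finset.mul_sum]
      exact Finset.sum_le_sum fun c _ => hcell c
    _ ≤ 2 * (L.card * (19 * n)) := Nat.mul_le_mul_left 2 h.sum_card_linesMeeting_le
    _ = 38 * n * L.card := by ring

end CellBounds

section Arithmetic

variable {m N k s u : ℝ}

lemma mul_sq_le_of_cell_bound (hN : 0 ≤ N) (hk : 0 ≤ k) (hu : 0 < u) (hum : 720 * u ≤ m)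
    (hmu : m ≤ 1440 * u) (hmN : m ≤ N)
    (h : 3 * u * (s * k ^ 2) ≤ 4 * u * (1080 * u * m ^ 2 * k + 116640 * 10 ^ 8 * N * u ^ 2 +
      24 * m ^ 2 * N) + 11552 * m ^ 4) :
    s * k ^ 2 ≤ 2 * m ^ 3 * k + 36 * 10 ^ 6 * N * m ^ 2 := by
  have hm : 0 ≤ m := by linarith
  have hlinear : 720 * (u * (m ^ 2 * k)) ≤ m ^ 3 * k := by
    linarith [mul_le_mul_of_nonneg_right hum (by positivity : 0 ≤ m ^ 2 * k)]
  have hsquare : N * (518400 * u ^ 2) ≤ N * m ^ 2 :=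
    mul_le_mul_of_nonneg_left (by nlinarith) hN
  have hfourth : m ^ 4 ≤ 1440 * (u * (N * m ^ 2)) := by
    linarith [mul_le_mul_of_nonneg_right (mul_le_mul hmu hmN hm (by positivity)) (sq_nonneg m)]
  have hcancel := le_of_mul_le_mul_left (a := u) (b := 3 * (s * k ^ 2))
    (c := 4 * (1080 * u * m ^ 2 * k + 116640 * 10 ^ 8 * N * u ^ 2 + 24 * m ^ 2 * N) +
      11552 * 1440 * (N * m ^ 2)) (by linarith) hu
  have : 0 ≤ N * m ^ 2 := by positivity
  linarith

lemma mul_le_of_pow_three_mul_le (hm : 0 ≤ m) (hu : 0 < u) (hk : 10 ^ 7 ≤ k)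
    (hsm : s * k ≤ 4 * m ^ 3) (hus : u ^ 3 * k ≤ 16 * s) : 684 * u ≤ m := by
  by_contra! hlt
  have hcube : m ^ 3 ≤ (684 * u) ^ 3 := pow_le_pow_left₀ hm hlt.le 3
  have husk : u ^ 3 * k * k ≤ 16 * s * k := mul_le_mul_of_nonneg_right hus (by linarith)
  have hk2 : u ^ 3 * 10 ^ 14 ≤ u ^ 3 * (k * k) :=
    mul_le_mul_of_nonneg_left (by nlinarith) (by positivity)
  have : 0 < u ^ 3 := by positivity
  linarith

lemma mul_sq_le_of_surface_bound (hN : 0 ≤ N) (hk : 10 ^ 7 ≤ k) (hs : 0 < s) (hu : 0 < u)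
    (hm : 0 ≤ m) (hmN : m ≤ N) (hus : u ^ 3 * k ≤ 16 * s) (hum : 466560 * u ^ 2 ≤ m ^ 2)
    (h : s * k ^ 2 ≤ 1118 * u * m ^ 2 * k + 116640 * 10 ^ 8 * N * u ^ 2 + 24 * m ^ 2 * N) :
    s * k ^ 2 ≤ 10 ^ 8 * N * m ^ 2 := by
  by_contra! hlt
  have hk0 : 0 < k := by linarith
  have hNm : 0 ≤ N * m ^ 2 := by positivity
  -- The term linear in `u` dominates, and then the choice of `u` makes `s * k ^ 2` cubic in `m`.
  have hlinear : s * k ≤ 1600 * u * m ^ 2 := by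
    refine le_of_mul_le_mul_right ?_ hk0
    have : N * (466560 * u ^ 2) ≤ N * m ^ 2 := mul_le_mul_of_nonneg_left hum hN
    have : 0 ≤ u * m ^ 2 * k := by positivity
    nlinarith
  have hsquare : (s * k ^ 2) ^ 2 ≤ 1600 ^ 3 * 16 * m ^ 6 := by
    refine le_of_mul_le_mul_left (a := s * k) ?_ (by positivity)
    calc s * k * (s * k ^ 2) ^ 2 = (s * k) ^ 3 * k ^ 2 := by ring
      _ ≤ (1600 * u * m ^ 2) ^ 3 * k ^ 2 := by gcongr
      _ = 1600 ^ 3 * m ^ 6 * k * (u ^ 3 * k) := by ring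
      _ ≤ 1600 ^ 3 * m ^ 6 * k * (16 * s) := by gcongr
      _ = s * k * (1600 ^ 3 * 16 * m ^ 6) := by ring
  have hcubic : s * k ^ 2 ≤ 300000 * m ^ 3 := by
    refine (sq_le_sq₀ (by positivity) (by positivity)).1 (hsquare.trans ?_)
    have : 0 ≤ m ^ 6 := by positivity
    linarith
  have : m ^ 3 ≤ N * m ^ 2 := by nlinarith [mul_le_mul_of_nonneg_right hmN (sq_nonneg m)]
  linarith

lemma exists_two_mul_le_pow_three_mul {k : ℕ} (hk : k ≠ 0) (s : ℕ) :
    ∃ I, 2 * s ≤ (2 ^ I) ^ 3 * k ∧ (I = 0 ∨ (2 ^ I) ^ 3 * k ≤ 16 * s) := by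
  have hex : ∃ I, 2 * s ≤ (2 ^ I) ^ 3 * k := by
    refine ⟨2 * s, Nat.lt_two_pow_self.le.trans ?_⟩
    exact (Nat.le_self_pow (by norm_num) _).trans (Nat.le_mul_of_pos_right _ (by positivity))
  refine ⟨Nat.find hex, Nat.find_spec hex, ?_⟩
  rcases hI : Nat.find hex with _ | I
  · exact .inl rfl
  · have hlt := Nat.find_min hex (m := I) (by lia)
    right
    rw [pow_succ 2 I, mul_pow]
    lia

end Arithmetic

section RichPoints

variable {N k : ℕ} {L : Finset (Set (Fin 3 → ℝ))} {S : Finset (Fin 3 → ℝ)}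

/-- The incidence estimate of Guth and Katz: at most a constant times `N * L.card / k ^ 2` points
lie on at least `k` members of `L`, for all `k` between `2` and `N`. -/
def HasRichPointBound (N : ℕ) (L : Finset (Set (Fin 3 → ℝ))) : Prop :=
  ∀ k, 2 ≤ k → k ≤ N → ∀ S, IsRich k L S → S.card * k ^ 2 ≤ 10 ^ 8 * N * L.card

open Classical in
/-- A bound for the part of `S` on a surface of degree at most `18 * n`, the degree of the surface
cutting space into cells with parameter `n`, when `n` is small compared with `√L.card`. -/
def HasSurfaceBound (N k : ℕ) (L : Finset (Set (Fin 3 → ℝ))) (S : Finset (Fin 3 → ℝ)) : Prop :=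
  ∀ n : ℕ, 0 < n → 466560 * (n : ℝ) ^ 2 ≤ L.card → ∀ f : MvPolynomial (Fin 3) ℝ, f ≠ 0 →
    f.totalDegree ≤ 18 * n → ({p ∈ S | eval p f = 0}.card : ℝ) * k ^ 2 ≤
      1080 * n * L.card * k + 116640 * 10 ^ 8 * N * n ^ 2 + 24 * L.card * N

lemma card_mul_sq_le_of_surface (hL : ∀ ℓ ∈ L, IsLine ℓ) (hQ : FewLinesInQuadrics (3 * N) L)
    (ih : ∀ B ⊆ L, B.card < L.card → HasRichPointBound N B) {f : MvPolynomial (Fin 3) ℝ}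
    (hf : f ≠ 0) {D : ℕ} (hD : f.totalDegree ≤ D) (hDL : 90 * D ^ 2 < L.card) (hk : 2 ≤ k)
    (hkN : k ≤ N) (hSf : ∀ p ∈ S, eval p f = 0) (hS : IsRich k L S) :
    S.card * k ^ 2 ≤
      60 * D * L.card * k + 4 * (10 ^ 8 * N * (90 * D ^ 2)) + 24 * L.card * N := by
  obtain ⟨B, hBL, hB, S', hS', hcard⟩ := exists_isRich_subset_of_surface hf hL hQ hk hSf hS
  have hBD : B.card ≤ 90 * D ^ 2 := hB.trans (by gcongr)
  have hrich := ih B hBL (hBD.trans_lt hDL) _ (le_max_left _ _) (by lia) S' hS'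
  set k' := max 2 ((k + 1) / 2)
  have hS'card : S'.card * k ^ 2 ≤ 4 * (10 ^ 8 * N * (90 * D ^ 2)) :=
    calc S'.card * k ^ 2 ≤ S'.card * (2 * k') ^ 2 := by
          gcongr
          lia
      _ = 4 * (S'.card * k' ^ 2) := by ring
      _ ≤ 4 * (10 ^ 8 * N * B.card) := Nat.mul_le_mul_left _ hrich
      _ ≤ _ := by gcongr
  have hdeg : 60 * f.totalDegree * L.card * k ≤ 60 * D * L.card * k := by gcongr
  have : 8 * L.card * (3 * N) = 24 * L.card * N := by ring
  lia

lemma hasSurfaceBound (hL : ∀ ℓ ∈ L, IsLine ℓ) (hQ : FewLinesInQuadrics (3 * N) L)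
    (ih : ∀ B ⊆ L, B.card < L.card → HasRichPointBound N B) (hk : 2 ≤ k) (hkN : k ≤ N)
    (hS : IsRich k L S) : HasSurfaceBound N k L S := by
  classical
  intro n hn hnL f hf hdeg
  have hDL : 90 * (18 * n) ^ 2 < L.card := by
    have : 466560 * n ^ 2 ≤ L.card := by exact_mod_cast hnL
    have : 0 < n ^ 2 := by positivity
    lia
  have h := card_mul_sq_le_of_surface (S := {p ∈ S | eval p f = 0}) hL hQ ih hf hdeg hDL hk hkN
    (fun p hp => (Finset.mem_filter.1 hp).2) (hS.mono_points (Finset.filter_subset _ _))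
  have h' := (Nat.cast_le (α := ℝ)).2 h
  push_cast at h'
  linarith

namespace HasSurfaceBound

variable {m : ℝ}

lemma card_mul_sq_le_add (h : HasSurfaceBound N k L S) (hL : ∀ ℓ ∈ L, IsLine ℓ) (hk : 2 ≤ k)
    (hS : IsRich k L S) (hmL : m ^ 2 = L.card) (hm : 720 ≤ m) (hmN : m ≤ N) :
    (S.card : ℝ) * k ^ 2 ≤ 2 * m ^ 3 * k + 36 * 10 ^ 6 * N * m ^ 2 := by
  obtain ⟨I, hIm, hmI⟩ := exists_nat_pow_near (x := m / 720) (y := 2) (by linarith) (by norm_num)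
  rw [le_div_iff₀ (by norm_num)] at hIm
  rw [div_lt_iff₀ (by norm_num), pow_succ] at hmI
  have hL₀ : 0 < L.card := by
    rw [← Nat.cast_pos (α := ℝ), ← hmL]
    positivity
  obtain ⟨f, C, cl, hcells⟩ := exists_isCellDecomposition three_ne_zero hL S I
  have hoff := (Nat.cast_le (α := ℝ)).2
    (hcells.mul_sum_card_mul_sq_le hL hk hS (by positivity) hL₀)
  have hsplit := (Nat.cast_le (α := ℝ)).2 hcells.card_le_add_sum
  have hu : (0 : ℝ) < 2 ^ I := by positivity
  have hon := h (2 ^ I) (by positivity) (by push_cast; nlinarith) f hcells.ne_zero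
    hcells.totalDegree_le
  push_cast at hoff hsplit hon
  rw [← hmL] at hoff hon
  refine mul_sq_le_of_cell_bound (u := 2 ^ I) (by positivity) (by positivity) hu (by linarith)
    (by linarith) hmN ?_
  have hsplit' := mul_le_mul_of_nonneg_right hsplit (by positivity : (0 : ℝ) ≤ 4 * 2 ^ I * k ^ 2)
  have hon' := mul_le_mul_of_nonneg_right hon (by positivity : (0 : ℝ) ≤ 4 * 2 ^ I)
  linarith

lemma card_mul_sq_le_of_two_mul_card_le (h : HasSurfaceBound N k L S) (hL : ∀ ℓ ∈ L, IsLine ℓ)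
    (hS : IsRich k L S) {I : ℕ} (hI : 2 * S.card ≤ (2 ^ I) ^ 3 * k)
    (hIL : 466560 * ((2 : ℝ) ^ I) ^ 2 ≤ L.card) :
    (S.card : ℝ) * k ^ 2 ≤
      1118 * 2 ^ I * L.card * k + 116640 * 10 ^ 8 * N * (2 ^ I) ^ 2 + 24 * L.card * N := by
  obtain ⟨f, C, cl, hcells⟩ := exists_isCellDecomposition three_ne_zero hL S I
  have hoff := (Nat.cast_le (α := ℝ)).2 (hcells.sum_card_mul_le hL hS (by positivity) hI)
  have hsplit := (Nat.cast_le (α := ℝ)).2 hcells.card_le_add_sum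
  have hon := h (2 ^ I) (by positivity) (by exact_mod_cast hIL) f hcells.ne_zero
    hcells.totalDegree_le
  push_cast at hoff hsplit hon
  have hsplit' := mul_le_mul_of_nonneg_right hsplit (sq_nonneg (k : ℝ))
  have hoff' := mul_le_mul_of_nonneg_right hoff (Nat.cast_nonneg k)
  linarith

-- A first partition, tuned to the number of lines, bounds `S`; the second is tuned to that bound.
lemma card_mul_sq_le (h : HasSurfaceBound N k L S) (hL : ∀ ℓ ∈ L, IsLine ℓ) (hk : 2 ≤ k)
    (hkN : k ≤ N) (hS : IsRich k L S) (hmL : m ^ 2 = L.card) (hm : 720 ≤ m) (hmN : m ≤ N) :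
    (S.card : ℝ) * k ^ 2 ≤ 10 ^ 8 * N * m ^ 2 := by
  have hfirst := h.card_mul_sq_le_add hL hk hS hmL hm hmN
  have hNm : 0 ≤ N * m ^ 2 := by positivity
  have hcube : m ^ 3 ≤ N * m ^ 2 := by
    linarith [mul_le_mul_of_nonneg_right hmN (sq_nonneg m)]
  rcases lt_or_ge (k : ℝ) (10 ^ 7) with hk7 | hk7
  · linarith [mul_le_mul hcube hk7.le (Nat.cast_nonneg k) hNm]
  by_contra! hlt
  have hk0 : (0 : ℝ) < k := by linarith
  have hs0 : (0 : ℝ) < S.card := pos_of_mul_pos_left (by linarith : 0 < (S.card : ℝ) * k ^ 2)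
    (by positivity)
  have hsm : S.card * k ≤ 4 * m ^ 3 := le_of_mul_le_mul_right (by linarith) hk0
  obtain ⟨I, hI, rfl | hIs⟩ := exists_two_mul_le_pow_three_mul (k := k) (by lia) S.card
  · have hsecond := h.card_mul_sq_le_of_two_mul_card_le hL hS hI (by rw [← hmL]; nlinarith)
    have hkN' := mul_le_mul_of_nonneg_left (Nat.cast_le (α := ℝ).2 hkN) (sq_nonneg m)
    have hNm' : N * 466560 ≤ N * m ^ 2 := by
      gcongr
      nlinarith
    rw [← hmL] at hsecond
    linarith
  · have hIs' : ((2 : ℝ) ^ I) ^ 3 * k ≤ 16 * S.card := by exact_mod_cast hIs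
    have hIm := mul_le_of_pow_three_mul_le (by linarith) (by positivity) hk7 hsm hIs'
    have hIL : 466560 * ((2 : ℝ) ^ I) ^ 2 ≤ m ^ 2 := by
      nlinarith [pow_le_pow_left₀ (by positivity) hIm 2]
    have hsecond := h.card_mul_sq_le_of_two_mul_card_le hL hS hI (hmL ▸ hIL)
    rw [← hmL] at hsecond
    exact hlt.not_ge (mul_sq_le_of_surface_bound (by positivity) hk7 hs0 (by positivity)
      (by linarith) hmN hIs' hIL hsecond)

end HasSurfaceBound

lemma FewLinesInQuadrics.mono {Q : ℕ} {B : Finset (Set (Fin 3 → ℝ))}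
    (h : FewLinesInQuadrics Q L) (hB : B ⊆ L) : FewLinesInQuadrics Q B := by
  intro q hq hdeg
  refine (Finset.card_le_card fun ℓ hℓ => ?_).trans (h q hq hdeg)
  rw [mem_linesIn] at hℓ ⊢
  exact ⟨hB hℓ.1, hℓ.2⟩

theorem FewLinesInQuadrics.hasRichPointBound (hQ : FewLinesInQuadrics (3 * N) L)
    (hL : ∀ ℓ ∈ L, IsLine ℓ) (hLN : L.card ≤ N ^ 2) : HasRichPointBound N L := by
  induction hM : L.card using Nat.strong_induction_on generalizing L with
  | _ M IH =>
  subst hM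
  have ih : ∀ B ⊆ L, B.card < L.card → HasRichPointBound N B := fun B hBL hB =>
    IH B.card hB (hQ.mono hBL) (fun ℓ hℓ => hL ℓ (hBL hℓ)) (hB.le.trans hLN) rfl
  intro k hk hkN S hS
  set m := √(L.card : ℝ)
  have hmL : m ^ 2 = L.card := Real.sq_sqrt (Nat.cast_nonneg _)
  have hmN : m ≤ N := Real.sqrt_le_left (Nat.cast_nonneg N) |>.2 (by exact_mod_cast hLN)
  suffices (S.card : ℝ) * k ^ 2 ≤ 10 ^ 8 * N * m ^ 2 by
    rw [hmL] at this
    exact_mod_cast this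
  rcases lt_or_ge m 720 with hm | hm
  · have hpairs := (Nat.cast_le (α := ℝ)).2 (hS.card_mul_sq_le hL hk)
    push_cast at hpairs
    rw [← hmL] at hpairs
    have hm2 : m * m ≤ 720 * N := mul_le_mul hm.le hmN (Real.sqrt_nonneg _) (by norm_num)
    have : 0 ≤ N * m ^ 2 := by positivity
    linarith [mul_le_mul_of_nonneg_right hm2 (sq_nonneg m)]
  · exact (hasSurfaceBound hL hQ ih hk hkN hS).card_mul_sq_le hL hk hkN hS hmL hm hmN

end RichPoints

open ComplexConjugate
open scoped Finset

section MoebiusLines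

variable {a b c d : ℍ} {v : Fin 3 → ℝ} {q : MvPolynomial (Fin 3) ℝ} {e : ℝ}
  {M : Fin 3 → Fin 3 → ℝ}

/-- The matrices `!![v 0, v 1; v 2, 1]` whose Möbius transformation maps `a` to `b`. In these
coordinates on the projective space of real `2 × 2` matrices this is a line. -/
def moebiusLine (a b : ℍ) : Set (Fin 3 → ℝ) := {v | (v 0 : ℂ) * a + v 1 = b * (v 2 * a + 1)}

/-- The point of `moebiusLine a b` with third coordinate `0`. -/
def moebiusLinePoint (a b : ℍ) : Fin 3 → ℝ := ![b.im / a.im, b.re - a.re * b.im / a.im, 0]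

/-- The direction of `moebiusLine a b` with third coordinate `1`. -/
def moebiusLineDirection (a b : ℍ) : Fin 3 → ℝ :=
  ![b.re + b.im * a.re / a.im, -b.im * (a.re ^ 2 + a.im ^ 2) / a.im, 1]

lemma mem_moebiusLine : v ∈ moebiusLine a b ↔ (v 0 : ℂ) * a + v 1 = b * (v 2 * a + 1) := Iff.rfl

lemma moebius_eq_iff_re_im (a b : ℍ) (x y z w : ℝ) :
    (x : ℂ) * a + y = b * (z * a + w) ↔
      x * a.re + y = b.re * (z * a.re + w) - b.im * (z * a.im) ∧
        x * a.im = b.re * (z * a.im) + b.im * (z * a.re + w) := by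
  simp [Complex.ext_iff]

lemma mem_moebiusLine_iff_re_im : v ∈ moebiusLine a b ↔
    v 0 * a.re + v 1 = b.re * (v 2 * a.re + 1) - b.im * (v 2 * a.im) ∧
      v 0 * a.im = b.re * (v 2 * a.im) + b.im * (v 2 * a.re + 1) := by
  simpa [mem_moebiusLine] using moebius_eq_iff_re_im a b (v 0) (v 1) (v 2) 1

lemma moebiusLine_eq_range (a b : ℍ) : moebiusLine a b =
    Set.range fun t : ℝ => moebiusLinePoint a b + t • moebiusLineDirection a b := by
  have ha := a.im_ne_zero
  ext v
  rw [mem_moebiusLine_iff_re_im]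
  constructor
  · rintro ⟨hre, him⟩
    have hv0 : v 0 = (b.re * (v 2 * a.im) + b.im * (v 2 * a.re + 1)) / a.im :=
      eq_div_of_mul_eq ha him
    refine ⟨v 2, funext fun i => ?_⟩
    fin_cases i
    · suffices b.im / a.im + v 2 * (b.re + b.im * a.re / a.im) = v 0 by
        simpa [moebiusLinePoint, moebiusLineDirection]
      rw [hv0]
      field_simp
      ring
    · suffices b.re - a.re * b.im / a.im + v 2 * (-b.im * (a.re ^ 2 + a.im ^ 2) / a.im) = v 1 by
        simpa [moebiusLinePoint, moebiusLineDirection]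
      rw [eq_sub_of_add_eq' hre, hv0]
      field_simp
      ring
    · simp [moebiusLinePoint, moebiusLineDirection]
  · rintro ⟨t, rfl⟩
    simp only [moebiusLinePoint, moebiusLineDirection, Pi.add_apply, Pi.smul_apply, smul_eq_mul,
      Matrix.cons_val_zero, Matrix.cons_val_one, Matrix.cons_val]
    constructor <;> field_simp <;> ring

lemma moebiusLinePoint_mem (a b : ℍ) : moebiusLinePoint a b ∈ moebiusLine a b := by
  rw [moebiusLine_eq_range]
  exact ⟨0, by simp⟩

lemma isLine_moebiusLine (a b : ℍ) : IsLine (moebiusLine a b) :=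
  ⟨_, _, fun h => by simpa [moebiusLineDirection] using congrFun h 2, moebiusLine_eq_range a b⟩

lemma eq_of_mem_moebiusLine (hb : v ∈ moebiusLine a b) (hd : v ∈ moebiusLine a d) : b = d := by
  rw [mem_moebiusLine] at hb hd
  have hne : (v 2 : ℂ) * a + 1 ≠ 0 := by
    simpa using a.linear_ne_zero (cd := ![v 2, 1]) (by simp)
  exact UpperHalfPlane.ext (mul_right_cancel₀ hne (hb.symm.trans hd))

lemma eq_and_eq_of_moebiusLine_eq (h : moebiusLine a b = moebiusLine c d) : a = c ∧ b = d := by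
  obtain ⟨u, hu2, hu⟩ : ∃ u, u 2 = 0 ∧ u ∈ moebiusLine a b :=
    ⟨moebiusLinePoint a b, rfl, moebiusLinePoint_mem a b⟩
  obtain ⟨v, hv2, hv⟩ : ∃ v, v 2 = 1 ∧ v ∈ moebiusLine a b :=
    ⟨moebiusLinePoint a b + (1 : ℝ) • moebiusLineDirection a b,
      by simp [moebiusLinePoint, moebiusLineDirection],
      by rw [moebiusLine_eq_range]; exact ⟨1, rfl⟩⟩
  have hac : a = c := by
    by_contra hac
    have hu' := h ▸ hu
    have hv' := h ▸ hv
    simp only [mem_moebiusLine, hu2, hv2, Complex.ofReal_zero, Complex.ofReal_one, zero_mul,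
      one_mul, zero_add, mul_one] at hu hv hu' hv'
    have hne : (a : ℂ) - c ≠ 0 := sub_ne_zero.2 fun h => hac (UpperHalfPlane.ext h)
    have hdiff : ((v 0 - u 0 : ℝ) : ℂ) = u 0 * (a + c) + u 1 := by
      refine mul_left_cancel₀ hne ?_
      push_cast
      linear_combination hv - hv' - hu + hu' - a * hu + c * hu'
    have hu0 : u 0 = 0 := by
      have him : u 0 * (a.im + c.im) = 0 := by simpa using (congrArg Complex.im hdiff).symm
      exact (mul_eq_zero.1 him).resolve_right (add_pos a.im_pos c.im_pos).ne'
    have hbim := congrArg Complex.im hu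
    simp only [hu0, Complex.ofReal_zero, zero_mul, zero_add, Complex.ofReal_im] at hbim
    exact b.im_ne_zero hbim.symm
  subst hac
  exact ⟨rfl, eq_of_mem_moebiusLine hu (h ▸ hu)⟩

/-- The quadrics that take the value `b ^ i * z ^ j / z ^ 2` at a complex point `v` with
`z * v 0 = b`, `v 1 = b` and `z * v 2 = 1`. -/
def segre : Matrix (Fin 3) (Fin 3) (MvPolynomial (Fin 3) ℝ) :=
  !![X 2 ^ 2, X 2, 1; X 0 * X 2, X 1 * X 2, X 1; X 0 ^ 2, X 0 * X 1, X 1 ^ 2]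

lemma mem_of_forall_monomial_mem {W : Submodule ℝ (MvPolynomial (Fin 3) ℝ)} {n : ℕ}
    (hW : ∀ x y z : ℕ, x + y + z ≤ n → X 0 ^ x * X 1 ^ y * X 2 ^ z ∈ W)
    (hq : q.totalDegree ≤ n) : q ∈ W := by
  rw [← support_sum_monomial_coeff q]
  refine W.sum_mem fun s hs => ?_
  rw [← mul_one (coeff s q), ← smul_eq_mul, ← smul_monomial, monomial_eq, C_1, one_mul,
    Finsupp.prod_fintype _ _ (by simp), Fin.prod_univ_three]
  refine W.smul_mem _ (hW _ _ _ ?_)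
  simpa [Finsupp.sum_fintype, Fin.sum_univ_three] using (le_totalDegree hs).trans hq

-- The determinant `X 0 - X 1 * X 2` is the one quadric that `segre` misses.
lemma exists_eq_sum_smul_segre (hq : q.totalDegree ≤ 2) :
    ∃ (e : ℝ) (M : Fin 3 → Fin 3 → ℝ),
      q = e • (X 0 - X 1 * X 2) + ∑ i, ∑ j, M i j • segre i j := by
  let W := Submodule.span ℝ
    (insert (X 0 - X 1 * X 2) (Set.range fun x : Fin 3 × Fin 3 => segre x.1 x.2))
  have hsegre (i j : Fin 3) : segre i j ∈ W :=
    Submodule.subset_span (Set.mem_insert_of_mem _ ⟨(i, j), rfl⟩)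
  have hX : (X 0 : MvPolynomial (Fin 3) ℝ) ∈ W := by
    simpa [segre] using W.add_mem (Submodule.subset_span (Set.mem_insert _ _)) (hsegre 1 1)
  have hmonomial (x y z : ℕ) (hxyz : x + y + z ≤ 2) : X 0 ^ x * X 1 ^ y * X 2 ^ z ∈ W := by
    have hx : x ≤ 2 := by lia
    have hy : y ≤ 2 := by lia
    have hz : z ≤ 2 := by lia
    interval_cases x <;> interval_cases y <;> interval_cases z <;> try omega
    · simpa [segre] using hsegre 0 2
    · simpa [segre] using hsegre 0 1
    · simpa [segre] using hsegre 0 0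
    · simpa [segre] using hsegre 1 2
    · simpa [segre] using hsegre 1 1
    · simpa [segre] using hsegre 2 2
    · simpa using hX
    · simpa [segre] using hsegre 1 0
    · simpa [segre] using hsegre 2 1
    · simpa [segre] using hsegre 2 0
  have hqW : q ∈ W := mem_of_forall_monomial_mem hmonomial hq
  obtain ⟨e, r, hr, rfl⟩ := Submodule.mem_span_insert.1 hqW
  obtain ⟨M, rfl⟩ := (Submodule.mem_span_range_iff_exists_fun ℝ).1 hr
  exact ⟨e, fun i j => M (i, j), by rw [Fintype.sum_prod_type]⟩

lemma VanishesOn.aeval_complex_eq_zero (h : VanishesOn q (moebiusLine a b)) (t : ℂ) :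
    aeval (fun i => (moebiusLinePoint a b i : ℂ) + t * moebiusLineDirection a b i) q = 0 := by
  have hcomp : aeval (fun i => (moebiusLinePoint a b i : ℂ) + t * moebiusLineDirection a b i) =
      (Polynomial.aeval t).comp (restrict (moebiusLinePoint a b) (moebiusLineDirection a b)) := by
    ext i
    simp [restrict, mul_comm t, add_comm]
  rw [moebiusLine_eq_range, vanishesOn_range_iff] at h
  rw [hcomp, AlgHom.comp_apply, h, map_zero]

-- Over `ℂ`, `moebiusLine a b` contains the matrix of rank one with image `b` and kernel `conj a`.
lemma exists_aeval_rank_one_eq_zero (h : VanishesOn q (moebiusLine a b)) :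
    ∃ v : Fin 3 → ℂ, -conj (a : ℂ) * v 0 = b ∧ v 1 = b ∧ -conj (a : ℂ) * v 2 = 1 ∧
      aeval v q = 0 := by
  have ha : (a.im : ℂ) ≠ 0 := Complex.ofReal_ne_zero.2 a.im_ne_zero
  set z : ℂ := -conj (a : ℂ) with hz
  have hz0 : z ≠ 0 := by simpa [hz] using a.ne_zero
  have hare : (a.re : ℂ) = -z + a.im * Complex.I := by simp [hz, Complex.ext_iff]
  have hbre : (b.re : ℂ) = b - b.im * Complex.I := by simp [Complex.ext_iff]
  refine ⟨_, ?_, ?_, ?_, h.aeval_complex_eq_zero z⁻¹⟩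
  · simp only [moebiusLinePoint, moebiusLineDirection, Matrix.cons_val_zero]
    push_cast
    rw [hare, hbre]
    field_simp
    ring
  · simp only [moebiusLinePoint, moebiusLineDirection, Matrix.cons_val_one, Matrix.cons_val_zero]
    push_cast
    rw [hare, hbre]
    field_simp
    linear_combination (-(b.im : ℂ) * a.im ^ 2) * Complex.I_sq
  · simp [moebiusLinePoint, moebiusLineDirection, hz0]

lemma sum_mul_pow_eq_zero_of_vanishesOn
    (h : VanishesOn (e • (X 0 - X 1 * X 2) + ∑ i, ∑ j, M i j • segre i j) (moebiusLine a b)) :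
    ∑ i : Fin 3, (b : ℂ) ^ (i : ℕ) * ∑ j : Fin 3, (-conj (a : ℂ)) ^ (j : ℕ) * M i j = 0 := by
  obtain ⟨v, hv0, hv1, hv2, hv⟩ := exists_aeval_rank_one_eq_zero h
  set z : ℂ := -conj (a : ℂ)
  have hdet : v 0 - v 1 * v 2 = 0 := by linear_combination -v 0 * hv2 + v 2 * hv0 - v 2 * hv1
  have hsegre (i j : Fin 3) :
      z ^ 2 * aeval v (segre i j) = (b : ℂ) ^ (i : ℕ) * z ^ (j : ℕ) := by
    fin_cases i <;> fin_cases j <;> simp [segre] <;> grind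
  have haeval : ∑ i, ∑ j, (M i j : ℂ) * aeval v (segre i j) = 0 := by
    simpa [hdet, Algebra.smul_def] using hv
  calc ∑ i : Fin 3, (b : ℂ) ^ (i : ℕ) * ∑ j : Fin 3, z ^ (j : ℕ) * M i j
      = z ^ 2 * ∑ i, ∑ j, (M i j : ℂ) * aeval v (segre i j) := by
        simp only [Finset.mul_sum, mul_left_comm (z ^ 2), hsegre]
        exact Finset.sum_congr rfl fun i _ => Finset.sum_congr rfl fun j _ => by ring
    _ = 0 := by rw [haeval, mul_zero]

lemma eq_zero_of_sum_pow_mul_eq_zero (hac : a ≠ c) {u : Fin 3 → ℝ}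
    (ha : ∑ j : Fin 3, (-conj (a : ℂ)) ^ (j : ℕ) * u j = 0)
    (hc : ∑ j : Fin 3, (-conj (c : ℂ)) ^ (j : ℕ) * u j = 0) : u = 0 := by
  -- `u` has real coefficients, so `-a` is a third root.
  have ha' : ∑ j : Fin 3, (-(a : ℂ)) ^ (j : ℕ) * u j = 0 := by
    simpa using congrArg conj ha
  have hinj : Function.Injective ![-conj (a : ℂ), -conj (c : ℂ), -(a : ℂ)] := by
    have hconj (x : ℍ) : conj (x : ℂ) ≠ a := fun h => by
      have him : -x.im = a.im := by simpa using congrArg Complex.im h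
      linarith [x.im_pos, a.im_pos]
    have hac' : conj (a : ℂ) ≠ conj (c : ℂ) := fun h =>
      hac (UpperHalfPlane.ext ((starRingEnd ℂ).injective h))
    simp [Function.Injective, Fin.forall_fin_succ, hconj, (hconj _).symm, hac', hac'.symm]
  have hu := Matrix.eq_zero_of_forall_index_sum_pow_mul_eq_zero
    (v := fun j => (u j : ℂ)) hinj (by simp [Fin.forall_fin_succ, ha, hc, ha'])
  exact funext fun j => by simpa using congrFun hu j

lemma eq_zero_of_vanishesOn_det (h : VanishesOn (e • (X 0 - X 1 * X 2)) (moebiusLine a b)) :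
    e = 0 := by
  simpa [moebiusLinePoint, a.im_ne_zero, b.im_ne_zero] using h _ (moebiusLinePoint_mem a b)

open Classical in
lemma sum_pow_mul_eq_zero_of_two_lt_card {B : Finset ℍ}
    (h : 2 < #{b ∈ B | VanishesOn (e • (X 0 - X 1 * X 2) + ∑ i, ∑ j, M i j • segre i j)
      (moebiusLine a b)}) (i : Fin 3) :
    ∑ j : Fin 3, (-conj (a : ℂ)) ^ (j : ℕ) * M i j = 0 := by
  obtain ⟨x, y, z, hx, hy, hz, hxy, hxz, hyz⟩ := Finset.two_lt_card_iff.1 h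
  simp only [Finset.mem_filter] at hx hy hz
  have hinj : Function.Injective ![(x : ℂ), y, z] := by
    simp [Function.Injective, Fin.forall_fin_succ, hxy, hxz, hyz, hxy.symm, hxz.symm, hyz.symm]
  refine congrFun (Matrix.eq_zero_of_forall_index_sum_pow_mul_eq_zero
    (v := fun i => ∑ j : Fin 3, (-conj (a : ℂ)) ^ (j : ℕ) * M i j) hinj fun k => ?_) i
  fin_cases k
  exacts [sum_mul_pow_eq_zero_of_vanishesOn hx.2, sum_mul_pow_eq_zero_of_vanishesOn hy.2,
    sum_mul_pow_eq_zero_of_vanishesOn hz.2]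

open Classical in
lemma card_vanishesOn_moebiusLine_le_two (hq : q ≠ 0) (hdeg : q.totalDegree ≤ 2) (hac : a ≠ c)
    {B : Finset ℍ} (ha : 2 < #{b ∈ B | VanishesOn q (moebiusLine a b)}) :
    #{b ∈ B | VanishesOn q (moebiusLine c b)} ≤ 2 := by
  obtain ⟨e, M, rfl⟩ := exists_eq_sum_smul_segre hdeg
  by_contra! hc
  have hM : M = 0 := funext fun i => eq_zero_of_sum_pow_mul_eq_zero hac
    (sum_pow_mul_eq_zero_of_two_lt_card ha i) (sum_pow_mul_eq_zero_of_two_lt_card hc i)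
  obtain ⟨b, hb⟩ := Finset.card_pos.1 (two_pos.trans ha)
  have hdet : VanishesOn (e • (X 0 - X 1 * X 2)) (moebiusLine a b) := by
    simpa [hM] using (Finset.mem_filter.1 hb).2
  exact hq (by simp [hM, eq_zero_of_vanishesOn_det hdet])

end MoebiusLines

section Arrangement

variable {A B : Finset ℍ} {n : ℕ}

open Classical in
/-- The Elekes–Sharir lines: one line of Möbius transformations for every pair in `A ×ˢ B`. -/
def moebiusLines (A B : Finset ℍ) : Finset (Set (Fin 3 → ℝ)) :=
  (A ×ˢ B).image fun x => moebiusLine x.1 x.2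

lemma mem_moebiusLines {ℓ : Set (Fin 3 → ℝ)} :
    ℓ ∈ moebiusLines A B ↔ ∃ a ∈ A, ∃ b ∈ B, moebiusLine a b = ℓ := by
  simp [moebiusLines, and_assoc]

lemma isLine_of_mem_moebiusLines {ℓ : Set (Fin 3 → ℝ)} (hℓ : ℓ ∈ moebiusLines A B) :
    IsLine ℓ := by
  obtain ⟨a, -, b, -, rfl⟩ := mem_moebiusLines.1 hℓ
  exact isLine_moebiusLine a b

lemma card_moebiusLines_le (hA : A.card ≤ n) (hB : B.card ≤ n) :
    (moebiusLines A B).card ≤ n ^ 2 := by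
  classical
  calc (moebiusLines A B).card ≤ A.card * B.card := by
        simpa [moebiusLines] using Finset.card_image_le (s := A ×ˢ B)
    _ ≤ n ^ 2 := by rw [sq]; exact Nat.mul_le_mul hA hB

lemma card_linesThrough_moebiusLines_le (A B : Finset ℍ) (p : Fin 3 → ℝ) :
    (linesThrough (moebiusLines A B) p).card ≤ A.card := by
  have hmaps (ℓ : Set (Fin 3 → ℝ)) (hℓ : ℓ ∈ linesThrough (moebiusLines A B) p) :
      ∃ a ∈ A, ∃ b, moebiusLine a b = ℓ ∧ p ∈ moebiusLine a b := by
    obtain ⟨hℓ, hp⟩ := mem_linesThrough.1 hℓ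
    obtain ⟨a, ha, b, -, rfl⟩ := mem_moebiusLines.1 hℓ
    exact ⟨a, ha, b, rfl, hp⟩
  choose! source hsource target hline hp using hmaps
  refine Finset.card_le_card_of_injOn source hsource fun ℓ hℓ m hm hsame => ?_
  have htarget : target ℓ = target m :=
    eq_of_mem_moebiusLine (hp ℓ hℓ) (hsame ▸ hp m hm)
  rw [← hline ℓ hℓ, ← hline m hm, hsame, htarget]

lemma fewLinesInQuadrics_moebiusLines (hA : A.card ≤ n) (hB : B.card ≤ n) :
    FewLinesInQuadrics (3 * n) (moebiusLines A B) := by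
  classical
  intro q hq hdeg
  let fiber (a : ℍ) : ℕ := #{b ∈ B | VanishesOn q (moebiusLine a b)}
  have hfiber : (linesIn (moebiusLines A B) q).card ≤ ∑ a ∈ A, fiber a := by
    have hsub : linesIn (moebiusLines A B) q ⊆
        A.biUnion fun a => {b ∈ B | VanishesOn q (moebiusLine a b)}.image (moebiusLine a) := by
      intro ℓ hℓ
      obtain ⟨hℓ, hvan⟩ := mem_linesIn.1 hℓ
      obtain ⟨a, ha, b, hb, rfl⟩ := mem_moebiusLines.1 hℓ
      exact Finset.mem_biUnion.2
        ⟨a, ha, Finset.mem_image_of_mem _ (Finset.mem_filter.2 ⟨hb, hvan⟩)⟩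
    exact (Finset.card_le_card hsub).trans
      (Finset.card_biUnion_le.trans (Finset.sum_le_sum fun a _ => Finset.card_image_le))
  refine hfiber.trans ?_
  by_cases hlarge : ∃ a ∈ A, 2 < fiber a
  · obtain ⟨a, ha, hfa⟩ := hlarge
    calc ∑ x ∈ A, fiber x = fiber a + ∑ x ∈ A.erase a, fiber x :=
          (Finset.add_sum_erase A _ ha).symm
      _ ≤ n + (A.erase a).card * 2 := by
          gcongr
          · exact (Finset.card_filter_le _ _).trans hB
          · exact Finset.sum_le_card_nsmul _ _ _ fun x hx =>
              card_vanishesOn_moebiusLine_le_two hq hdeg (Finset.ne_of_mem_erase hx).symm hfa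
      _ ≤ 3 * n := by linarith only [hA, Finset.card_erase_le (s := A) (a := a)]
  · push Not at hlarge
    calc ∑ x ∈ A, fiber x ≤ A.card * 2 := Finset.sum_le_card_nsmul _ _ _ hlarge
      _ ≤ 3 * n := by lia

end Arrangement

section MeetingPairs

variable {V : Type*} {L : Finset (Set V)} {N : ℕ}

lemma sum_sq_card_linesThrough_le_of_log_eq {L : Finset (Set (Fin 3 → ℝ))}
    {U : Finset (Fin 3 → ℝ)} (hL : HasRichPointBound N L) {j : ℕ} (hj : 1 ≤ j)
    (hjN : j ≤ Nat.log 2 N) (hU : ∀ p ∈ U, Nat.log 2 (linesThrough L p).card = j) :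
    ∑ p ∈ U, (linesThrough L p).card ^ 2 ≤ 4 * 10 ^ 8 * N * L.card := by
  have hpos (p : Fin 3 → ℝ) (hp : p ∈ U) : (linesThrough L p).card ≠ 0 := fun h => by
    simp [h, ← hU p hp] at hj
  have hN : N ≠ 0 := by
    rintro rfl
    exact absurd (hj.trans hjN) (by simp)
  have hrich : IsRich (2 ^ j) L U := fun p hp => hU p hp ▸ Nat.pow_log_le_self 2 (hpos p hp)
  have hbound : U.card * (2 ^ j) ^ 2 ≤ 10 ^ 8 * N * L.card :=
    hL _ (by simpa using Nat.pow_le_pow_right two_pos hj) (Nat.pow_le_of_le_log hN hjN) U hrich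
  calc ∑ p ∈ U, (linesThrough L p).card ^ 2 ≤ U.card * (2 ^ (j + 1)) ^ 2 := by
        refine Finset.sum_le_card_nsmul _ _ _ fun p hp => Nat.pow_le_pow_left ?_ 2
        exact hU p hp ▸ (Nat.lt_pow_succ_log_self one_lt_two _).le
    _ = 4 * (U.card * (2 ^ j) ^ 2) := by ring
    _ ≤ 4 * (10 ^ 8 * N * L.card) := Nat.mul_le_mul_left 4 hbound
    _ = 4 * 10 ^ 8 * N * L.card := by ring

lemma HasRichPointBound.sum_sq_card_linesThrough_le {L : Finset (Set (Fin 3 → ℝ))}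
    {U : Finset (Fin 3 → ℝ)} (hL : HasRichPointBound N L)
    (htwo : ∀ p ∈ U, 2 ≤ (linesThrough L p).card) (hN : ∀ p ∈ U, (linesThrough L p).card ≤ N) :
    ∑ p ∈ U, (linesThrough L p).card ^ 2 ≤ 4 * 10 ^ 8 * N * L.card * Nat.log 2 N := by
  have hmaps : ∀ p ∈ U, Nat.log 2 (linesThrough L p).card ∈ Finset.Icc 1 (Nat.log 2 N) :=
    fun p hp => Finset.mem_Icc.2 ⟨Nat.log_pos one_lt_two (htwo p hp), Nat.log_mono_right (hN p hp)⟩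
  rw [← Finset.sum_fiberwise_of_maps_to hmaps]
  refine (Finset.sum_le_card_nsmul _ _ _ fun j hj => ?_).trans_eq
    (by rw [Nat.card_Icc, Nat.add_sub_cancel, smul_eq_mul, mul_comm])
  exact sum_sq_card_linesThrough_le_of_log_eq hL (Finset.mem_Icc.1 hj).1 (Finset.mem_Icc.1 hj).2
    fun p hp => (Finset.mem_filter.1 hp).2

open Classical in
/-- The ordered pairs of distinct members of `L` that have a common point. -/
def meetingPairs (L : Finset (Set V)) : Finset (Set V × Set V) :=
  {x ∈ L.offDiag | (x.1 ∩ x.2).Nonempty}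

lemma mem_meetingPairs {x : Set V × Set V} :
    x ∈ meetingPairs L ↔ x.1 ∈ L ∧ x.2 ∈ L ∧ x.1 ≠ x.2 ∧ (x.1 ∩ x.2).Nonempty := by
  simp [meetingPairs, and_assoc]

lemma exists_card_meetingPairs_le_sum (L : Finset (Set V)) :
    ∃ U : Finset V, (∀ p ∈ U, 2 ≤ (linesThrough L p).card) ∧
      (meetingPairs L).card ≤ ∑ p ∈ U, (linesThrough L p).card ^ 2 := by
  classical
  have hmeet (x : Set V × Set V) (hx : x ∈ meetingPairs L) :
      ∃ p, x.1 ∈ linesThrough L p ∧ x.2 ∈ linesThrough L p ∧ x.1 ≠ x.2 := by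
    obtain ⟨h₁, h₂, hne, p, hp₁, hp₂⟩ := mem_meetingPairs.1 hx
    exact ⟨p, mem_linesThrough.2 ⟨h₁, hp₁⟩, mem_linesThrough.2 ⟨h₂, hp₂⟩, hne⟩
  choose p hp₁ hp₂ hne using hmeet
  let U := (meetingPairs L).attach.image fun x => p x.1 x.2
  refine ⟨U, ?_, ?_⟩
  · simp only [U, Finset.forall_mem_image]
    exact fun x _ => Finset.one_lt_card.2 ⟨_, hp₁ x x.2, _, hp₂ x x.2, hne x x.2⟩
  · have hsub : meetingPairs L ⊆ U.biUnion fun u => linesThrough L u ×ˢ linesThrough L u :=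
      fun x hx => Finset.mem_biUnion.2
        ⟨p x hx, Finset.mem_image_of_mem (fun x => p x.1 x.2) (Finset.mem_attach _ ⟨x, hx⟩),
          Finset.mem_product.2 ⟨hp₁ x hx, hp₂ x hx⟩⟩
    simpa [sq] using (Finset.card_le_card hsub).trans Finset.card_biUnion_le

lemma HasRichPointBound.card_meetingPairs_le {L : Finset (Set (Fin 3 → ℝ))}
    (hL : HasRichPointBound N L) (hN : ∀ p, (linesThrough L p).card ≤ N) :
    (meetingPairs L).card ≤ 4 * 10 ^ 8 * N * L.card * Nat.log 2 N := by
  obtain ⟨U, htwo, hle⟩ := exists_card_meetingPairs_le_sum L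
  exact hle.trans (hL.sum_sq_card_linesThrough_le htwo fun p _ => hN p)

lemma card_meetingPairs_moebiusLines_le {A B : Finset ℍ} {n : ℕ} (hA : A.card ≤ n)
    (hB : B.card ≤ n) :
    (meetingPairs (moebiusLines A B)).card ≤ 4 * 10 ^ 8 * n ^ 3 * Nat.log 2 n := by
  have hcard := card_moebiusLines_le hA hB
  have hbound : HasRichPointBound n (moebiusLines A B) :=
    (fewLinesInQuadrics_moebiusLines hA hB).hasRichPointBound
      (fun _ => isLine_of_mem_moebiusLines) hcard
  calc (meetingPairs (moebiusLines A B)).card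
      ≤ 4 * 10 ^ 8 * n * (moebiusLines A B).card * Nat.log 2 n :=
        hbound.card_meetingPairs_le fun p => (card_linesThrough_moebiusLines_le A B p).trans hA
    _ ≤ 4 * 10 ^ 8 * n * n ^ 2 * Nat.log 2 n := by gcongr
    _ = 4 * 10 ^ 8 * n ^ 3 * Nat.log 2 n := by ring

end MeetingPairs

section Homogeneity

variable {a b c d : ℍ}

lemma normSq_sub_mul_eq_of_dist_eq (h : dist a c = dist b d) :
    Complex.normSq (a - c) * (b.im * d.im) = Complex.normSq (b - d) * (a.im * c.im) := by
  have hpos (x y : ℍ) : 2 * x.im * y.im ≠ 0 :=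
    mul_ne_zero (mul_ne_zero two_ne_zero x.im_ne_zero) y.im_ne_zero
  have hcosh := congrArg Real.cosh h
  rw [UpperHalfPlane.cosh_dist, UpperHalfPlane.cosh_dist, add_right_inj,
    div_eq_div_iff (hpos a c) (hpos b d)] at hcosh
  rw [Complex.normSq_eq_norm_sq, Complex.normSq_eq_norm_sq, ← dist_eq_norm, ← dist_eq_norm]
  linarith

-- The condition at `a` determines `x` and `y` from `z` and `w`; the condition at `c` is then a
-- homogeneous linear system in `(z, w)`, which is singular exactly when the distances agree.
lemma exists_moebius_of_dist_eq (h : dist a c = dist b d) :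
    ∃ x y z w : ℝ, (z ≠ 0 ∨ w ≠ 0) ∧
      (x : ℂ) * a + y = b * (z * a + w) ∧ (x : ℂ) * c + y = d * (z * c + w) := by
  have ha := a.im_ne_zero
  let M : Matrix (Fin 2) (Fin 2) ℝ :=
    !![(b.re * a.im + b.im * a.re) * c.im - a.im * (d.re * c.im + d.im * c.re),
        b.im * c.im - a.im * d.im;
      (b.re * a.im + b.im * a.re) * c.re - b.im * (a.re ^ 2 + a.im ^ 2) -
          a.im * (c.re * d.re - c.im * d.im),
        b.im * (c.re - a.re) + a.im * (b.re - d.re)]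
  have hdet : M.det = 0 := by
    have hnormSq := normSq_sub_mul_eq_of_dist_eq h
    simp only [Complex.normSq_apply, Complex.sub_re, Complex.sub_im, UpperHalfPlane.coe_re,
      UpperHalfPlane.coe_im] at hnormSq
    rw [Matrix.det_fin_two_of]
    linear_combination -a.im * hnormSq
  obtain ⟨u, hu, hMu⟩ := Matrix.exists_mulVec_eq_zero_iff.2 hdet
  have him := congrFun hMu 0
  have hre := congrFun hMu 1
  simp only [M, Matrix.mulVec, dotProduct, Fin.sum_univ_two, Matrix.of_apply, Matrix.cons_val_zero,
    Matrix.cons_val_one, Pi.zero_apply] at him hre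
  refine ⟨(u 0 * (b.re * a.im + b.im * a.re) + u 1 * b.im) / a.im,
    (-u 0 * b.im * (a.re ^ 2 + a.im ^ 2) + u 1 * (b.re * a.im - a.re * b.im)) / a.im, u 0, u 1,
    ?_, ?_, ?_⟩
  · simpa [funext_iff, Fin.forall_fin_two, imp_iff_not_or] using hu
  · rw [moebius_eq_iff_re_im]
    constructor <;> field_simp <;> ring
  · rw [moebius_eq_iff_re_im]
    constructor <;> field_simp
    · linear_combination hre
    · linear_combination him

lemma exists_forall_ne_moebiusLine_inter_nonempty (h : dist a c = dist b d) :
    ∃ s : ℝ, ∀ t ≠ s, (moebiusLine (t +ᵥ a) b ∩ moebiusLine (t +ᵥ c) d).Nonempty := by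
  obtain ⟨x, y, z, w, hzw, ha, hc⟩ := exists_moebius_of_dist_eq h
  refine ⟨w / z, fun t ht => ?_⟩
  have hden : w - z * t ≠ 0 := by
    intro h0
    have hz : z ≠ 0 := by
      rintro rfl
      exact hzw.elim (absurd rfl) (absurd (by simpa using h0))
    exact ht (eq_div_of_mul_eq hz (by linarith))
  have hden' : (w : ℂ) - z * t ≠ 0 := by exact_mod_cast hden
  refine ⟨(w - z * t)⁻¹ • ![x, y - x * t, z], ?_, ?_⟩ <;>
  · simp only [mem_moebiusLine, UpperHalfPlane.coe_vadd, Pi.smul_apply, smul_eq_mul,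
      Matrix.cons_val_zero, Matrix.cons_val_one, Matrix.cons_val]
    push_cast
    field_simp
    first | linear_combination ha | linear_combination hc

open Classical in
/-- The pairs `((a, b), (c, d))` of pairs of points of `P` with `a ≠ c` such that the segments
`a c` and `b d` are congruent. -/
def distanceQuadruples (P : Finset ℍ) : Finset ((ℍ × ℍ) × ℍ × ℍ) :=
  {x ∈ (P ×ˢ P) ×ˢ P ×ˢ P | x.1.1 ≠ x.2.1 ∧ dist x.1.1 x.2.1 = dist x.1.2 x.2.2}

lemma mem_distanceQuadruples {P : Finset ℍ} : ((a, b), c, d) ∈ distanceQuadruples P ↔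
    (a ∈ P ∧ b ∈ P ∧ c ∈ P ∧ d ∈ P) ∧ a ≠ c ∧ dist a c = dist b d := by
  simp [distanceQuadruples, and_assoc]

-- The translation by `t` moves the finitely many common points of pairs of lines away from the
-- plane at infinity of the coordinates of `moebiusLine`.
lemma card_distanceQuadruples_le {P : Finset ℍ} {n : ℕ} (hP : P.card ≤ n) :
    (distanceQuadruples P).card ≤ 4 * 10 ^ 8 * n ^ 3 * Nat.log 2 n := by
  classical
  have hmeet (x : (ℍ × ℍ) × ℍ × ℍ) (hx : x ∈ distanceQuadruples P) : ∃ s : ℝ, ∀ t ≠ s,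
      (moebiusLine (t +ᵥ x.1.1) x.1.2 ∩ moebiusLine (t +ᵥ x.2.1) x.2.2).Nonempty :=
    exists_forall_ne_moebiusLine_inter_nonempty (mem_distanceQuadruples.1 hx).2.2
  choose! s hs using hmeet
  obtain ⟨t, ht⟩ := Infinite.exists_notMem_finset ((distanceQuadruples P).image s)
  let A := P.image (t +ᵥ ·)
  let lines (x : (ℍ × ℍ) × ℍ × ℍ) :=
    (moebiusLine (t +ᵥ x.1.1) x.1.2, moebiusLine (t +ᵥ x.2.1) x.2.2)
  have hlines : ∀ x ∈ distanceQuadruples P, lines x ∈ meetingPairs (moebiusLines A P) := by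
    intro x hx
    obtain ⟨⟨ha, hb, hc, hd⟩, hne, -⟩ := mem_distanceQuadruples.1 hx
    refine mem_meetingPairs.2 ⟨mem_moebiusLines.2 ⟨_, Finset.mem_image_of_mem _ ha, _, hb, rfl⟩,
      mem_moebiusLines.2 ⟨_, Finset.mem_image_of_mem _ hc, _, hd, rfl⟩, fun heq => hne ?_,
      hs x hx t fun h => ht (h ▸ Finset.mem_image_of_mem s hx)⟩
    exact vadd_left_cancel t (eq_and_eq_of_moebiusLine_eq heq).1
  have hinj : Set.InjOn lines (distanceQuadruples P) := by
    rintro ⟨⟨a, b⟩, c, d⟩ - ⟨⟨a', b'⟩, c', d'⟩ - heq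
    obtain ⟨haa, hbb⟩ := eq_and_eq_of_moebiusLine_eq (congrArg Prod.fst heq)
    obtain ⟨hcc, hdd⟩ := eq_and_eq_of_moebiusLine_eq (congrArg Prod.snd heq)
    exact Prod.ext (Prod.ext (vadd_left_cancel t haa) hbb) (Prod.ext (vadd_left_cancel t hcc) hdd)
  exact (Finset.card_le_card_of_injOn lines hlines hinj).trans
    (card_meetingPairs_moebiusLines_le (Finset.card_image_le.trans hP) hP)

end Homogeneity

end GuthKatz

lemma sq_card_le_card_image_mul {α β : Type*} [DecidableEq β] (s : Finset α) (f : α → β) :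
    s.card ^ 2 ≤ (s.image f).card * {x ∈ s ×ˢ s | f x.1 = f x.2}.card := by
  have hfiber (y : β) : {x ∈ {x ∈ s ×ˢ s | f x.1 = f x.2} | f x.1 = y} =
      {x ∈ s | f x = y} ×ˢ {x ∈ s | f x = y} := by
    grind
  have hpairs : {x ∈ s ×ˢ s | f x.1 = f x.2}.card =
      ∑ y ∈ s.image f, {x ∈ s | f x = y}.card ^ 2 := by
    rw [Finset.card_eq_sum_card_fiberwise (f := fun x => f x.1) (t := s.image f)
      (fun x hx => by grind)]
    simp only [hfiber, Finset.card_product, sq]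
  rw [hpairs, Finset.card_eq_sum_card_image f s]
  exact sq_sum_le_card_mul_sum_sq

lemma quotDist_eq_zero_of_smul_eq_smul {Γ : Subgroup SL(2, ℝ)} {γ δ : SL(2, ℝ)} (hγ : γ ∈ Γ)
    (hδ : δ ∈ Γ) {p q : ℍ} (h : γ • p = δ • q) : quotDist Γ p q = 0 := by
  have hbdd : BddBelow (Set.range fun g : Γ => dist p ((g : SL(2, ℝ)) • q)) :=
    ⟨0, Set.forall_mem_range.2 fun _ => dist_nonneg⟩
  have hzero : dist p ((γ⁻¹ * δ) • q) = 0 := by rw [mul_smul, ← h, inv_smul_smul, dist_self]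
  exact le_antisymm ((ciInf_le hbdd ⟨γ⁻¹ * δ, Γ.mul_mem (Γ.inv_mem hγ) hδ⟩).trans_eq hzero)
    (Real.iInf_nonneg fun _ => dist_nonneg)

section Counting

open scoped Pointwise

variable {Γ : Subgroup SL(2, ℝ)} {P : Finset ℍ} {Γ₀ : Finset SL(2, ℝ)}

open Classical in
-- With `g` and `g'` realizing the two quotient distances, `((p, q), (p', q'))` is recovered from
-- `((p, p'), (g • q, g' • q'))` because distinct points of `P` are inequivalent under `Γ`.
lemma card_quotDist_eq_le_card_distanceQuadruples (hsub : (Γ₀ : Set SL(2, ℝ)) ⊆ Γ)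
    (hsep : ∀ p ∈ P, ∀ q ∈ P, p ≠ q → quotDist Γ p q ≠ 0)
    (hcover : ∀ p ∈ P, ∀ q ∈ P, ∃ γ ∈ Γ₀, quotDist Γ p q = dist p (γ • q)) :
    {x ∈ P.offDiag ×ˢ P.offDiag | quotDist Γ x.1.1 x.1.2 = quotDist Γ x.2.1 x.2.2}.card ≤
      (GuthKatz.distanceQuadruples (P ∪ Γ₀ • P)).card := by
  choose! g hg hdist using hcover
  have hmem (p : ℍ) (hp : p ∈ P) (q : ℍ) (hq : q ∈ P) : g p q • q ∈ P ∪ Γ₀ • P :=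
    Finset.mem_union_right _ (Finset.smul_mem_smul (hg p hp q hq) hq)
  have hinj (p : ℍ) (hp : p ∈ P) (q : ℍ) (hq : q ∈ P) (r : ℍ) (hr : r ∈ P)
      (h : g p q • q = g p r • r) : q = r := by
    by_contra hqr
    exact hsep q hq r hr hqr
      (quotDist_eq_zero_of_smul_eq_smul (hsub (hg p hp q hq)) (hsub (hg p hp r hr)) h)
  refine Finset.card_le_card_of_injOn
    (fun x => ((x.1.1, x.2.1), (g x.1.1 x.1.2 • x.1.2, g x.2.1 x.2.2 • x.2.2))) ?_ ?_
  · rintro ⟨⟨p, q⟩, p', q'⟩ hx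
    simp only [Finset.coe_filter, Finset.mem_product, Finset.mem_offDiag, Set.mem_ofPred_eq] at hx
    obtain ⟨⟨⟨hp, hq, hpq⟩, hp', hq', -⟩, heq⟩ := hx
    refine GuthKatz.mem_distanceQuadruples.2 ⟨⟨?_, ?_, hmem p hp q hq, hmem p' hp' q' hq'⟩, ?_, ?_⟩
    · exact Finset.mem_union_left _ hp
    · exact Finset.mem_union_left _ hp'
    · exact fun h => hsep p hp q hq hpq (by rw [hdist p hp q hq, ← h, dist_self])
    · rw [← hdist p hp q hq, ← hdist p' hp' q' hq', heq]
  · rintro ⟨⟨p, q⟩, p', q'⟩ hx ⟨⟨r, s⟩, r', s'⟩ hy heq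
    simp only [Finset.coe_filter, Finset.mem_product, Finset.mem_offDiag,
      Set.mem_ofPred_eq] at hx hy
    simp only [Prod.mk.injEq] at heq
    obtain ⟨⟨rfl, rfl⟩, hqs, hqs'⟩ := heq
    rw [hinj p hx.1.1.1 q hx.1.1.2.1 s hy.1.1.2.1 hqs,
      hinj p' hx.1.2.1 q' hx.1.2.2.1 s' hy.1.2.2.1 hqs']

open Classical in
lemma card_union_smul_le (hne : Γ₀.Nonempty) (P : Finset ℍ) :
    (P ∪ Γ₀ • P).card ≤ 2 * (Γ₀.card * P.card) :=
  calc (P ∪ Γ₀ • P).card ≤ P.card + (Γ₀ • P).card := Finset.card_union_le _ _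
    _ ≤ Γ₀.card * P.card + Γ₀.card * P.card :=
      Nat.add_le_add (Nat.le_mul_of_pos_left _ hne.card_pos) Finset.card_smul_le
    _ = 2 * (Γ₀.card * P.card) := (two_mul _).symm

lemma sq_card_offDiag_le (hne : Γ₀.Nonempty) (hsub : (Γ₀ : Set SL(2, ℝ)) ⊆ Γ)
    (hsep : ∀ p ∈ P, ∀ q ∈ P, p ≠ q → quotDist Γ p q ≠ 0)
    (hcover : ∀ p ∈ P, ∀ q ∈ P, ∃ γ ∈ Γ₀, quotDist Γ p q = dist p (γ • q)) :
    P.offDiag.card ^ 2 ≤ (P.offDiag.image fun x => quotDist Γ x.1 x.2).card *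
      (4 * 10 ^ 8 * (2 * (Γ₀.card * P.card)) ^ 3 * Nat.log 2 (2 * (Γ₀.card * P.card))) := by
  classical
  refine (sq_card_le_card_image_mul P.offDiag _).trans (Nat.mul_le_mul_left _ ?_)
  exact (card_quotDist_eq_le_card_distanceQuadruples hsub hsep hcover).trans
    (GuthKatz.card_distanceQuadruples_le (card_union_smul_le hne P))

end Counting

lemma natLog_two_mul_le {m : ℕ} (hm : 2 ≤ m) : (Nat.log 2 (2 * m) : ℝ) ≤ 4 * Real.log m := by
  have hlog_two : 1 / 2 ≤ Real.log 2 := by linarith [Real.log_two_gt_d9]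
  have hpow : (2 : ℝ) ^ Nat.log 2 (2 * m) ≤ 2 * m := by
    exact_mod_cast Nat.pow_log_le_self 2 (by lia)
  have hmul : Nat.log 2 (2 * m) * Real.log 2 ≤ 2 * Real.log m :=
    calc Nat.log 2 (2 * m) * Real.log 2 = Real.log (2 ^ Nat.log 2 (2 * m)) := by rw [Real.log_pow]
      _ ≤ Real.log (2 * m) := Real.log_le_log (by positivity) hpow
      _ = Real.log 2 + Real.log m := Real.log_mul two_ne_zero (by positivity)
      _ ≤ 2 * Real.log m := by
        linarith [Real.log_le_log two_pos (by exact_mod_cast hm : (2 : ℝ) ≤ m)]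
  nlinarith [Nat.cast_nonneg (α := ℝ) (Nat.log 2 (2 * m))]

lemma div_le_of_sq_sub_le {K N D l : ℝ} (hK : 1 ≤ K) (hN : 2 ≤ N) (hl : 0 < l)
    (h : (N * N - N) ^ 2 ≤ D * (4 * 10 ^ 8 * (2 * (K * N)) ^ 3 * (4 * l))) :
    1 / (512 * 10 ^ 8) * N / (K ^ 3 * l) ≤ D := by
  have hhalf : (N ^ 2 / 2) ^ 2 ≤ (N * N - N) ^ 2 :=
    pow_le_pow_left₀ (by positivity) (by nlinarith) 2
  have hcancel : N / 4 ≤ D * (128 * 10 ^ 8 * K ^ 3 * l) := by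
    refine le_of_mul_le_mul_left ?_ (by positivity : 0 < N ^ 3)
    linarith
  rw [div_le_iff₀ (by positivity)]
  linarith

/-- There is an absolute constant `c > 0` with the following property.  If `Γ ≤ SL(2,ℝ)`,
`P` is a finite set of `N ≥ 2` points of `ℍ²` whose pairwise quotient distances are
nonzero, and `Γ₀ ⊆ Γ` is a finite geodesic cover for `P` of cardinality `K`, then the
number of distinct values `d_Γ(p,q)` over distinct `p, q ∈ P` is at least
`c · N / (K³ · log (K·N))`. -/
theorem distinct_distances_of_geodesic_cover :
    ∃ c : ℝ, 0 < c ∧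
      ∀ (Γ : Subgroup SL(2, ℝ)) (P : Finset ℍ) (Γ₀ : Finset SL(2, ℝ))
        (hne : Γ₀.Nonempty),
        (↑Γ₀ : Set SL(2, ℝ)) ⊆ (↑Γ : Set SL(2, ℝ)) →
        2 ≤ P.card →
        (∀ p ∈ P, ∀ q ∈ P, p ≠ q → quotDist Γ p q ≠ 0) →
        (∀ p ∈ P, ∀ q ∈ P, quotDist Γ p q = Γ₀.inf' hne fun γ => dist p (γ • q)) →
        c * (P.card : ℝ) / ((Γ₀.card : ℝ) ^ 3 * Real.log ((Γ₀.card : ℝ) * P.card)) ≤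
          ({t : ℝ | ∃ p ∈ P, ∃ q ∈ P, p ≠ q ∧ quotDist Γ p q = t}.ncard : ℝ) := by
  refine ⟨1 / (512 * 10 ^ 8), by positivity, fun Γ P Γ₀ hne hsub hcard hsep hinf => ?_⟩
  have hcover : ∀ p ∈ P, ∀ q ∈ P, ∃ γ ∈ Γ₀, quotDist Γ p q = dist p (γ • q) := by
    intro p hp q hq
    obtain ⟨γ, hγ, heq⟩ := Γ₀.exists_mem_eq_inf' hne fun γ => dist p (γ • q)
    exact ⟨γ, hγ, (hinf p hp q hq).trans heq⟩
  have hdistances : {t : ℝ | ∃ p ∈ P, ∃ q ∈ P, p ≠ q ∧ quotDist Γ p q = t} =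
      P.offDiag.image fun x => quotDist Γ x.1 x.2 := by
    ext t
    simp [and_assoc]
  have htwo : 2 ≤ Γ₀.card * P.card := hcard.trans (Nat.le_mul_of_pos_left _ hne.card_pos)
  have hcount := (Nat.cast_le (α := ℝ)).2 (sq_card_offDiag_le hne hsub hsep hcover)
  have hlog := natLog_two_mul_le htwo
  rw [Finset.offDiag_card] at hcount
  push_cast [Nat.le_mul_self] at hcount hlog
  rw [hdistances, Set.ncard_coe_finset]
  refine div_le_of_sq_sub_le (by exact_mod_cast hne.card_pos) (by exact_mod_cast hcard)
    (Real.log_pos (by exact_mod_cast htwo)) (hcount.trans ?_)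
  gcongr
  norm_num

end
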